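/- Let f(n) = (1/6)·#{(x,y) ∈ ℤ² : x² + xy + y² = n} for positive integers n and f(0) = 1. Then, as x → ∞, max_{n ≤ x} log f(f(n)) = (√(log x)/log₂ x)·( c/√2 + O(log₃ x / log₂ x) ), where c = (8·∑_{l=1}^∞ (log(1 + 1/l))²)^{1/2}. -/

import Mathlib

open Filter

/-- The normalized representation-counting function of the binary quadratic form `x² + xy + y²`,
with the convention `f(0) = 1`. -/
noncomputable def fForm (n : ℕ) : ℕ :=
  if n = 0 then 1 else Nat.card {p : ℤ × ℤ // p.1 ^ 2 + p.1 * p.2 + p.2 ^ 2 = (n : ℤ)} / 6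

/-- The constant `c = (8·∑_{l=1}^∞ (log(1 + 1/l))²)^{1/2}`. -/
noncomputable def cBEFS : ℝ :=
  Real.sqrt (8 * ∑' l : ℕ, (Real.log (1 + 1 / ((l : ℝ) + 1))) ^ 2)

/-! For `n ≠ 0` the number `f(n)` is either `0` or the product `D(n)` of the `v_p(n) + 1` over the
primes `p ≡ 1 (mod 3)`, and it is `D(n)` when all prime factors of `n` are `≡ 1 (mod 3)`. Making a
prime `q` divide `D(n)` once more costs raising a prime factor of `n` to the power `q - 1`, that is
about `½ q log₂ x` in `log n` for the cheapest useful primes, and the step from multiplicity `l` to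
`l + 1` gains `log (1 + 1 / (l + 1))` in `log D(D(n))`. So the maximum is the value of a knapsack
problem with budget about `2 log x / log₂ x` and items `(q, l)` of cost `q`. Its Lagrangian dual at
price `r` is `∑_q ∑_l (log (1 + 1 / (l + 1)) - r q)⁺`, and since `∑_{q ≤ y} (y - q)` over the primes
`q ≡ 1 (mod 3)` is `(y² / 4 + O(y² / log y)) / log y`, the dual is about
`σ / (4 r log (1 / r))` with `σ = ∑ log (1 + 1 / l) ^ 2`. Weak duality gives the upper bound, the
greedy choice of items the lower bound, and by AM-GM the optimal price yields
`2 √σ √(log x) / log₂ x`.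

The prime number theorem with error term enters only for the Cesàro means above. This allows a
proof by an absolutely convergent Perron integral on `Re s = 1 + 1 / log x`: one integration by
parts gains the factor `1 / log x`, and the integrand is controlled by bounds `O(|s| ^ θ)` for the
logarithmic derivatives of the `L`-functions and their derivatives to the right of `Re s = 1`, which
follow from the Euler-Maclaurin formula and the `3-4-1` inequality.
-/

open Asymptotics Topology

/-! ### Dirichlet `L`-functions near the line `Re s = 1` -/

section GrowthOfHurwitzZeta

lemma le_rpow_mul_rpow_of_le_of_le {D A B θ : ℝ} (hD : 0 ≤ D) (hA : D ≤ A) (hB : D ≤ B)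
    (hθ : 0 ≤ θ) (hθ1 : θ ≤ 1) : D ≤ A ^ (1 - θ) * B ^ θ :=
  calc D = D ^ (1 - θ) * D ^ θ := by
        rw [← Real.rpow_add_of_nonneg hD (by linarith) hθ, sub_add_cancel, Real.rpow_one]
    _ ≤ A ^ (1 - θ) * B ^ θ := mul_le_mul (Real.rpow_le_rpow hD hA (by linarith))
        (Real.rpow_le_rpow hD hB hθ) (by positivity) (Real.rpow_nonneg (hD.trans hA) _)

lemma norm_ofReal_cpow_sub_le {a b : ℝ} (ha : 0 < a) (hab : a ≤ b) (hb : b ≤ a + 1) {s : ℂ}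
    (hs : s ≠ 0) (hre : s.re ≤ 1) :
    ‖(a : ℂ) ^ s - (b : ℂ) ^ s‖ ≤ ‖s‖ * a ^ (s.re - 1) := by
  have hderiv (x : ℝ) (hx : x ∈ Set.Icc a b) :
      HasDerivWithinAt (fun y : ℝ ↦ (y : ℂ) ^ s) (s * (x : ℂ) ^ (s - 1)) (Set.Icc a b) x :=
    (hasDerivAt_ofReal_cpow_const (ha.trans_le hx.1).ne' hs).hasDerivWithinAt
  have hbound (x : ℝ) (hx : x ∈ Set.Icc a b) :
      ‖s * (x : ℂ) ^ (s - 1)‖ ≤ ‖s‖ * a ^ (s.re - 1) := by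
    rw [norm_mul, Complex.norm_cpow_eq_rpow_re_of_pos (ha.trans_le hx.1), Complex.sub_re,
      Complex.one_re]
    exact mul_le_mul_of_nonneg_left (Real.rpow_le_rpow_of_nonpos ha hx.1 (by linarith))
      (norm_nonneg _)
  refine ((convex_Icc a b).norm_image_sub_le_of_norm_hasDerivWithin_le hderiv hbound
    (Set.right_mem_Icc.2 hab) (Set.left_mem_Icc.2 hab)).trans ?_
  have hlen : ‖a - b‖ ≤ 1 := by rw [Real.norm_eq_abs, abs_le]; constructor <;> linarith
  exact mul_le_of_le_one_right (by positivity) hlen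

lemma norm_cpow_neg_sub_cpow_neg_le {a b : ℝ} (ha : 0 < a) (hab : a ≤ b) (hb : b ≤ a + 1)
    {s : ℂ} (hs : 0 < s.re) {θ : ℝ} (hθ : 0 ≤ θ) (hθ1 : θ ≤ 1) :
    ‖(a : ℂ) ^ (-s) - (b : ℂ) ^ (-s)‖ ≤ 2 * (1 + ‖s‖) ^ θ * a ^ (-(s.re + θ)) := by
  have hs0 : -s ≠ 0 := fun h ↦ hs.ne' (by simp [neg_eq_zero.1 h])
  have htrivial : ‖(a : ℂ) ^ (-s) - (b : ℂ) ^ (-s)‖ ≤ 2 * a ^ (-s.re) := by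
    refine (norm_sub_le _ _).trans ?_
    rw [Complex.norm_cpow_eq_rpow_re_of_pos ha,
      Complex.norm_cpow_eq_rpow_re_of_pos (ha.trans_le hab), Complex.neg_re]
    linarith [Real.rpow_le_rpow_of_nonpos ha hab (neg_nonpos.2 hs.le)]
  have hmean : ‖(a : ℂ) ^ (-s) - (b : ℂ) ^ (-s)‖ ≤ (1 + ‖s‖) * a ^ (-s.re - 1) := by
    refine (norm_ofReal_cpow_sub_le ha hab hb hs0 (by simp; linarith)).trans ?_
    rw [norm_neg, Complex.neg_re]
    gcongr
    linarith
  calc _ ≤ (2 * a ^ (-s.re)) ^ (1 - θ) * ((1 + ‖s‖) * a ^ (-s.re - 1)) ^ θ :=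
        le_rpow_mul_rpow_of_le_of_le (norm_nonneg _) htrivial hmean hθ hθ1
    _ = 2 ^ (1 - θ) * ((1 + ‖s‖) ^ θ * (a ^ (-s.re * (1 - θ)) * a ^ ((-s.re - 1) * θ))) := by
        rw [Real.mul_rpow (by norm_num) (by positivity), Real.mul_rpow (by positivity)
          (by positivity), ← Real.rpow_mul ha.le, ← Real.rpow_mul ha.le]
        ring
    _ = 2 ^ (1 - θ) * ((1 + ‖s‖) ^ θ * a ^ (-(s.re + θ))) := by
        rw [← Real.rpow_add ha]
        ring_nf
    _ ≤ 2 ^ (1 : ℝ) * ((1 + ‖s‖) ^ θ * a ^ (-(s.re + θ))) := by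
        gcongr <;> linarith
    _ = _ := by rw [Real.rpow_one, mul_assoc]

lemma isOpen_setOf_lt_re (σ : ℝ) : IsOpen {s : ℂ | σ < s.re} :=
  isOpen_lt continuous_const Complex.continuous_re

lemma eqOn_tsum_of_norm_le_mul {F : ℕ → ℂ → ℂ} {G : ℂ → ℂ} {B : ℂ → ℝ} {u : ℕ → ℝ} {σ₀ σ₁ : ℝ}
    (hG : DifferentiableOn ℂ G {s | σ₀ < s.re}) (hF : ∀ n, Differentiable ℂ (F n))
    (hB : Continuous B) (hu : Summable u) (hu0 : ∀ n, 0 ≤ u n)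
    (hFB : ∀ n s, σ₀ < s.re → ‖F n s‖ ≤ B s * u n)
    (hsum : ∀ s : ℂ, σ₁ < s.re → ∑' n, F n s = G s) :
    Set.EqOn (fun s ↦ ∑' n, F n s) G {s | σ₀ < s.re} := by
  have hU := isOpen_setOf_lt_re σ₀
  have hdiff : DifferentiableOn ℂ (fun s ↦ ∑' n, F n s) {s | σ₀ < s.re} := by
    intro z hz
    have hV : IsOpen ({s : ℂ | σ₀ < s.re} ∩ {s | B s < B z + 1}) :=
      hU.inter (isOpen_lt hB continuous_const)
    have hzV : z ∈ {s : ℂ | σ₀ < s.re} ∩ {s | B s < B z + 1} := ⟨hz, by simp⟩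
    have hdiffV := Complex.differentiableOn_tsum_of_summable_norm (hu.mul_left (B z + 1))
      (fun n ↦ (hF n).differentiableOn) hV
      (fun n w hw ↦ (hFB n w hw.1).trans (mul_le_mul_of_nonneg_right hw.2.le (hu0 n)))
    exact ((hdiffV z hzV).differentiableAt (hV.mem_nhds hzV)).differentiableWithinAt
  obtain ⟨x, hx⟩ := exists_gt (max σ₀ σ₁)
  refine (hdiff.analyticOnNhd hU).eqOn_of_preconnected_of_eventuallyEq (z₀ := (x : ℂ))
    (hG.analyticOnNhd hU) (convex_halfSpace_re_gt σ₀).isPreconnected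
    ((le_max_left _ _).trans_lt hx) ?_
  filter_upwards [(isOpen_setOf_lt_re σ₁).mem_nhds
    (show σ₁ < (x : ℂ).re from (le_max_right _ _).trans_lt hx)] with w hw using hsum w hw

lemma summable_nat_add_one_rpow {p : ℝ} (hp : 1 < p) :
    Summable fun n : ℕ ↦ ((n : ℝ) + 1) ^ (-p) := by
  simpa using (summable_nat_add_iff 1).2 (Real.summable_nat_rpow.2 (neg_lt_neg hp))

/-- The `n`-th term of the first order Euler-Maclaurin expansion of `(s - 1) ∑ (n + b)⁻ˢ`: up to
the factor `s - 1` it is the difference between `(n + b)⁻ˢ` and the integral of `x⁻ˢ` over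
`[n + b, n + 1 + b]`. Multiplying by `s - 1` makes it entire. -/
noncomputable def hurwitzTerm (b : ℝ) (n : ℕ) (s : ℂ) : ℂ :=
  (s - 1) * ((n + b : ℝ) : ℂ) ^ (-s) -
    (((n + b : ℝ) : ℂ) ^ (1 - s) - ((n + 1 + b : ℝ) : ℂ) ^ (1 - s))

variable {b : ℝ} {n : ℕ} {s : ℂ} {θ : ℝ}

lemma differentiable_hurwitzTerm (hb : 0 < b) : Differentiable ℂ (hurwitzTerm b n) := by
  have h0 : ((n + b : ℝ) : ℂ) ≠ 0 := Complex.ofReal_ne_zero.2 (by positivity)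
  have h1 : ((n + 1 + b : ℝ) : ℂ) ≠ 0 := Complex.ofReal_ne_zero.2 (by positivity)
  unfold hurwitzTerm
  fun_prop (disch := first | exact Or.inl h0 | exact Or.inl h1)

lemma hurwitzTerm_eq_integral (hb : 0 < b) (hs : s ≠ 1) :
    hurwitzTerm b n s = (s - 1) *
      ∫ x in (n + b : ℝ)..(n + 1 + b : ℝ), (((n + b : ℝ) : ℂ) ^ (-s) - (x : ℂ) ^ (-s)) := by
  have h0 : (0 : ℝ) ∉ Set.uIcc (n + b) (n + 1 + b) := by
    rw [Set.uIcc_of_le (by linarith)]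
    exact fun h ↦ (show (0 : ℝ) < n + b by positivity).not_ge h.1
  have hs1 : -s + 1 ≠ 0 := fun h ↦ hs (by linear_combination -h)
  rw [intervalIntegral.integral_sub intervalIntegrable_const
    (intervalIntegral.intervalIntegrable_cpow (Or.inr h0)),
    integral_cpow (Or.inr ⟨fun h ↦ hs (by linear_combination -h), h0⟩),
    intervalIntegral.integral_const, show ((n : ℝ) + 1 + b - (n + b)) = 1 by ring, one_smul,
    hurwitzTerm, show 1 - s = -s + 1 by ring]
  field_simp
  ring

lemma norm_hurwitzTerm_le (hb : 0 < b) (hs : 0 < s.re) (hθ : 0 ≤ θ) (hθ1 : θ ≤ 1) :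
    ‖hurwitzTerm b n s‖ ≤ 2 * ‖s - 1‖ * (1 + ‖s‖) ^ θ * (n + b) ^ (-(s.re + θ)) := by
  rcases eq_or_ne s 1 with rfl | hs1
  · simp [hurwitzTerm]
  have h_integral : ‖∫ x in (n + b : ℝ)..(n + 1 + b : ℝ),
      (((n + b : ℝ) : ℂ) ^ (-s) - (x : ℂ) ^ (-s))‖ ≤
        2 * (1 + ‖s‖) ^ θ * (n + b) ^ (-(s.re + θ)) := by
    refine (intervalIntegral.norm_integral_le_of_norm_le_const (C := 2 * (1 + ‖s‖) ^ θ *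
      (n + b) ^ (-(s.re + θ))) fun x hx ↦ ?_).trans_eq ?_
    · rw [Set.uIoc_of_le (by linarith)] at hx
      exact norm_cpow_neg_sub_cpow_neg_le (by positivity) hx.1.le (by linarith [hx.2]) hs hθ hθ1
    · rw [show ((n : ℝ) + 1 + b - (n + b)) = 1 by ring, abs_one, mul_one]
  rw [hurwitzTerm_eq_integral hb hs1, norm_mul]
  calc _ ≤ ‖s - 1‖ * (2 * (1 + ‖s‖) ^ θ * (n + b) ^ (-(s.re + θ))) := by gcongr
    _ = _ := by ring

lemma norm_hurwitzTerm_le_of_one_le (hb : 1 ≤ b) (hθ : 0 ≤ θ) (hθ1 : θ ≤ 1)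
    (hs : 1 - θ / 2 < s.re) :
    ‖hurwitzTerm b n s‖ ≤ 2 * ‖s - 1‖ * (1 + ‖s‖) ^ θ * ((n : ℝ) + 1) ^ (-(1 + θ / 2)) := by
  refine (norm_hurwitzTerm_le (by linarith) (by linarith) hθ hθ1).trans ?_
  gcongr 2 * ‖s - 1‖ * (1 + ‖s‖) ^ θ * ?_
  calc ((n : ℝ) + b) ^ (-(s.re + θ)) ≤ (n + 1) ^ (-(s.re + θ)) :=
        Real.rpow_le_rpow_of_nonpos (by positivity) (by linarith) (by linarith)
    _ ≤ _ := Real.rpow_le_rpow_of_exponent_le (by linarith [n.cast_nonneg (α := ℝ)]) (by linarith)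

lemma hasSum_hurwitzTerm (hb : 1 ≤ b) (hs : 1 < s.re) {Z : ℂ}
    (hZ : HasSum (fun n : ℕ ↦ ((n + b : ℝ) : ℂ) ^ (-s)) Z) :
    HasSum (fun n ↦ hurwitzTerm b n s) ((s - 1) * Z - (b : ℂ) ^ (1 - s)) := by
  have hsummable : Summable fun n ↦ hurwitzTerm b n s :=
    ((summable_nat_add_one_rpow (p := 1 + 1 / 2) (by norm_num)).mul_left _).of_norm_bounded
      fun n ↦ norm_hurwitzTerm_le_of_one_le hb zero_le_one le_rfl (by linarith)
  have htelescope (N : ℕ) : ∑ n ∈ Finset.range N, hurwitzTerm b n s =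
      (s - 1) * ∑ n ∈ Finset.range N, ((n + b : ℝ) : ℂ) ^ (-s) -
        ((b : ℂ) ^ (1 - s) - ((N + b : ℝ) : ℂ) ^ (1 - s)) := by
    simp only [hurwitzTerm, Finset.sum_sub_distrib, ← Finset.mul_sum]
    rw [← Finset.sum_sub_distrib]
    simpa using Finset.sum_range_sub' (fun n : ℕ ↦ ((n + b : ℝ) : ℂ) ^ (1 - s)) N
  have hvanish : Tendsto (fun N : ℕ ↦ ((N + b : ℝ) : ℂ) ^ (1 - s)) atTop (𝓝 0) := by
    rw [tendsto_zero_iff_norm_tendsto_zero]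
    have hnorm (N : ℕ) : ‖((N + b : ℝ) : ℂ) ^ (1 - s)‖ = (N + b : ℝ) ^ (-(s.re - 1)) := by
      rw [Complex.norm_cpow_eq_rpow_re_of_pos (by positivity)]
      simp
    simp_rw [hnorm]
    exact (tendsto_rpow_neg_atTop (by linarith)).comp
      (tendsto_atTop_add_const_right _ _ tendsto_natCast_atTop_atTop)
  rw [hsummable.hasSum_iff_tendsto_nat]
  simp_rw [htelescope]
  simpa using (hZ.tendsto_sum_nat.const_mul (s - 1)).sub (hvanish.const_sub ((b : ℂ) ^ (1 - s)))

lemma hasSum_hurwitzTerm_hurwitzZeta {a : ℝ} (ha : 0 < a) (ha1 : a ≤ 1) (hs : 1 < s.re) :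
    HasSum (fun n ↦ hurwitzTerm (a + 1) n s)
      ((s - 1) * (HurwitzZeta.hurwitzZeta a s - (a : ℂ) ^ (-s)) - (a + 1 : ℂ) ^ (1 - s)) := by
  have hzeta := (hasSum_nat_add_iff' 1).2
    (HurwitzZeta.hasSum_hurwitzZeta_of_one_lt_re ⟨ha.le, ha1⟩ hs)
  have hZ : HasSum (fun n : ℕ ↦ ((n + (a + 1) : ℝ) : ℂ) ^ (-s))
      (HurwitzZeta.hurwitzZeta a s - (a : ℂ) ^ (-s)) := by
    convert! hzeta using 1
    · ext n
      push_cast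
      rw [Complex.cpow_neg, one_div, add_right_comm, add_assoc]
    · simp [Complex.cpow_neg]
  simpa using hasSum_hurwitzTerm (by linarith) hs hZ

lemma differentiable_update_mul_hurwitzZeta (a : UnitAddCircle) :
    Differentiable ℂ (Function.update (fun s ↦ (s - 1) * HurwitzZeta.hurwitzZeta a s) 1 1) := by
  rw [← differentiableOn_univ,
    ← Complex.differentiableOn_compl_singleton_and_continuousAt_iff (c := 1) Filter.univ_mem]
  refine ⟨DifferentiableOn.congr (f := fun s ↦ (s - 1) * HurwitzZeta.hurwitzZeta a s)
    (fun s hs ↦ ?_) fun _ hs ↦ Function.update_of_ne (Set.mem_sdiff_singleton.mp hs).2 ..,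
    continuousWithinAt_compl_self.mp ?_⟩
  · exact ((differentiableAt_id.sub_const 1).mul (HurwitzZeta.differentiableAt_hurwitzZeta a
      (Set.mem_sdiff_singleton.mp hs).2)).differentiableWithinAt
  · simpa using HurwitzZeta.hurwitzZeta_residue_one a

lemma tsum_hurwitzTerm_hurwitzZeta {a : ℝ} (ha : 0 < a) (ha1 : a ≤ 1) (hθ : 0 < θ) (hθ1 : θ ≤ 1)
    (hs : 1 - θ / 2 < s.re) (hs1 : s ≠ 1) :
    ∑' n, hurwitzTerm (a + 1) n s =
      (s - 1) * (HurwitzZeta.hurwitzZeta a s - (a : ℂ) ^ (-s)) - (a + 1 : ℂ) ^ (1 - s) := by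
  have ha0 : (a : ℂ) ≠ 0 := Complex.ofReal_ne_zero.2 ha.ne'
  have ha10 : (a + 1 : ℂ) ≠ 0 := by exact_mod_cast (by positivity : a + 1 ≠ 0)
  set R := Function.update (fun s ↦ (s - 1) * HurwitzZeta.hurwitzZeta a s) 1 1
  have hRdiff : Differentiable ℂ R := differentiable_update_mul_hurwitzZeta a
  have hR {z : ℂ} (hz : z ≠ 1) : R z = (z - 1) * HurwitzZeta.hurwitzZeta a z :=
    Function.update_of_ne hz ..
  have hsum (z : ℂ) (hz : 1 < z.re) : ∑' n, hurwitzTerm (a + 1) n z =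
      R z - (z - 1) * (a : ℂ) ^ (-z) - (a + 1 : ℂ) ^ (1 - z) := by
    rw [(hasSum_hurwitzTerm_hurwitzZeta ha ha1 hz).tsum_eq, hR (by rintro rfl; simp at hz)]
    ring
  have heq := eqOn_tsum_of_norm_le_mul (F := fun n ↦ hurwitzTerm (a + 1) n)
    (G := fun s ↦ R s - (s - 1) * (a : ℂ) ^ (-s) - (a + 1 : ℂ) ^ (1 - s))
    (B := fun s ↦ 2 * ‖s - 1‖ * (1 + ‖s‖) ^ θ) (σ₀ := 1 - θ / 2) (σ₁ := 1)
    (by fun_prop (disch := first | exact Or.inl ha0 | exact Or.inl ha10))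
    (fun n ↦ differentiable_hurwitzTerm (by linarith))
    (by fun_prop (disch := exact hθ.le))
    (summable_nat_add_one_rpow (p := 1 + θ / 2) (by linarith)) (fun n ↦ by positivity)
    (fun n s hs ↦ norm_hurwitzTerm_le_of_one_le (by linarith) hθ.le hθ1 hs) hsum hs
  simp only at heq
  rw [heq, hR hs1]
  ring

lemma norm_hurwitzZeta_sub_le {a : ℝ} (ha : 0 < a) (ha1 : a ≤ 1) (hθ : 0 < θ) (hθ1 : θ ≤ 1)
    (hs : 1 - θ / 2 < s.re) (hs1 : s ≠ 1) :
    ‖HurwitzZeta.hurwitzZeta a s - (a : ℂ) ^ (-s) - (a + 1 : ℂ) ^ (1 - s) / (s - 1)‖ ≤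
      2 * (1 + ‖s‖) ^ θ * ∑' n : ℕ, ((n : ℝ) + 1) ^ (-(1 + θ / 2)) := by
  have hs0 : s - 1 ≠ 0 := sub_ne_zero.2 hs1
  have hbound := tsum_of_norm_bounded
    ((summable_nat_add_one_rpow (p := 1 + θ / 2) (by linarith)).mul_left _).hasSum
    fun n ↦ norm_hurwitzTerm_le_of_one_le (n := n) (b := a + 1) (by linarith) hθ.le hθ1 hs
  rw [tsum_hurwitzTerm_hurwitzZeta ha ha1 hθ hθ1 hs hs1, tsum_mul_left] at hbound
  refine le_of_mul_le_mul_left ?_ (norm_pos_iff.2 hs0)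
  rw [← norm_mul, mul_sub, mul_div_cancel₀ _ hs0]
  linarith

end GrowthOfHurwitzZeta

section GrowthOfLFunctions

variable {N : ℕ} [NeZero N] {θ : ℝ}

lemma norm_natCast_cpow_neg_le_one {s : ℂ} (hs : 0 ≤ s.re) : ‖(N : ℂ) ^ (-s)‖ ≤ 1 := by
  rw [Complex.norm_natCast_cpow_of_pos (NeZero.pos N), Complex.neg_re]
  exact Real.rpow_le_one_of_one_le_of_nonpos (by exact_mod_cast NeZero.one_le) (by linarith)

lemma isBigO_cpow_mul_hurwitzZeta {a : ℝ} (ha : 0 < a) (ha1 : a ≤ 1) (hNa : 1 ≤ N * a)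
    (hθ : 0 < θ) (hθ1 : θ ≤ 1) :
    (fun s ↦ (N : ℂ) ^ (-s) * HurwitzZeta.hurwitzZeta a s)
      =O[𝓟 {s | 1 - θ / 2 < s.re ∧ s ≠ 1}] fun s ↦ (1 + ‖s‖) ^ θ + ‖s - 1‖⁻¹ := by
  set K := ∑' n : ℕ, ((n : ℝ) + 1) ^ (-(1 + θ / 2))
  have hK : 0 ≤ K := tsum_nonneg fun n ↦ by positivity
  refine isBigO_principal.2 ⟨3 + 2 * K, fun s ⟨hs, hs1⟩ ↦ ?_⟩
  have hN : ‖(N : ℂ) ^ (-s)‖ ≤ 1 := norm_natCast_cpow_neg_le_one (by linarith)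
  have hfirst : ‖(N : ℂ) ^ (-s) * (a : ℂ) ^ (-s)‖ ≤ 1 := by
    have := Complex.mul_cpow_ofReal_nonneg (N.cast_nonneg (α := ℝ)) ha.le (-s)
    rw [Complex.ofReal_natCast] at this
    rw [← this, ← Complex.ofReal_natCast, ← Complex.ofReal_mul,
      Complex.norm_cpow_eq_rpow_re_of_pos (by linarith), Complex.neg_re]
    exact Real.rpow_le_one_of_one_le_of_nonpos hNa (by linarith)
  have hpole : ‖(a + 1 : ℂ) ^ (1 - s)‖ ≤ 2 := by
    rw [← Complex.ofReal_one, ← Complex.ofReal_add, Complex.norm_cpow_eq_rpow_re_of_pos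
      (by linarith)]
    calc (a + 1) ^ ((1 : ℝ) - s : ℂ).re ≤ (a + 1) ^ (1 : ℝ) :=
          Real.rpow_le_rpow_of_exponent_le (by linarith) (by simp; linarith)
      _ ≤ 2 := by rw [Real.rpow_one]; linarith
  have hone : 1 ≤ (1 + ‖s‖) ^ θ := Real.one_le_rpow (by linarith [norm_nonneg s]) hθ.le
  have hinv : 0 ≤ ‖s - 1‖⁻¹ := by positivity
  rw [Real.norm_of_nonneg (by positivity)]
  calc ‖(N : ℂ) ^ (-s) * HurwitzZeta.hurwitzZeta a s‖
      = ‖(N : ℂ) ^ (-s) * (HurwitzZeta.hurwitzZeta a s - (a : ℂ) ^ (-s)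
          - (a + 1 : ℂ) ^ (1 - s) / (s - 1)) + (N : ℂ) ^ (-s) * (a : ℂ) ^ (-s)
          + (N : ℂ) ^ (-s) * ((a + 1 : ℂ) ^ (1 - s) / (s - 1))‖ := by ring_nf
    _ ≤ 1 * (2 * (1 + ‖s‖) ^ θ * K) + 1 + 1 * (2 * ‖s - 1‖⁻¹) := by
        refine norm_add_le_of_le (norm_add_le_of_le ?_ hfirst) ?_
        · grw [norm_mul, hN, norm_hurwitzZeta_sub_le ha ha1 hθ hθ1 hs hs1]
        · grw [norm_mul, norm_div, hN, hpole, div_eq_mul_inv]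
    _ ≤ (3 + 2 * K) * ((1 + ‖s‖) ^ θ + ‖s - 1‖⁻¹) := by nlinarith [mul_nonneg hK hinv]

lemma isBigO_cpow_mul_hurwitzZeta_toAddCircle (j : ZMod N) (hθ : 0 < θ) (hθ1 : θ ≤ 1) :
    (fun s ↦ (N : ℂ) ^ (-s) * HurwitzZeta.hurwitzZeta (ZMod.toAddCircle j) s)
      =O[𝓟 {s | 1 - θ / 2 < s.re ∧ s ≠ 1}] fun s ↦ (1 + ‖s‖) ^ θ + ‖s - 1‖⁻¹ := by
  have hN : (1 : ℝ) ≤ N := by exact_mod_cast NeZero.one_le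
  rcases eq_or_ne j 0 with rfl | hj
  · rw [map_zero, ← AddCircle.coe_period (1 : ℝ)]
    exact isBigO_cpow_mul_hurwitzZeta one_pos le_rfl (by simpa using hN) hθ hθ1
  · have hval : (1 : ℝ) ≤ j.val := by
      exact_mod_cast Nat.one_le_iff_ne_zero.2 ((ZMod.val_ne_zero j).2 hj)
    rw [ZMod.toAddCircle_apply]
    refine isBigO_cpow_mul_hurwitzZeta (by positivity) ?_ ?_ hθ hθ1
    · rw [div_le_one (by positivity)]
      exact_mod_cast j.val_lt.le
    · rwa [mul_div_cancel₀ _ (by positivity)]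

lemma isBigO_LFunction (Φ : ZMod N → ℂ) (hθ : 0 < θ) (hθ1 : θ ≤ 1) :
    ZMod.LFunction Φ
      =O[𝓟 {s | 1 - θ / 2 < s.re ∧ s ≠ 1}] fun s ↦ (1 + ‖s‖) ^ θ + ‖s - 1‖⁻¹ := by
  have hL : ZMod.LFunction Φ = fun s ↦ ∑ j : ZMod N,
      Φ j * ((N : ℂ) ^ (-s) * HurwitzZeta.hurwitzZeta (ZMod.toAddCircle j) s) := by
    ext s
    simp only [ZMod.LFunction, Finset.mul_sum]
    exact Finset.sum_congr rfl fun _ _ ↦ mul_left_comm ..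
  rw [hL]
  exact IsBigO.fun_sum fun j _ ↦
    (isBigO_cpow_mul_hurwitzZeta_toAddCircle j hθ hθ1).const_mul_left (Φ j)

lemma isBigO_LFunction_of_le_norm_sub_one (Φ : ZMod N → ℂ) (hθ : 0 < θ) (hθ1 : θ ≤ 1) :
    ZMod.LFunction Φ
      =O[𝓟 {s | 1 - θ / 2 < s.re ∧ 1 / 2 ≤ ‖s - 1‖}] fun s ↦ (1 + ‖s‖) ^ θ := by
  have hsubset : {s : ℂ | 1 - θ / 2 < s.re ∧ 1 / 2 ≤ ‖s - 1‖} ⊆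
      {s | 1 - θ / 2 < s.re ∧ s ≠ 1} := fun s ⟨hs, hs1⟩ ↦
    ⟨hs, fun h ↦ by norm_num [h] at hs1⟩
  refine ((isBigO_LFunction Φ hθ hθ1).mono (principal_mono.2 hsubset)).trans
    (isBigO_principal.2 ⟨3, fun s ⟨_, hs1⟩ ↦ ?_⟩)
  have hone : 1 ≤ (1 + ‖s‖) ^ θ := Real.one_le_rpow (by linarith [norm_nonneg s]) hθ.le
  have hinv : ‖s - 1‖⁻¹ ≤ 2 := inv_le_of_inv_le₀ (by norm_num) (by linarith)
  rw [Real.norm_of_nonneg (by positivity), Real.norm_of_nonneg (by positivity)]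
  linarith

lemma isBigO_deriv_of_closedBall_subset {F : ℂ → ℂ} {U V : Set ℂ} {r k : ℝ} (hr : 0 < r)
    (hr1 : r ≤ 1) (hk : 0 ≤ k) (hUV : ∀ s ∈ V, Metric.closedBall s r ⊆ U)
    (hF : DifferentiableOn ℂ F U) (hFU : F =O[𝓟 U] fun s ↦ (1 + ‖s‖) ^ k) :
    deriv F =O[𝓟 V] fun s ↦ (1 + ‖s‖) ^ k := by
  obtain ⟨C, hC, hFC⟩ := hFU.exists_pos
  rw [IsBigOWith_def, eventually_principal] at hFC
  refine isBigO_principal.2 ⟨C * 2 ^ k / r, fun s hs ↦ ?_⟩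
  have hsphere (z : ℂ) (hz : z ∈ Metric.sphere s r) : ‖F z‖ ≤ C * 2 ^ k * (1 + ‖s‖) ^ k := by
    have hzs : ‖z‖ ≤ ‖s‖ + 1 :=
      (norm_le_norm_add_norm_sub' z s).trans (by rw [mem_sphere_iff_norm.1 hz]; linarith)
    calc ‖F z‖ ≤ C * ‖(1 + ‖z‖) ^ k‖ := hFC z (hUV s hs (Metric.sphere_subset_closedBall hz))
      _ = C * (1 + ‖z‖) ^ k := by rw [Real.norm_of_nonneg (by positivity)]
      _ ≤ C * (2 * (1 + ‖s‖)) ^ k := by gcongr; linarith [norm_nonneg s]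
      _ = C * 2 ^ k * (1 + ‖s‖) ^ k := by rw [Real.mul_rpow (by norm_num) (by positivity)]; ring
  rw [Real.norm_of_nonneg (by positivity)]
  exact (Complex.norm_deriv_le_of_forall_mem_sphere_norm_le hr
    (hF.diffContOnCl_ball (hUV s hs)) hsphere).trans_eq (by ring)

lemma sub_le_re_of_mem_closedBall {s z : ℂ} {r : ℝ} (hz : z ∈ Metric.closedBall s r) :
    s.re - r ≤ z.re := by
  have h := (Complex.abs_re_le_norm (z - s)).trans (mem_closedBall_iff_norm.1 hz)
  rw [Complex.sub_re] at h
  linarith [(abs_le.1 h).1]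

lemma isBigO_deriv_LFunction (χ : DirichletCharacter ℂ N) (hθ : 0 < θ) (hθ1 : θ ≤ 1) :
    deriv χ.LFunction =O[𝓟 {s | 1 ≤ s.re ∧ 1 ≤ ‖s - 1‖}] fun s ↦ (1 + ‖s‖) ^ θ := by
  refine isBigO_deriv_of_closedBall_subset (r := θ / 4)
    (U := {s | 1 - θ / 2 < s.re ∧ 1 / 2 ≤ ‖s - 1‖}) (by positivity) (by linarith) hθ.le
    (fun s ⟨hs, hs1⟩ z hz ↦ ⟨?_, ?_⟩) (fun z ⟨_, hz⟩ ↦ ?_)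
    (isBigO_LFunction_of_le_norm_sub_one χ hθ hθ1)
  · linarith [sub_le_re_of_mem_closedBall hz]
  · have htriangle := norm_sub_le_norm_sub_add_norm_sub s z 1
    rw [norm_sub_rev s z] at htriangle
    linarith [mem_closedBall_iff_norm.1 hz]
  · refine (χ.differentiableAt_LFunction z (Or.inl ?_)).differentiableWithinAt
    rintro rfl
    norm_num at hz

end GrowthOfLFunctions

section LowerBoundForLFunctions

/- At `x = η` the first hypothesis gives `‖g η‖ ≥ c d³ w⁴`, and by the second one `g` loses at most
half of this on the way from `η` down to `x`; this dictates the choice `η = d⁴ w⁵`. -/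
lemma mul_pow_four_le_norm_of_norm_sub_le {g : ℝ → ℂ} {c C w x : ℝ} (hc : 0 < c) (hC : 0 < C)
    (hw : 0 < w) (hw1 : w ≤ 1) (hlower : ∀ x, 0 < x → x ≤ 1 → c ^ 4 * x ^ 3 * w ≤ ‖g x‖ ^ 4)
    (hlipschitz : ∀ x y, 0 < x → x ≤ y → y ≤ 1 → ‖g y - g x‖ ≤ C * (y - x) / w)
    (hx : 0 < x) (hx1 : x ≤ 1) :
    c * (min 1 (c / (2 * C))) ^ 3 / 2 * w ^ 4 ≤ ‖g x‖ := by
  set d := min 1 (c / (2 * C))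
  have hd : 0 < d := lt_min one_pos (by positivity)
  have hCd : C * d ≤ c / 2 := by
    have hdc : d ≤ c / (2 * C) := min_le_right _ _
    rw [le_div_iff₀ (by positivity)] at hdc
    linarith
  set η := d ^ 4 * w ^ 5 with hη
  have hη0 : 0 < η := by positivity
  have hη1 : η ≤ 1 := mul_le_one₀ (pow_le_one₀ hd.le (min_le_left _ _)) (by positivity)
    (pow_le_one₀ hw.le hw1)
  have hbig (y : ℝ) (hy : η ≤ y) (hy1 : y ≤ 1) : c * d ^ 3 * w ^ 4 ≤ ‖g y‖ := by
    refine le_of_pow_le_pow_left₀ (n := 4) (by norm_num) (norm_nonneg _) ?_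
    calc (c * d ^ 3 * w ^ 4) ^ 4 = c ^ 4 * η ^ 3 * w := by rw [hη]; ring
      _ ≤ c ^ 4 * y ^ 3 * w := by gcongr
      _ ≤ ‖g y‖ ^ 4 := hlower y (hη0.trans_le hy) hy1
  have hpos : 0 < c * d ^ 3 * w ^ 4 := by positivity
  rcases le_total η x with hηx | hxη
  · linarith [hbig x hηx hx1]
  · have hsmall : C * (η - x) / w ≤ c / 2 * d ^ 3 * w ^ 4 := by
      rw [div_le_iff₀ hw]
      calc C * (η - x) ≤ C * η := by gcongr; linarith
        _ = (C * d) * d ^ 3 * w ^ 5 := by rw [hη]; ring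
        _ ≤ (c / 2) * d ^ 3 * w ^ 5 := by gcongr
        _ = _ := by ring
    linarith [hbig η le_rfl hη1, hlipschitz x η hx hxη hη1, norm_sub_norm_le (g η) (g x)]

variable {θ : ℝ}

lemma one_add_norm_rpow_le_mul {s : ℂ} {t : ℝ} (hre : 0 ≤ s.re) (hre2 : s.re ≤ 2)
    (him : |s.im| ≤ 2 * |t|) (hθ : 0 ≤ θ) (hθ1 : θ ≤ 1) :
    (1 + ‖s‖) ^ θ ≤ 3 * (1 + |t|) ^ θ := by
  have hnorm := Complex.norm_le_abs_re_add_abs_im s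
  rw [abs_of_nonneg hre] at hnorm
  calc (1 + ‖s‖) ^ θ ≤ (3 * (1 + |t|)) ^ θ := by gcongr; linarith [abs_nonneg t]
    _ = 3 ^ θ * (1 + |t|) ^ θ := Real.mul_rpow (by norm_num) (by positivity)
    _ ≤ 3 ^ (1 : ℝ) * (1 + |t|) ^ θ := by gcongr; norm_num
    _ = _ := by rw [Real.rpow_one]

lemma abs_im_le_norm_sub_one (s : ℂ) : |s.im| ≤ ‖s - 1‖ := by
  simpa using Complex.abs_im_le_norm (s - 1)

lemma norm_sub_le_of_norm_deriv_le {F : ℂ → ℂ} {t D : ℝ}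
    (hF : ∀ s : ℂ, 1 ≤ s.re → s.re ≤ 2 → s.im = t → DifferentiableAt ℂ F s ∧ ‖deriv F s‖ ≤ D)
    {x y : ℝ} (hx : 0 < x) (hxy : x ≤ y) (hy : y ≤ 1) :
    ‖F (1 + y + Complex.I * t) - F (1 + x + Complex.I * t)‖ ≤ D * (y - x) := by
  have hline (u : ℝ) (hu : u ∈ Set.Icc x y) :
      DifferentiableAt ℂ F (1 + u + Complex.I * t) ∧ ‖deriv F (1 + u + Complex.I * t)‖ ≤ D :=
    hF _ (by simp; linarith [hu.1]) (by simp; linarith [hu.2]) (by simp)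
  have hderiv (u : ℝ) (hu : u ∈ Set.Icc x y) :
      HasDerivWithinAt (fun v : ℝ ↦ F (1 + v + Complex.I * t)) (deriv F (1 + u + Complex.I * t))
        (Set.Icc x y) u := by
    have hinner : HasDerivAt (fun z : ℂ ↦ 1 + z + Complex.I * t) 1 u :=
      ((hasDerivAt_id _).const_add _).add_const _
    simpa using ((hline u hu).1.hasDerivAt.comp (u : ℂ) hinner).comp_ofReal.hasDerivWithinAt
  have hmean := (convex_Icc x y).norm_image_sub_le_of_norm_hasDerivWithin_le hderiv
    (fun u hu ↦ (hline u hu).2) (Set.left_mem_Icc.2 hxy) (Set.right_mem_Icc.2 hxy)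
  rwa [Real.norm_of_nonneg (sub_nonneg.2 hxy)] at hmean

variable {N : ℕ} [NeZero N]

lemma exists_norm_LFunctionTrivChar_le (N : ℕ) [NeZero N] :
    ∃ C > 0, ∀ x : ℝ, 0 < x → x ≤ 1 →
      ‖DirichletCharacter.LFunctionTrivChar N (1 + x)‖ ≤ C / x := by
  obtain ⟨C, hC, h⟩ := (isBigO_LFunction (N := N) (1 : DirichletCharacter ℂ N)
    one_pos le_rfl).exists_pos
  rw [IsBigOWith_def, eventually_principal] at h
  refine ⟨4 * C, by positivity, fun x hx hx1 ↦ (h (1 + x) ⟨?_, ?_⟩).trans ?_⟩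
  · simp
    linarith
  · simpa using hx.ne'
  have hnorm : ‖(1 + x : ℂ)‖ = 1 + x := by
    rw [← Complex.ofReal_one, ← Complex.ofReal_add, Complex.norm_of_nonneg (by positivity)]
  rw [hnorm, Real.rpow_one, add_sub_cancel_left, Complex.norm_of_nonneg hx.le,
    Real.norm_of_nonneg (by positivity), mul_comm 4 C, mul_div_assoc]
  gcongr
  rw [le_div_iff₀ hx, add_mul, inv_mul_cancel₀ hx.ne']
  nlinarith

lemma exists_norm_LFunction_le (χ : DirichletCharacter ℂ N) (hθ : 0 < θ) (hθ1 : θ ≤ 1) :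
    ∃ C > 0, ∀ x t : ℝ, 0 < x → x ≤ 1 → 1 ≤ |t| →
      ‖χ.LFunction (1 + x + 2 * Complex.I * t)‖ ≤ C * (1 + |t|) ^ θ := by
  obtain ⟨C, hC, h⟩ := (isBigO_LFunction_of_le_norm_sub_one χ hθ hθ1).exists_pos
  rw [IsBigOWith_def, eventually_principal] at h
  refine ⟨3 * C, by positivity, fun x t hx hx1 ht ↦ ?_⟩
  set s : ℂ := 1 + x + 2 * Complex.I * t with hs
  have him : s.im = 2 * t := by simp [hs]
  have hre : s.re = 1 + x := by simp [hs]
  have him2 : |s.im| = 2 * |t| := by rw [him, abs_mul, abs_two]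
  refine (h s ⟨by linarith, by linarith [abs_im_le_norm_sub_one s]⟩).trans ?_
  rw [Real.norm_of_nonneg (by positivity), mul_comm 3 C, mul_assoc]
  gcongr
  exact one_add_norm_rpow_le_mul (by linarith) (by linarith) him2.le hθ.le hθ1

lemma exists_norm_LFunction_sub_le (χ : DirichletCharacter ℂ N) (hθ : 0 < θ) (hθ1 : θ ≤ 1) :
    ∃ C > 0, ∀ x y t : ℝ, 1 ≤ |t| → 0 < x → x ≤ y → y ≤ 1 →
      ‖χ.LFunction (1 + y + Complex.I * t) - χ.LFunction (1 + x + Complex.I * t)‖ ≤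
        C * (1 + |t|) ^ θ * (y - x) := by
  obtain ⟨C, hC, h⟩ := (isBigO_deriv_LFunction χ hθ hθ1).exists_pos
  rw [IsBigOWith_def, eventually_principal] at h
  refine ⟨C * 3, by positivity, fun x y t ht ↦ norm_sub_le_of_norm_deriv_le fun s hs hs2 him ↦ ?_⟩
  have hs1 : 1 ≤ ‖s - 1‖ := by linarith [abs_im_le_norm_sub_one s, him ▸ ht]
  refine ⟨χ.differentiableAt_LFunction s (Or.inl ?_), (h s ⟨hs, hs1⟩).trans ?_⟩
  · rintro rfl
    norm_num at hs1
  rw [Real.norm_of_nonneg (by positivity), mul_assoc]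
  gcongr
  exact one_add_norm_rpow_le_mul (by linarith) hs2 (by rw [him]; linarith) hθ.le hθ1

lemma exists_mul_pow_three_le_norm_LFunction_pow_four (χ : DirichletCharacter ℂ N) (hθ : 0 < θ)
    (hθ1 : θ ≤ 1) : ∃ c > 0, ∀ x t : ℝ, 0 < x → x ≤ 1 → 1 ≤ |t| →
      c ^ 4 * x ^ 3 * (1 + |t|) ^ (-θ) ≤ ‖χ.LFunction (1 + x + Complex.I * t)‖ ^ 4 := by
  obtain ⟨C₁, hC₁, htriv⟩ := exists_norm_LFunctionTrivChar_le N
  obtain ⟨C₂, hC₂, hsq⟩ := exists_norm_LFunction_le (χ ^ 2) hθ hθ1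
  set C := C₁ + C₂
  have hC : 0 < C := by positivity
  refine ⟨C⁻¹, by positivity, fun x t hx hx1 ht ↦ ?_⟩
  set w := (1 + |t|) ^ θ with hw
  have hw0 : 0 < w := by positivity
  have hproduct : 1 ≤ (C / x) ^ 3 * ‖χ.LFunction (1 + x + Complex.I * t)‖ ^ 4 * (C * w) := by
    refine (χ.norm_LFunction_product_ge_one hx t).le.trans ?_
    rw [norm_mul, norm_mul, norm_pow, norm_pow]
    gcongr
    · exact (htriv x hx hx1).trans (by gcongr; linarith)
    · exact (hsq x t hx hx1 ht).trans (by gcongr; linarith)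
  rw [Real.rpow_neg (by positivity), ← hw]
  calc C⁻¹ ^ 4 * x ^ 3 * w⁻¹ ≤ C⁻¹ ^ 4 * x ^ 3 * w⁻¹ *
        ((C / x) ^ 3 * ‖χ.LFunction (1 + x + Complex.I * t)‖ ^ 4 * (C * w)) :=
        le_mul_of_one_le_right (by positivity) hproduct
    _ = _ := by field_simp

lemma rpow_neg_isBigO_LFunction_of_one_le_abs_im (χ : DirichletCharacter ℂ N) (hθ : 0 < θ)
    (hθ1 : θ ≤ 1) :
    (fun s : ℂ ↦ (1 + ‖s‖) ^ (-(4 * θ)))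
      =O[𝓟 {s | 1 < s.re ∧ s.re ≤ 2 ∧ 1 ≤ |s.im|}] χ.LFunction := by
  obtain ⟨c, hc, hlower⟩ := exists_mul_pow_three_le_norm_LFunction_pow_four χ hθ hθ1
  obtain ⟨D, hD, hlipschitz⟩ := exists_norm_LFunction_sub_le χ hθ hθ1
  set c₀ := c * (min 1 (c / (2 * D))) ^ 3 / 2
  have hc₀ : 0 < c₀ := by positivity
  refine isBigO_principal.2 ⟨c₀⁻¹, fun s ⟨hs, hs2, ht⟩ ↦ ?_⟩
  set T := 1 + |s.im|
  have hT : 1 ≤ T := by linarith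
  have hbound := mul_pow_four_le_norm_of_norm_sub_le (x := s.re - 1) (w := T ^ (-θ))
    (g := fun x ↦ χ.LFunction (1 + x + Complex.I * s.im)) hc hD (by positivity)
    (Real.rpow_le_one_of_one_le_of_nonpos hT (by linarith))
    (fun x hx hx1 ↦ hlower x s.im hx hx1 ht) (fun x y hx hxy hy ↦ ?_) (by linarith) (by linarith)
  · have hs_eq : (1 + (s.re - 1 : ℝ) + Complex.I * s.im : ℂ) = s := by apply Complex.ext <;> simp
    rw [hs_eq] at hbound
    rw [Real.norm_of_nonneg (by positivity), le_inv_mul_iff₀ hc₀]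
    refine le_trans (mul_le_mul_of_nonneg_left ?_ hc₀.le) hbound
    calc (1 + ‖s‖) ^ (-(4 * θ)) ≤ T ^ (-(4 * θ)) := Real.rpow_le_rpow_of_nonpos (by linarith)
          (by linarith [Complex.abs_im_le_norm s]) (by linarith)
      _ = (T ^ (-θ)) ^ 4 := by
          rw [← Real.rpow_natCast, ← Real.rpow_mul (by linarith)]
          push_cast
          ring_nf
  · refine (hlipschitz x y s.im ht hx hxy hy).trans_eq ?_
    rw [Real.rpow_neg (by linarith), div_inv_eq_mul]
    ring

end LowerBoundForLFunctions

section LogDerivativeOfLFunctions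

variable {F G : ℂ → ℂ} {U K : Set ℂ} {k θ : ℝ}

lemma isBigO_one_add_norm_rpow_of_le {l : Filter ℂ} {a b : ℝ} (hab : a ≤ b) :
    (fun s : ℂ ↦ (1 + ‖s‖) ^ a) =O[l] fun s ↦ (1 + ‖s‖) ^ b := by
  refine IsBigO.of_bound' (Eventually.of_forall fun s ↦ ?_)
  rw [Real.norm_of_nonneg (by positivity), Real.norm_of_nonneg (by positivity)]
  exact Real.rpow_le_rpow_of_exponent_le (by linarith [norm_nonneg s]) hab

lemma isBigO_div_one_add_norm_rpow {a b : ℝ} (hG : G =O[𝓟 U] fun s ↦ (1 + ‖s‖) ^ a)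
    (hF : (fun s : ℂ ↦ (1 + ‖s‖) ^ b) =O[𝓟 U] F) :
    (fun s ↦ G s / F s) =O[𝓟 U] fun s ↦ (1 + ‖s‖) ^ (a - b) := by
  have hinv := hF.inv_rev <| Eventually.of_forall fun s hs ↦
    absurd hs (Real.rpow_pos_of_pos (by positivity : 0 < 1 + ‖s‖) b).ne'
  refine (hG.mul hinv).congr (fun s ↦ (div_eq_mul_inv _ _).symm) fun s ↦ ?_
  rw [Real.rpow_sub (by positivity), div_eq_mul_inv]

lemma continuous_one_add_norm_rpow (k : ℝ) : Continuous fun s : ℂ ↦ (1 + ‖s‖) ^ k :=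
  (continuous_const.add continuous_norm).rpow_const fun s ↦
    Or.inl (add_pos_of_pos_of_nonneg one_pos (norm_nonneg s)).ne'

lemma isBigO_one_add_norm_rpow_of_sdiff (hF : Continuous F) (hK : IsCompact K)
    (hFU : F =O[𝓟 (U \ K)] fun s ↦ (1 + ‖s‖) ^ k) : F =O[𝓟 U] fun s ↦ (1 + ‖s‖) ^ k := by
  have hFK : F =O[𝓟 K] fun s ↦ (1 + ‖s‖) ^ k :=
    (hF.continuousOn.isBigO_principal hK (c := (1 : ℝ)) (by simp)).trans
      ((continuous_one_add_norm_rpow k).continuousOn.isBigO_rev_principal hK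
        (fun s _ ↦ by positivity) 1)
  refine (hFU.sup hFK).mono ?_
  rw [sup_principal, principal_mono]
  exact fun s hs ↦ (em (s ∈ K)).elim Or.inr fun h ↦ Or.inl ⟨hs, h⟩

lemma one_add_norm_rpow_isBigO_of_sdiff (hF : Continuous F) (hK : IsCompact K)
    (hF0 : ∀ s ∈ K, F s ≠ 0) (hFU : (fun s : ℂ ↦ (1 + ‖s‖) ^ k) =O[𝓟 (U \ K)] F) :
    (fun s : ℂ ↦ (1 + ‖s‖) ^ k) =O[𝓟 U] F := by
  have hFK : (fun s : ℂ ↦ (1 + ‖s‖) ^ k) =O[𝓟 K] F :=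
    ((continuous_one_add_norm_rpow k).continuousOn.isBigO_principal hK (c := (1 : ℝ))
      (by simp)).trans (hF.continuousOn.isBigO_rev_principal hK hF0 1)
  refine (hFU.sup hFK).mono ?_
  rw [sup_principal, principal_mono]
  exact fun s hs ↦ (em (s ∈ K)).elim Or.inr fun h ↦ Or.inl ⟨hs, h⟩

lemma isBigO_deriv_halfPlane {σ σ' : ℝ} (hσ : σ < σ') (hσ1 : σ' ≤ σ + 1) (hk : 0 ≤ k)
    (hF : Differentiable ℂ F) (hFU : F =O[𝓟 {s | σ < s.re}] fun s ↦ (1 + ‖s‖) ^ k) :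
    deriv F =O[𝓟 {s | σ' < s.re}] fun s ↦ (1 + ‖s‖) ^ k :=
  isBigO_deriv_of_closedBall_subset (sub_pos.2 hσ) (by linarith) hk
    (fun s (hs : σ' < s.re) z hz ↦
      show σ < z.re by linarith [sub_le_re_of_mem_closedBall hz])
    hF.differentiableOn hFU

lemma hasDerivAt_logDeriv (hF : Differentiable ℂ F) {s : ℂ} (hs : F s ≠ 0) :
    HasDerivAt (logDeriv F) (deriv (deriv F) s / F s - (deriv F s / F s) ^ 2) s := by
  convert! (hF.deriv s).hasDerivAt.div (hF s).hasDerivAt hs using 1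
  field_simp

/-- The strip on which the logarithmic derivatives of the `L`-functions are estimated. -/
def rightStrip : Set ℂ := {s | 1 < s.re ∧ s.re ≤ 2}

section

variable (hF : Differentiable ℂ F) (hk : 0 ≤ k) (hθ : 0 < θ) (hθ1 : θ ≤ 1)
  (hupper : F =O[𝓟 {s | 1 - θ / 2 < s.re}] fun s ↦ (1 + ‖s‖) ^ (k + θ))
  (hlower : (fun s : ℂ ↦ (1 + ‖s‖) ^ (k - 4 * θ)) =O[𝓟 rightStrip] F)

include hF hk hθ hθ1 hupper hlower

lemma isBigO_deriv_div_self :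
    (fun s ↦ deriv F s / F s) =O[𝓟 rightStrip] fun s ↦ (1 + ‖s‖) ^ (5 * θ) := by
  have hderiv : deriv F =O[𝓟 rightStrip] fun s ↦ (1 + ‖s‖) ^ (k + θ) :=
    (isBigO_deriv_halfPlane (σ' := 1) (by linarith) (by linarith) (by linarith) hF hupper).mono
      (principal_mono.2 fun s hs ↦ hs.1)
  convert! isBigO_div_one_add_norm_rpow hderiv hlower using 3
  ring

lemma isBigO_logDeriv : logDeriv F =O[𝓟 rightStrip] fun s ↦ (1 + ‖s‖) ^ (10 * θ) :=
  (isBigO_deriv_div_self hF hk hθ hθ1 hupper hlower).trans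
    (isBigO_one_add_norm_rpow_of_le (by linarith))

lemma isBigO_deriv_logDeriv :
    deriv (logDeriv F) =O[𝓟 rightStrip] fun s ↦ (1 + ‖s‖) ^ (10 * θ) := by
  have hderiv : deriv F =O[𝓟 {s | 1 - θ / 4 < s.re}] fun s ↦ (1 + ‖s‖) ^ (k + θ) :=
    isBigO_deriv_halfPlane (by linarith) (by linarith) (by linarith) hF hupper
  have hderiv2 : deriv (deriv F) =O[𝓟 rightStrip] fun s ↦ (1 + ‖s‖) ^ (k + θ) :=
    (isBigO_deriv_halfPlane (σ' := 1) (by linarith) (by linarith) (by linarith) hF.deriv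
      hderiv).mono (principal_mono.2 fun s hs ↦ hs.1)
  have hquot := (isBigO_div_one_add_norm_rpow hderiv2 hlower).trans
    (isBigO_one_add_norm_rpow_of_le (b := 10 * θ) (by linarith))
  have hsq := (isBigO_deriv_div_self hF hk hθ hθ1 hupper hlower).pow 2
  refine (hquot.sub (hsq.trans_eventuallyEq ?_)).congr' ?_ EventuallyEq.rfl
  · refine Eventually.of_forall fun s ↦ ?_
    simp only
    rw [← Real.rpow_natCast, ← Real.rpow_mul (by positivity)]
    push_cast
    ring_nf
  · filter_upwards [hlower.eq_zero_imp] with s hs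
    have hFs : F s ≠ 0 := fun h ↦ (Real.rpow_pos_of_pos (by positivity) _).ne' (hs h)
    exact (hasDerivAt_logDeriv hF hFs).deriv.symm

end

lemma rightStrip_sdiff_subset :
    rightStrip \ (Set.Icc 1 2 ×ℂ Set.Icc (-1) 1) ⊆ {s | 1 < s.re ∧ s.re ≤ 2 ∧ 1 ≤ |s.im|} := by
  rintro s ⟨⟨hs, hs2⟩, hK⟩
  refine ⟨hs, hs2, not_lt.1 fun him ↦ hK ?_⟩
  exact Complex.mem_reProdIm.2 ⟨⟨hs.le, hs2⟩, abs_le.1 him.le⟩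

lemma halfPlane_sdiff_subset (σ : ℝ) :
    {s : ℂ | σ < s.re} \ Metric.closedBall 1 (1 / 2) ⊆ {s | σ < s.re ∧ 1 / 2 ≤ ‖s - 1‖} :=
  fun _ ⟨hs, hball⟩ ↦ ⟨hs, (not_le.1 fun h ↦ hball (mem_closedBall_iff_norm.2 h)).le⟩

variable {N : ℕ} [NeZero N]

section

variable {χ : DirichletCharacter ℂ N} (hχ : χ ≠ 1) (hθ : 0 < θ) (hθ1 : θ ≤ 1)

include hχ hθ hθ1

lemma isBigO_LFunction_of_ne_one :
    χ.LFunction =O[𝓟 {s | 1 - θ / 2 < s.re}] fun s ↦ (1 + ‖s‖) ^ (0 + θ) := by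
  rw [zero_add]
  exact isBigO_one_add_norm_rpow_of_sdiff
    (DirichletCharacter.differentiable_LFunction hχ).continuous
    (isCompact_closedBall 1 (1 / 2)) ((isBigO_LFunction_of_le_norm_sub_one χ hθ hθ1).mono
      (principal_mono.2 (halfPlane_sdiff_subset _)))

lemma rpow_isBigO_LFunction_of_ne_one :
    (fun s : ℂ ↦ (1 + ‖s‖) ^ (0 - 4 * θ)) =O[𝓟 rightStrip] χ.LFunction := by
  rw [zero_sub]
  exact one_add_norm_rpow_isBigO_of_sdiff
    (DirichletCharacter.differentiable_LFunction hχ).continuous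
    (isCompact_Icc.reProdIm isCompact_Icc)
    (fun s hs ↦ χ.LFunction_ne_zero_of_one_le_re (Or.inl hχ) (Complex.mem_reProdIm.1 hs).1.1)
    ((rpow_neg_isBigO_LFunction_of_one_le_abs_im χ hθ hθ1).mono
      (principal_mono.2 rightStrip_sdiff_subset))

end

open DirichletCharacter (LFunctionTrivChar₁ LFunctionTrivChar differentiable_LFunctionTrivChar₁)

lemma LFunctionTrivChar₁_of_ne_one {s : ℂ} (hs : s ≠ 1) :
    LFunctionTrivChar₁ N s = (s - 1) * LFunctionTrivChar N s :=
  Function.update_of_ne hs ..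

lemma LFunctionTrivChar₁_ne_zero {s : ℂ} (hs : 1 ≤ s.re) : LFunctionTrivChar₁ N s ≠ 0 := by
  rcases eq_or_ne s 1 with rfl | hs1
  · exact DirichletCharacter.LFunctionTrivChar₁_apply_one_ne_zero N
  · rw [LFunctionTrivChar₁_of_ne_one hs1]
    exact mul_ne_zero (sub_ne_zero.2 hs1)
      (DirichletCharacter.LFunction_ne_zero_of_one_le_re _ (Or.inr hs1) hs)

lemma isBigO_LFunctionTrivChar₁ (hθ : 0 < θ) (hθ1 : θ ≤ 1) :
    LFunctionTrivChar₁ N =O[𝓟 {s | 1 - θ / 2 < s.re}] fun s ↦ (1 + ‖s‖) ^ (1 + θ) := by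
  refine isBigO_one_add_norm_rpow_of_sdiff (differentiable_LFunctionTrivChar₁ N).continuous
    (isCompact_closedBall 1 (1 / 2)) (IsBigO.mono ?_
      (principal_mono.2 (halfPlane_sdiff_subset _)))
  have hlinear : (fun s : ℂ ↦ s - 1) =O[𝓟 {s | 1 - θ / 2 < s.re ∧ 1 / 2 ≤ ‖s - 1‖}]
      fun s ↦ 1 + ‖s‖ := by
    refine IsBigO.of_bound' (Eventually.of_forall fun s ↦ ?_)
    rw [Real.norm_of_nonneg (by positivity), add_comm]
    simpa using norm_sub_le s 1
  refine (hlinear.mul (isBigO_LFunction_of_le_norm_sub_one (1 : DirichletCharacter ℂ N) hθ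
    hθ1)).congr' (eventually_principal.2 fun s hs ↦ ?_) (Eventually.of_forall fun s ↦ ?_)
  · exact (LFunctionTrivChar₁_of_ne_one fun h ↦ by norm_num [h] at hs).symm
  · exact (Real.rpow_one_add' (by positivity) (by linarith)).symm

lemma rpow_isBigO_LFunctionTrivChar₁ (hθ : 0 < θ) (hθ1 : θ ≤ 1) :
    (fun s : ℂ ↦ (1 + ‖s‖) ^ (1 - 4 * θ)) =O[𝓟 rightStrip] LFunctionTrivChar₁ N := by
  refine one_add_norm_rpow_isBigO_of_sdiff (differentiable_LFunctionTrivChar₁ N).continuous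
    (isCompact_Icc.reProdIm isCompact_Icc)
    (fun s hs ↦ LFunctionTrivChar₁_ne_zero (Complex.mem_reProdIm.1 hs).1.1)
    (IsBigO.mono ?_ (principal_mono.2 rightStrip_sdiff_subset))
  have hlinear : (fun s : ℂ ↦ 1 + ‖s‖) =O[𝓟 {s | 1 < s.re ∧ s.re ≤ 2 ∧ 1 ≤ |s.im|}]
      fun s ↦ s - 1 := by
    refine isBigO_principal.2 ⟨3, fun s ⟨_, _, him⟩ ↦ ?_⟩
    rw [Real.norm_of_nonneg (by positivity)]
    have htriangle : ‖s‖ ≤ ‖s - 1‖ + 1 := by simpa using norm_add_le (s - 1) 1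
    linarith [abs_im_le_norm_sub_one s]
  refine (hlinear.mul (rpow_neg_isBigO_LFunction_of_one_le_abs_im
    (1 : DirichletCharacter ℂ N) hθ hθ1)).congr' (Eventually.of_forall fun s ↦ ?_)
    (eventually_principal.2 fun s hs ↦ ?_)
  · simp only
    rw [sub_eq_add_neg, Real.rpow_add (by positivity), Real.rpow_one]
  · exact (LFunctionTrivChar₁_of_ne_one fun h ↦ by norm_num [h] at hs).symm

section

open ArithmeticFunction.vonMangoldt (LFunctionResidueClassAux)

variable (a : ZMod N)

lemma LFunctionResidueClassAux_eq_logDeriv :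
    LFunctionResidueClassAux a = fun s ↦ (N.totient : ℂ)⁻¹ *
      (-logDeriv (LFunctionTrivChar₁ N) s -
        ∑ χ ∈ ({1}ᶜ : Finset (DirichletCharacter ℂ N)), χ a⁻¹ * logDeriv χ.LFunction s) := by
  ext s
  simp only [LFunctionResidueClassAux, logDeriv_apply, neg_div, mul_div_assoc]
  congr!

lemma differentiableAt_logDeriv_LFunctionTrivChar₁ {s : ℂ} (hs : 1 < s.re) :
    DifferentiableAt ℂ (logDeriv (LFunctionTrivChar₁ N)) s :=
  (hasDerivAt_logDeriv (differentiable_LFunctionTrivChar₁ N)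
    (LFunctionTrivChar₁_ne_zero hs.le)).differentiableAt

lemma differentiableAt_logDeriv_LFunction {χ : DirichletCharacter ℂ N} (hχ : χ ≠ 1) {s : ℂ}
    (hs : 1 < s.re) : DifferentiableAt ℂ (logDeriv χ.LFunction) s :=
  (hasDerivAt_logDeriv (DirichletCharacter.differentiable_LFunction hχ)
    (χ.LFunction_ne_zero_of_one_le_re (Or.inl hχ) hs.le)).differentiableAt

lemma hasDerivAt_LFunctionResidueClassAux {s : ℂ} (hs : 1 < s.re) :
    HasDerivAt (LFunctionResidueClassAux a) ((N.totient : ℂ)⁻¹ *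
      (-deriv (logDeriv (LFunctionTrivChar₁ N)) s -
        ∑ χ ∈ ({1}ᶜ : Finset (DirichletCharacter ℂ N)), χ a⁻¹ * deriv (logDeriv χ.LFunction) s))
      s := by
  rw [LFunctionResidueClassAux_eq_logDeriv]
  refine ((differentiableAt_logDeriv_LFunctionTrivChar₁ hs).hasDerivAt.fun_neg.fun_sub
    (HasDerivAt.fun_sum fun χ hχ ↦ ?_)).const_mul _
  exact (differentiableAt_logDeriv_LFunction (by simpa using hχ) hs).hasDerivAt.const_mul _

lemma isBigO_LFunctionResidueClassAux (hθ : 0 < θ) (hθ1 : θ ≤ 1) :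
    LFunctionResidueClassAux a =O[𝓟 rightStrip] fun s ↦ (1 + ‖s‖) ^ (10 * θ) := by
  rw [LFunctionResidueClassAux_eq_logDeriv]
  refine ((isBigO_logDeriv (differentiable_LFunctionTrivChar₁ N) zero_le_one hθ hθ1
    (isBigO_LFunctionTrivChar₁ hθ hθ1) (rpow_isBigO_LFunctionTrivChar₁ hθ hθ1)).neg_left.sub
    (IsBigO.fun_sum fun χ hχ ↦ IsBigO.const_mul_left ?_ _)).const_mul_left _
  have hχ1 : χ ≠ 1 := by simpa using hχ
  exact isBigO_logDeriv (DirichletCharacter.differentiable_LFunction hχ1) le_rfl hθ hθ1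
    (isBigO_LFunction_of_ne_one hχ1 hθ hθ1) (rpow_isBigO_LFunction_of_ne_one hχ1 hθ hθ1)

lemma isBigO_deriv_LFunctionResidueClassAux (hθ : 0 < θ) (hθ1 : θ ≤ 1) :
    deriv (LFunctionResidueClassAux a) =O[𝓟 rightStrip] fun s ↦ (1 + ‖s‖) ^ (10 * θ) := by
  refine IsBigO.congr' (((isBigO_deriv_logDeriv (differentiable_LFunctionTrivChar₁ N) zero_le_one
    hθ hθ1 (isBigO_LFunctionTrivChar₁ hθ hθ1)
    (rpow_isBigO_LFunctionTrivChar₁ hθ hθ1)).neg_left.sub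
    (IsBigO.fun_sum fun χ hχ ↦ IsBigO.const_mul_left ?_ _)).const_mul_left _)
    (eventually_principal.2 fun s hs ↦ (hasDerivAt_LFunctionResidueClassAux a hs.1).deriv.symm)
    EventuallyEq.rfl
  have hχ1 : χ ≠ 1 := by simpa using hχ
  exact isBigO_deriv_logDeriv (DirichletCharacter.differentiable_LFunction hχ1) le_rfl hθ hθ1
    (isBigO_LFunction_of_ne_one hχ1 hθ hθ1) (rpow_isBigO_LFunction_of_ne_one hχ1 hθ hθ1)

end

end LogDerivativeOfLFunctions

/-! ### The smoothed prime number theorem in a residue class -/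

section SmoothedPerronFormula

open Complex MeasureTheory

/-- The kernel `1 / (s (s + 1))` of the smoothed Perron formula. Its inverse Mellin transform is the
Fejér-type weight `max (1 - u) 0`. -/
noncomputable def perronKernel (s : ℂ) : ℂ := (s * (s + 1))⁻¹

lemma hasMellin_congr {E : Type*} [NormedAddCommGroup E] [NormedSpace ℂ E] {f g : ℝ → E} {s : ℂ}
    {a b : E} (hf : HasMellin f s a) (h : Set.EqOn f g (Set.Ioi 0)) (hab : a = b) :
    HasMellin g s b := by
  have hfg : Set.EqOn (fun t : ℝ ↦ (t : ℂ) ^ (s - 1) • f t) (fun t ↦ (t : ℂ) ^ (s - 1) • g t)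
      (Set.Ioi 0) := fun t ht ↦ by simp only [h ht]
  exact ⟨hf.1.congr_fun hfg measurableSet_Ioi,
    (setIntegral_congr_fun measurableSet_Ioi hfg).symm.trans (hf.2.trans hab)⟩

lemma mul_add_one_ne_zero_of_re_pos {s : ℂ} (hs : 0 < s.re) : s * (s + 1) ≠ 0 :=
  mul_ne_zero (ne_zero_of_re_pos hs)
    (ne_zero_of_re_pos (by rw [add_re, one_re]; positivity))

lemma hasMellin_max_one_sub {s : ℂ} (hs : 0 < s.re) :
    HasMellin (fun u : ℝ ↦ ((max (1 - u) 0 : ℝ) : ℂ)) s (perronKernel s) := by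
  have h_zero := hasMellin_cpow_Ioc 0 (s := s) (by simpa using hs)
  have h_one := hasMellin_cpow_Ioc 1 (s := s) (by rw [one_re]; positivity)
  have h_sub := hasMellin_sub h_zero.1 h_one.1
  rw [h_zero.2, h_one.2] at h_sub
  refine hasMellin_congr h_sub (fun u (hu : 0 < u) ↦ ?_) ?_
  · rcases le_or_gt u 1 with hu1 | hu1
    · have hmem : u ∈ Set.Ioc (0 : ℝ) 1 := ⟨hu, hu1⟩
      simp [Set.indicator_of_mem hmem, max_eq_left (sub_nonneg.2 hu1)]
    · have hmem : u ∉ Set.Ioc (0 : ℝ) 1 := fun h ↦ hu1.not_ge h.2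
      simp [Set.indicator_of_notMem hmem, max_eq_right (sub_nonpos.2 hu1.le)]
  · have hs₀ := ne_zero_of_re_pos hs
    have hs₁ := right_ne_zero_of_mul (mul_add_one_ne_zero_of_re_pos hs)
    rw [perronKernel, add_zero]
    field_simp
    ring

lemma hasMellin_sq_max_one_sub_div {s : ℂ} (hs : 1 < s.re) :
    HasMellin (fun u : ℝ ↦ ((max (1 - u) 0 ^ 2 / (2 * u) : ℝ) : ℂ)) s
      ((s - 1)⁻¹ * perronKernel s) := by
  have hs_pos : 0 < s.re := one_pos.trans hs
  have h_neg_one := hasMellin_const_smul (hasMellin_cpow_Ioc (-1) (s := s)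
    (by simpa using hs)).1 (1 / 2 : ℂ)
  have h_zero := hasMellin_cpow_Ioc 0 (s := s) (by simpa using hs_pos)
  have h_one := hasMellin_const_smul (hasMellin_cpow_Ioc 1 (s := s)
    (by rw [one_re]; positivity)).1 (1 / 2 : ℂ)
  have h_sub := hasMellin_sub h_neg_one.1 h_zero.1
  have h_add := hasMellin_add h_sub.1 h_one.1
  rw [h_sub.2, h_neg_one.2, h_zero.2, h_one.2, (hasMellin_cpow_Ioc (-1) (by simpa using hs)).2,
    (hasMellin_cpow_Ioc 1 (by rw [one_re]; positivity)).2] at h_add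
  refine hasMellin_congr h_add (fun u (hu : 0 < u) ↦ ?_) ?_
  · have hu0 : (u : ℂ) ≠ 0 := ofReal_ne_zero.2 hu.ne'
    rcases le_or_gt u 1 with hu1 | hu1
    · have hmem : u ∈ Set.Ioc (0 : ℝ) 1 := ⟨hu, hu1⟩
      simp only [Set.indicator_of_mem hmem, max_eq_left (sub_nonneg.2 hu1), cpow_neg_one,
        cpow_zero, cpow_one, smul_eq_mul]
      push_cast
      field_simp
      ring
    · have hmem : u ∉ Set.Ioc (0 : ℝ) 1 := fun h ↦ hu1.not_ge h.2
      simp [Set.indicator_of_notMem hmem, max_eq_right (sub_nonpos.2 hu1.le)]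
  · have hs₀ := ne_zero_of_re_pos hs_pos
    have hs₁ := right_ne_zero_of_mul (mul_add_one_ne_zero_of_re_pos hs_pos)
    have hs₂ : s - 1 ≠ 0 := ne_zero_of_re_pos (by simpa using hs)
    rw [perronKernel, add_zero, ← sub_eq_add_neg, smul_eq_mul, smul_eq_mul]
    field_simp
    ring

lemma integral_cpow_mul_eq_of_hasMellin {f : ℝ → ℂ} {F : ℂ → ℂ} {σ y : ℝ}
    (hF : ∀ t : ℝ, HasMellin f (σ + t * I) (F (σ + t * I)))
    (h_integral : VerticalIntegrable F σ) (hy : 0 < y) (hf : ContinuousAt f y⁻¹) :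
    ∫ t : ℝ, (y : ℂ) ^ ((σ : ℂ) + t * I) * F (σ + t * I) = 2 * Real.pi * f y⁻¹ := by
  have h_mellin (t : ℝ) : mellin f (σ + t * I) = F (σ + t * I) := (hF t).2
  have h_int : VerticalIntegrable (mellin f) σ := by
    simpa only [VerticalIntegrable, h_mellin] using h_integral
  have h_inv := mellinInv_mellin_eq σ f (inv_pos.2 hy) (by simpa using (hF 0).1) h_int hf
  have h_cpow (t : ℝ) :
      ((y⁻¹ : ℝ) : ℂ) ^ (-((σ : ℂ) + t * I)) = (y : ℂ) ^ ((σ : ℂ) + t * I) := by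
    rw [ofReal_inv, inv_cpow _ _ (by rw [arg_ofReal_of_nonneg hy.le]; exact Real.pi_pos.ne),
      cpow_neg, inv_inv]
  simp only [mellinInv, h_mellin, h_cpow, smul_eq_mul] at h_inv
  rw [← h_inv, real_smul]
  push_cast
  rw [← mul_assoc, mul_one_div_cancel (by simp [Real.pi_ne_zero]), one_mul]

lemma one_add_norm_sq_le_norm_mul_add_one {s : ℂ} (hs : 1 ≤ s.re) :
    (1 + ‖s‖) ^ 2 / 4 ≤ ‖s * (s + 1)‖ := by
  have h_norm : 1 ≤ ‖s‖ := hs.trans (re_le_norm s)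
  have h_add_one : ‖s‖ ≤ ‖s + 1‖ := by
    rw [← sq_le_sq₀ (norm_nonneg _) (norm_nonneg _), Complex.sq_norm, Complex.sq_norm,
      normSq_apply, normSq_apply, add_re, add_im, one_re, one_im]
    nlinarith
  rw [norm_mul]
  nlinarith

lemma norm_perronKernel_le {s : ℂ} (hs : 1 ≤ s.re) :
    ‖perronKernel s‖ ≤ 4 * (1 + ‖s‖) ^ (-2 : ℝ) := by
  have h_le := one_add_norm_sq_le_norm_mul_add_one hs
  rw [perronKernel, norm_inv, Real.rpow_neg (by positivity), Real.rpow_two, ← div_eq_mul_inv,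
    inv_le_comm₀ (h_le.trans_lt' (by positivity)) (by positivity), inv_div]
  exact h_le

lemma hasDerivAt_perronKernel {s : ℂ} (hs : 0 < s.re) :
    HasDerivAt perronKernel (-(s⁻¹ + (s + 1)⁻¹) * perronKernel s) s := by
  have h_mul : HasDerivAt (fun z : ℂ ↦ z * (z + 1)) (1 * (s + 1) + s * 1) s :=
    (hasDerivAt_id s).mul ((hasDerivAt_id s).add_const 1)
  refine (h_mul.inv (mul_add_one_ne_zero_of_re_pos hs)).congr_deriv ?_
  have hs₀ := ne_zero_of_re_pos hs
  have hs₁ := right_ne_zero_of_mul (mul_add_one_ne_zero_of_re_pos hs)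
  rw [perronKernel]
  field_simp

lemma norm_deriv_perronKernel_le {s : ℂ} (hs : 1 ≤ s.re) :
    ‖deriv perronKernel s‖ ≤ 8 * (1 + ‖s‖) ^ (-2 : ℝ) := by
  have h_inv : ‖s⁻¹‖ ≤ 1 := by
    rw [norm_inv]
    exact inv_le_one_of_one_le₀ (hs.trans (re_le_norm s))
  have h_inv_add : ‖(s + 1)⁻¹‖ ≤ 1 := by
    rw [norm_inv]
    refine inv_le_one_of_one_le₀ (le_trans ?_ (re_le_norm (s + 1)))
    rw [add_re, one_re]
    linarith
  rw [(hasDerivAt_perronKernel (by linarith)).deriv, norm_mul, norm_neg]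
  calc ‖s⁻¹ + (s + 1)⁻¹‖ * ‖perronKernel s‖ ≤ (1 + 1) * (4 * (1 + ‖s‖) ^ (-2 : ℝ)) := by
        gcongr
        · exact norm_add_le_of_le h_inv h_inv_add
        · exact norm_perronKernel_le hs
    _ = 8 * (1 + ‖s‖) ^ (-2 : ℝ) := by ring

lemma ofReal_add_mul_I_mem_rightStrip {σ : ℝ} (hσ : 1 < σ) (hσ2 : σ ≤ 2) (t : ℝ) :
    (σ : ℂ) + t * I ∈ rightStrip := by
  simpa [rightStrip] using ⟨hσ, hσ2⟩

lemma one_add_norm_rpow_le_one_add_abs_rpow {r : ℝ} (hr : 0 ≤ r) (σ t : ℝ) :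
    (1 + ‖(σ : ℂ) + t * I‖) ^ (-r) ≤ (1 + ‖t‖) ^ (-r) := by
  refine Real.rpow_le_rpow_of_nonpos (by positivity) ?_ (neg_nonpos.2 hr)
  simpa using abs_im_le_norm ((σ : ℂ) + t * I)

lemma hasDerivAt_ofReal_add_mul_I (σ t : ℝ) :
    HasDerivAt (fun t : ℝ ↦ (σ : ℂ) + t * I) I t := by
  simpa using ((ofRealCLM.hasDerivAt (x := t)).mul_const I).const_add (σ : ℂ)

lemma verticalIntegrable_of_norm_le {F : ℂ → ℂ} {σ K r : ℝ} (hr : 1 < r)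
    (hF : Continuous fun t : ℝ ↦ F (σ + t * I))
    (hK : ∀ t : ℝ, ‖F (σ + t * I)‖ ≤ K * (1 + ‖t‖) ^ (-r)) : VerticalIntegrable F σ :=
  ((integrable_one_add_norm (by simpa using hr)).const_mul K).mono' hF.aestronglyMeasurable
    (.of_forall hK)

lemma continuous_vertical_of_forall_continuousAt {F : ℂ → ℂ} {σ : ℝ}
    (hF : ∀ s : ℂ, s.re = σ → ContinuousAt F s) : Continuous fun t : ℝ ↦ F (σ + t * I) :=
  continuous_iff_continuousAt.2 fun t ↦
    (hF _ (by simp)).comp (f := fun t : ℝ ↦ (σ : ℂ) + t * I) (by fun_prop)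

lemma verticalIntegrable_perronKernel {σ : ℝ} (hσ : 1 ≤ σ) :
    VerticalIntegrable perronKernel σ := by
  refine verticalIntegrable_of_norm_le (K := 4) one_lt_two
    (continuous_vertical_of_forall_continuousAt fun s hs ↦
      (hasDerivAt_perronKernel (by linarith)).continuousAt) fun t ↦ ?_
  exact (norm_perronKernel_le (by simpa using hσ)).trans
    (mul_le_mul_of_nonneg_left (one_add_norm_rpow_le_one_add_abs_rpow zero_le_two σ t) (by simp))

lemma verticalIntegrable_inv_sub_one_mul_perronKernel {σ : ℝ} (hσ : 1 < σ) :
    VerticalIntegrable (fun s ↦ (s - 1)⁻¹ * perronKernel s) σ := by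
  refine (verticalIntegrable_perronKernel hσ.le).bdd_mul (c := (σ - 1)⁻¹) ?_ (.of_forall fun t ↦ ?_)
  · refine (continuous_vertical_of_forall_continuousAt (F := fun s ↦ (s - 1)⁻¹)
      fun s hs ↦ ?_).aestronglyMeasurable
    exact ContinuousAt.inv₀ (by fun_prop) (ne_zero_of_re_pos (by simpa [hs] using hσ))
  · rw [norm_inv]
    refine inv_anti₀ (by linarith) ?_
    simpa using re_le_norm ((σ : ℂ) + t * I - 1)

lemma norm_cpow_ofReal_add_mul_I {x : ℝ} (hx : 0 < x) (σ t : ℝ) :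
    ‖(x : ℂ) ^ ((σ : ℂ) + t * I)‖ = x ^ σ := by
  rw [norm_cpow_eq_rpow_re_of_pos hx]
  simp

lemma continuous_cpow_ofReal_add_mul_I {x : ℝ} (hx : 0 < x) (σ : ℝ) :
    Continuous fun t : ℝ ↦ (x : ℂ) ^ ((σ : ℂ) + t * I) :=
  Continuous.const_cpow (by fun_prop) (.inl (ofReal_ne_zero.2 hx.ne'))

lemma integrable_cpow_mul {F : ℂ → ℂ} {σ x : ℝ} (hF : VerticalIntegrable F σ) (hx : 0 < x) :
    Integrable fun t : ℝ ↦ (x : ℂ) ^ ((σ : ℂ) + t * I) * F (σ + t * I) :=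
  Integrable.bdd_mul hF (continuous_cpow_ofReal_add_mul_I hx σ).aestronglyMeasurable
    (.of_forall fun t ↦ (norm_cpow_ofReal_add_mul_I hx σ t).le)

lemma integral_cpow_mul_perronKernel {σ y : ℝ} (hσ : 1 ≤ σ) (hy : 0 < y) :
    ∫ t : ℝ, (y : ℂ) ^ ((σ : ℂ) + t * I) * perronKernel (σ + t * I) =
      2 * Real.pi * ((max (1 - y⁻¹) 0 : ℝ) : ℂ) :=
  integral_cpow_mul_eq_of_hasMellin (f := fun u : ℝ ↦ ((max (1 - u) 0 : ℝ) : ℂ))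
    (fun t ↦ hasMellin_max_one_sub (by simpa using one_pos.trans_le hσ))
    (verticalIntegrable_perronKernel hσ) hy (by fun_prop)

lemma integral_cpow_mul_inv_sub_one_mul_perronKernel {σ y : ℝ} (hσ : 1 < σ) (hy : 1 ≤ y) :
    ∫ t : ℝ, (y : ℂ) ^ ((σ : ℂ) + t * I) * ((σ + t * I - 1)⁻¹ * perronKernel (σ + t * I)) =
      2 * Real.pi * ((y / 2 - 1 + y⁻¹ / 2 : ℝ) : ℂ) := by
  have hy0 : 0 < y := one_pos.trans_le hy
  have hy_inv : 2 * y⁻¹ ≠ 0 := by positivity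
  rw [integral_cpow_mul_eq_of_hasMellin (F := fun s ↦ (s - 1)⁻¹ * perronKernel s)
    (fun t ↦ hasMellin_sq_max_one_sub_div (by simpa using hσ))
    (verticalIntegrable_inv_sub_one_mul_perronKernel hσ) hy0
    (by fun_prop (disch := assumption)),
    max_eq_left (sub_nonneg.2 (inv_le_one_of_one_le₀ hy))]
  congr 2
  field_simp
  ring

end SmoothedPerronFormula

section SmoothedPerronForLSeries

open Complex MeasureTheory

variable {f : ℕ → ℂ} {σ x : ℝ}

lemma term_mul_cpow_mul {n : ℕ} (hn : n ≠ 0) (hx : 0 < x) (s w : ℂ) :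
    LSeries.term f s n * ((x : ℂ) ^ s * w) = f n * (((x / n : ℝ) : ℂ) ^ s * w) := by
  have hn_pos : (0 : ℝ) < n := by positivity
  have h_cpow : ((x / n : ℝ) : ℂ) ^ s = (x : ℂ) ^ s / (n : ℂ) ^ s := by
    have hn_cpow : (n : ℂ) ^ s ≠ 0 := cpow_ne_zero_iff.2 (.inl (Nat.cast_ne_zero.2 hn))
    rw [eq_div_iff hn_cpow, ← ofReal_natCast,
      ← mul_cpow_ofReal_nonneg (by positivity) hn_pos.le, ← ofReal_mul,
      div_mul_cancel₀ _ hn_pos.ne']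
  rw [LSeries.term_of_ne_zero hn, h_cpow]
  ring

lemma integral_term_mul_cpow_mul_perronKernel (hf0 : f 0 = 0) (hσ : 1 ≤ σ) (hx : 0 < x) (n : ℕ) :
    ∫ t : ℝ, LSeries.term f (σ + t * I) n *
        ((x : ℂ) ^ ((σ : ℂ) + t * I) * perronKernel (σ + t * I)) =
      2 * Real.pi * (f n * ((max (1 - n / x) 0 : ℝ) : ℂ)) := by
  rcases eq_or_ne n 0 with rfl | hn
  · simp [hf0]
  · simp only [term_mul_cpow_mul hn hx]
    rw [integral_const_mul, integral_cpow_mul_perronKernel hσ (by positivity), inv_div]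
    ring

lemma norm_term_mul_cpow_mul_perronKernel (hx : 0 < x) (n : ℕ) (t : ℝ) :
    ‖LSeries.term f (σ + t * I) n *
        ((x : ℂ) ^ ((σ : ℂ) + t * I) * perronKernel (σ + t * I))‖ =
      ‖LSeries.term f σ n‖ * (x ^ σ * ‖perronKernel (σ + t * I)‖) := by
  rw [norm_mul, norm_mul, norm_cpow_ofReal_add_mul_I hx, LSeries.norm_term_eq, LSeries.norm_term_eq]
  simp

lemma integrable_term_mul_cpow_mul_perronKernel (hσ : 1 ≤ σ) (hx : 0 < x) (n : ℕ) :
    Integrable fun t : ℝ ↦ LSeries.term f (σ + t * I) n *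
      ((x : ℂ) ^ ((σ : ℂ) + t * I) * perronKernel (σ + t * I)) := by
  rcases eq_or_ne n 0 with rfl | hn
  · simp
  · simp only [term_mul_cpow_mul hn hx]
    exact (integrable_cpow_mul (verticalIntegrable_perronKernel hσ) (by positivity)).const_mul _

theorem integral_cpow_mul_LSeries_mul_perronKernel (hf0 : f 0 = 0) (hσ : 1 ≤ σ)
    (hf : LSeriesSummable f σ) (hx : 0 < x) :
    ∫ t : ℝ, (x : ℂ) ^ ((σ : ℂ) + t * I) * (LSeries f (σ + t * I) * perronKernel (σ + t * I)) =
      2 * Real.pi * ∑' n : ℕ, f n * ((max (1 - n / x) 0 : ℝ) : ℂ) := by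
  have h_summable : Summable fun n ↦ ∫ t : ℝ, ‖LSeries.term f (σ + t * I) n *
      ((x : ℂ) ^ ((σ : ℂ) + t * I) * perronKernel (σ + t * I))‖ := by
    simp only [norm_term_mul_cpow_mul_perronKernel hx, integral_const_mul]
    exact hf.norm.mul_right _
  have h_sum := hasSum_integral_of_summable_integral_norm
    (integrable_term_mul_cpow_mul_perronKernel hσ hx) h_summable
  rw [← tsum_mul_left]
  simp only [integral_term_mul_cpow_mul_perronKernel hf0 hσ hx, tsum_mul_right] at h_sum
  rw [h_sum.tsum_eq]
  simp only [LSeries]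
  exact integral_congr_ae (.of_forall fun t ↦ by ring)

end SmoothedPerronForLSeries

section OscillatoryIntegral

open Complex MeasureTheory

lemma hasDerivAt_cpow_ofReal_add_mul_I {x : ℝ} (hx : 1 < x) (σ t : ℝ) :
    HasDerivAt (fun t : ℝ ↦ (Real.log x * I)⁻¹ * (x : ℂ) ^ ((σ : ℂ) + t * I))
      ((x : ℂ) ^ ((σ : ℂ) + t * I)) t := by
  have hx0 : 0 < x := one_pos.trans hx
  have h_log : (Real.log x * I : ℂ) ≠ 0 :=
    mul_ne_zero (ofReal_ne_zero.2 (Real.log_pos hx).ne') I_ne_zero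
  have h_cpow : HasDerivAt (fun s ↦ (x : ℂ) ^ s) _ ((σ : ℂ) + t * I) :=
    (hasDerivAt_id _).const_cpow (.inl (ofReal_ne_zero.2 hx0.ne'))
  refine ((h_cpow.comp t (hasDerivAt_ofReal_add_mul_I σ t)).const_mul
    (Real.log x * I : ℂ)⁻¹).congr_deriv ?_
  rw [id, mul_one, ← ofReal_log hx0.le, mul_assoc _ (Real.log x : ℂ) I, mul_comm, mul_assoc,
    mul_inv_cancel₀ h_log, mul_one]

theorem norm_integral_cpow_mul_le {u u' : ℝ → ℂ} {b : ℝ → ℝ} {σ x : ℝ} (hx : 1 < x)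
    (hu : ∀ t, HasDerivAt u (u' t) t) (hb : Integrable b) (hub : ∀ t, ‖u t‖ ≤ b t)
    (hu'b : ∀ t, ‖u' t‖ ≤ b t) :
    ‖∫ t : ℝ, (x : ℂ) ^ ((σ : ℂ) + t * I) * u t‖ ≤ (∫ t, b t) * (x ^ σ / Real.log x) := by
  have hx0 : 0 < x := one_pos.trans hx
  set v' : ℝ → ℂ := fun t ↦ (x : ℂ) ^ ((σ : ℂ) + t * I)
  set v : ℝ → ℂ := fun t ↦ (Real.log x * I)⁻¹ * v' t
  have hv (t : ℝ) : HasDerivAt v (v' t) t := hasDerivAt_cpow_ofReal_add_mul_I hx σ t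
  have hv_norm (t : ℝ) : ‖v t‖ = x ^ σ / Real.log x := by
    rw [norm_mul, norm_cpow_ofReal_add_mul_I hx0, norm_inv, norm_mul, norm_I, mul_one, norm_real,
      Real.norm_of_nonneg (Real.log_pos hx).le, inv_mul_eq_div]
  have hv_meas : AEStronglyMeasurable v :=
    (continuous_const.mul (continuous_cpow_ofReal_add_mul_I hx0 σ)).aestronglyMeasurable
  have hu_int : Integrable u := hb.mono'
    (continuous_iff_continuousAt.2 fun t ↦ (hu t).continuousAt).aestronglyMeasurable
    (.of_forall hub)
  have hu'_int : Integrable u' := by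
    refine hb.mono' ?_ (.of_forall hu'b)
    rw [show u' = deriv u from funext fun t ↦ (hu t).deriv.symm]
    exact (stronglyMeasurable_deriv u).aestronglyMeasurable
  have h_parts := integral_mul_deriv_eq_deriv_mul_of_integrable (fun t _ ↦ hu t) (fun t _ ↦ hv t)
    (hu_int.mul_bdd (continuous_cpow_ofReal_add_mul_I hx0 σ).aestronglyMeasurable
      (.of_forall fun t ↦ (norm_cpow_ofReal_add_mul_I hx0 σ t).le))
    (hu'_int.mul_bdd hv_meas (.of_forall fun t ↦ (hv_norm t).le))
    (hu_int.mul_bdd hv_meas (.of_forall fun t ↦ (hv_norm t).le))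
  simp only [mul_comm _ (u _)]
  rw [h_parts, norm_neg, ← integral_mul_const]
  refine norm_integral_le_of_norm_le (hb.mul_const _) (.of_forall fun t ↦ ?_)
  rw [norm_mul, hv_norm]
  exact mul_le_mul_of_nonneg_right (hu'b t) (hv_norm t ▸ norm_nonneg _)

end OscillatoryIntegral

section SmoothedPrimeNumberTheorem

open Complex MeasureTheory
open ArithmeticFunction.vonMangoldt (residueClass LFunctionResidueClassAux)

variable {q : ℕ} [NeZero q] (a : ZMod q)

lemma isBigO_mul_perronKernel {F : ℂ → ℂ}
    (hF : F =O[𝓟 rightStrip] fun s ↦ (1 + ‖s‖) ^ (1 / 2 : ℝ)) :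
    (fun s ↦ F s * perronKernel s) =O[𝓟 rightStrip] fun s ↦ (1 + ‖s‖) ^ (-(3 / 2) : ℝ) := by
  have h_kernel : perronKernel =O[𝓟 rightStrip] fun s ↦ (1 + ‖s‖) ^ (-2 : ℝ) :=
    .of_bound 4 (eventually_principal.2 fun s hs ↦ (norm_perronKernel_le hs.1.le).trans
      (by gcongr; exact le_abs_self _))
  refine (hF.mul h_kernel).congr_right fun s ↦ ?_
  rw [← Real.rpow_add (by positivity)]
  norm_num

lemma isBigO_deriv_mul_perronKernel {F : ℂ → ℂ} (hF_diff : ∀ s ∈ rightStrip, DifferentiableAt ℂ F s)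
    (hF : F =O[𝓟 rightStrip] fun s ↦ (1 + ‖s‖) ^ (1 / 2 : ℝ))
    (hF' : deriv F =O[𝓟 rightStrip] fun s ↦ (1 + ‖s‖) ^ (1 / 2 : ℝ)) :
    deriv (fun s ↦ F s * perronKernel s) =O[𝓟 rightStrip]
      fun s ↦ (1 + ‖s‖) ^ (-(3 / 2) : ℝ) := by
  have h_kernel' : deriv perronKernel =O[𝓟 rightStrip] fun s ↦ (1 + ‖s‖) ^ (-2 : ℝ) :=
    .of_bound 8 (eventually_principal.2 fun s hs ↦ (norm_deriv_perronKernel_le hs.1.le).trans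
      (by gcongr; exact le_abs_self _))
  have h_prod : (fun s ↦ F s * deriv perronKernel s) =O[𝓟 rightStrip]
      fun s ↦ (1 + ‖s‖) ^ (-(3 / 2) : ℝ) := by
    refine (hF.mul h_kernel').congr_right fun s ↦ ?_
    rw [← Real.rpow_add (by positivity)]
    norm_num
  refine ((isBigO_mul_perronKernel hF').add h_prod).congr'
    (eventually_principal.2 fun s hs ↦ ?_) EventuallyEq.rfl
  exact ((hF_diff s hs).hasDerivAt.mul
    (hasDerivAt_perronKernel (one_pos.trans hs.1)).differentiableAt.hasDerivAt).deriv.symm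

theorem exists_norm_integral_cpow_mul_le {G : ℂ → ℂ} {r : ℝ} (hr : 1 < r)
    (hG_diff : ∀ s ∈ rightStrip, DifferentiableAt ℂ G s)
    (hG : G =O[𝓟 rightStrip] fun s ↦ (1 + ‖s‖) ^ (-r))
    (hG' : deriv G =O[𝓟 rightStrip] fun s ↦ (1 + ‖s‖) ^ (-r)) :
    ∃ C, ∀ σ x : ℝ, 1 < σ → σ ≤ 2 → 1 < x →
      ‖∫ t : ℝ, (x : ℂ) ^ ((σ : ℂ) + t * I) * G (σ + t * I)‖ ≤ C * (x ^ σ / Real.log x) := by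
  obtain ⟨K, hK, hGK⟩ := hG.exists_pos
  obtain ⟨K', -, hGK'⟩ := hG'.exists_pos
  have hb : Integrable fun t : ℝ ↦ max K K' * (1 + ‖t‖) ^ (-r) :=
    (integrable_one_add_norm (by simpa using hr)).const_mul _
  have h_bound {c : ℝ} (hc : c ≤ max K K') (σ t : ℝ) :
      c * ‖(1 + ‖(σ : ℂ) + t * I‖) ^ (-r)‖ ≤ max K K' * (1 + ‖t‖) ^ (-r) := by
    rw [Real.norm_of_nonneg (by positivity)]
    exact mul_le_mul hc (one_add_norm_rpow_le_one_add_abs_rpow (by linarith) σ t) (by positivity)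
      (le_max_of_le_left hK.le)
  refine ⟨∫ t : ℝ, max K K' * (1 + ‖t‖) ^ (-r), fun σ x hσ hσ2 hx ↦ ?_⟩
  have hs := ofReal_add_mul_I_mem_rightStrip hσ hσ2
  refine norm_integral_cpow_mul_le hx (u := fun t ↦ G (σ + t * I))
    (u' := fun t ↦ deriv G (σ + t * I) * I)
    (fun t ↦ (hG_diff _ (hs t)).hasDerivAt.comp t (hasDerivAt_ofReal_add_mul_I σ t)) hb
    (fun t ↦ ?_) (fun t ↦ ?_)
  · exact (eventually_principal.1 hGK.bound _ (hs t)).trans (h_bound (le_max_left _ _) σ t)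
  · rw [norm_mul, norm_I, mul_one]
    exact (eventually_principal.1 hGK'.bound _ (hs t)).trans (h_bound (le_max_right _ _) σ t)

lemma isBigO_LFunctionResidueClassAux_rpow_half :
    LFunctionResidueClassAux a =O[𝓟 rightStrip] fun s ↦ (1 + ‖s‖) ^ (1 / 2 : ℝ) :=
  (isBigO_LFunctionResidueClassAux a (θ := 1 / 20) (by norm_num) (by norm_num)).congr_right
    fun s ↦ by norm_num

lemma isBigO_deriv_LFunctionResidueClassAux_rpow_half :
    deriv (LFunctionResidueClassAux a) =O[𝓟 rightStrip] fun s ↦ (1 + ‖s‖) ^ (1 / 2 : ℝ) :=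
  (isBigO_deriv_LFunctionResidueClassAux a (θ := 1 / 20) (by norm_num) (by norm_num)).congr_right
    fun s ↦ by norm_num

lemma verticalIntegrable_LFunctionResidueClassAux_mul_perronKernel {σ : ℝ} (hσ : 1 < σ)
    (hσ2 : σ ≤ 2) :
    VerticalIntegrable (fun s ↦ LFunctionResidueClassAux a s * perronKernel s) σ := by
  obtain ⟨K, hK, h⟩ :=
    (isBigO_mul_perronKernel (isBigO_LFunctionResidueClassAux_rpow_half a)).exists_pos
  refine verticalIntegrable_of_norm_le (K := K) (r := 3 / 2) (by norm_num)
    (continuous_vertical_of_forall_continuousAt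
      (F := fun s ↦ LFunctionResidueClassAux a s * perronKernel s) fun s hs ↦ ?_) fun t ↦ ?_
  · have hs_one : 1 < s.re := hs ▸ hσ
    exact (hasDerivAt_LFunctionResidueClassAux a hs_one).continuousAt.mul
      (hasDerivAt_perronKernel (one_pos.trans hs_one)).continuousAt
  · refine (eventually_principal.1 h.bound _ (ofReal_add_mul_I_mem_rightStrip hσ hσ2 t)).trans ?_
    rw [Real.norm_of_nonneg (by positivity)]
    exact mul_le_mul_of_nonneg_left
      (one_add_norm_rpow_le_one_add_abs_rpow (by norm_num) σ t) hK.le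

theorem exists_norm_integral_cpow_mul_LFunctionResidueClassAux_le :
    ∃ C, ∀ σ x : ℝ, 1 < σ → σ ≤ 2 → 1 < x →
      ‖∫ t : ℝ, (x : ℂ) ^ ((σ : ℂ) + t * I) *
        (LFunctionResidueClassAux a (σ + t * I) * perronKernel (σ + t * I))‖ ≤
        C * (x ^ σ / Real.log x) := by
  have h_diff (s : ℂ) (hs : s ∈ rightStrip) :
      DifferentiableAt ℂ (LFunctionResidueClassAux a) s :=
    (hasDerivAt_LFunctionResidueClassAux a hs.1).differentiableAt
  have h_aux := isBigO_LFunctionResidueClassAux_rpow_half a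
  exact exists_norm_integral_cpow_mul_le
    (G := fun s ↦ LFunctionResidueClassAux a s * perronKernel s) (by norm_num)
    (fun s hs ↦ (h_diff s hs).mul
      (hasDerivAt_perronKernel (one_pos.trans hs.1)).differentiableAt)
    (isBigO_mul_perronKernel h_aux) (isBigO_deriv_mul_perronKernel h_diff h_aux
      (isBigO_deriv_LFunctionResidueClassAux_rpow_half a))

variable {a}

theorem integral_cpow_mul_LFunctionResidueClassAux_mul_perronKernel (ha : IsUnit a) {σ x : ℝ}
    (hσ : 1 < σ) (hσ2 : σ ≤ 2) (hx : 1 ≤ x) :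
    ∫ t : ℝ, (x : ℂ) ^ ((σ : ℂ) + t * I) *
        (LFunctionResidueClassAux a (σ + t * I) * perronKernel (σ + t * I)) =
      2 * Real.pi * ((∑' n : ℕ, residueClass a n * max (1 - n / x) 0 -
        (q.totient : ℝ)⁻¹ * (x / 2 - 1 + x⁻¹ / 2) : ℝ) : ℂ) := by
  have hx0 : 0 < x := one_pos.trans_le hx
  have h_summable : LSeriesSummable (fun n ↦ (residueClass a n : ℂ)) σ :=
    LSeriesSummable_of_abscissaOfAbsConv_lt_re
      ((ArithmeticFunction.vonMangoldt.abscissaOfAbsConv_residueClass_le_one a).trans_lt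
        (by rw [ofReal_re]; exact_mod_cast hσ))
  have h_perron := integral_cpow_mul_LSeries_mul_perronKernel (by simp) hσ.le h_summable hx0
  have h_pole := integral_cpow_mul_inv_sub_one_mul_perronKernel hσ hx
  push_cast at h_perron h_pole ⊢
  rw [mul_sub, ← h_perron, mul_left_comm, ← h_pole, eq_sub_iff_add_eq, ← integral_const_mul,
    ← integral_add]
  · refine integral_congr_ae (.of_forall fun t ↦ ?_)
    have h_aux := ArithmeticFunction.vonMangoldt.eqOn_LFunctionResidueClassAux ha
      (show 1 < ((σ : ℂ) + t * I).re by simpa using hσ)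
    simp only [h_aux]
    ring
  · exact integrable_cpow_mul
      (verticalIntegrable_LFunctionResidueClassAux_mul_perronKernel a hσ hσ2) hx0
  · exact (integrable_cpow_mul (verticalIntegrable_inv_sub_one_mul_perronKernel hσ) hx0).const_mul _

lemma rpow_one_add_inv_log {x : ℝ} (hx : 1 < x) :
    x ^ (1 + (Real.log x)⁻¹) = Real.exp 1 * x := by
  have hx0 : 0 < x := one_pos.trans hx
  rw [Real.rpow_add hx0, Real.rpow_one, Real.rpow_def_of_pos hx0,
    mul_inv_cancel₀ (Real.log_pos hx).ne', mul_comm]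

lemma one_isBigO_div_log : (fun _ ↦ 1 : ℝ → ℝ) =O[atTop] fun x : ℝ ↦ x / Real.log x := by
  refine .of_bound 1 ?_
  filter_upwards [eventually_gt_atTop 1] with x hx
  have h_log := Real.log_pos hx
  rw [one_mul, norm_one, Real.norm_of_nonneg (by positivity), le_div_iff₀ h_log, one_mul]
  exact Real.log_le_self (by linarith)

theorem isBigO_tsum_residueClass_mul_max_sub (ha : IsUnit a) :
    (fun x : ℝ ↦ ∑' n : ℕ, residueClass a n * max (1 - n / x) 0 - (q.totient : ℝ)⁻¹ * (x / 2))
      =O[atTop] fun x ↦ x / Real.log x := by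
  obtain ⟨C, h⟩ := exists_norm_integral_cpow_mul_LFunctionResidueClassAux_le a
  have h_main : (fun x : ℝ ↦ ∑' n : ℕ, residueClass a n * max (1 - n / x) 0 -
      (q.totient : ℝ)⁻¹ * (x / 2 - 1 + x⁻¹ / 2)) =O[atTop] fun x ↦ x / Real.log x := by
    refine .of_bound (C * Real.exp 1) ?_
    filter_upwards [eventually_gt_atTop 1, Real.tendsto_log_atTop.eventually_ge_atTop 1] with x hx
      hx_log
    have h_log := Real.log_pos hx
    have h_int := h (1 + (Real.log x)⁻¹) x (lt_add_of_pos_right _ (inv_pos.2 h_log))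
      (by linarith [inv_le_one_of_one_le₀ hx_log]) hx
    rw [integral_cpow_mul_LFunctionResidueClassAux_mul_perronKernel ha
      (lt_add_of_pos_right _ (inv_pos.2 h_log)) (by linarith [inv_le_one_of_one_le₀ hx_log]) hx.le,
      rpow_one_add_inv_log hx, mul_div_assoc, ← mul_assoc, norm_mul, norm_real] at h_int
    rw [Real.norm_of_nonneg (by positivity : 0 ≤ x / Real.log x)]
    refine le_trans (le_mul_of_one_le_left (norm_nonneg _) ?_) h_int
    rw [norm_mul, norm_real, Real.norm_of_nonneg Real.pi_pos.le, norm_ofNat]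
    linarith [Real.pi_gt_three]
  have h_rest : (fun x : ℝ ↦ (q.totient : ℝ)⁻¹ * (-1 + x⁻¹ / 2)) =O[atTop]
      fun x ↦ x / Real.log x := by
    refine IsBigO.const_mul_left (((isBigO_const_const _ one_ne_zero _).add ?_).trans
      one_isBigO_div_log) _
    exact (tendsto_inv_atTop_zero.div_const 2).isBigO_one ℝ
  exact (h_main.add h_rest).congr_left fun x ↦ by ring

end SmoothedPrimeNumberTheorem

/-! ### Smoothed counts of primes in a residue class -/

section PrimesInClass

open ArithmeticFunction.vonMangoldt (residueClass)

variable {q : ℕ} (a : ZMod q)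

/-- The primes up to `y` in the residue class `a`. -/
noncomputable def primesInClass (y : ℝ) : Finset ℕ :=
  {p ∈ Finset.Ioc 0 ⌊y⌋₊ | p.Prime ∧ (p : ZMod q) = a}

/-- The Cesàro mean `∑ (y - p) log p` of Chebyshev's function for the primes in the class `a`; it
equals `∫₀^y θ(t; q, a) dt`. -/
noncomputable def smoothedTheta (y : ℝ) : ℝ :=
  ∑ p ∈ primesInClass a y, Real.log p * (y - p)

/-- The Cesàro mean `∑ (y - p)` of the number of primes in the class `a`; it equals
`∫₀^y π(t; q, a) dt`. -/
noncomputable def smoothedCount (y : ℝ) : ℝ :=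
  ∑ p ∈ primesInClass a y, (y - p)

variable {a} {y z M : ℝ}

lemma mem_primesInClass {p : ℕ} :
    p ∈ primesInClass a y ↔ (p : ℝ) ≤ y ∧ p.Prime ∧ (p : ZMod q) = a := by
  rw [primesInClass, Finset.mem_filter, Finset.mem_Ioc]
  constructor
  · rintro ⟨⟨hp_pos, hpy⟩, hp⟩
    exact ⟨(Nat.le_floor_iff' hp_pos.ne').1 hpy, hp⟩
  · rintro ⟨hpy, hp⟩
    exact ⟨⟨hp.1.pos, (Nat.le_floor_iff' hp.1.ne_zero).2 hpy⟩, hp⟩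

lemma card_primesInClass_le (hy : 0 ≤ y) : ((primesInClass a y).card : ℝ) ≤ y := by
  have h_floor : (primesInClass a y).card ≤ ⌊y⌋₊ :=
    (Finset.card_filter_le _ _).trans_eq (by simp)
  exact (Nat.cast_le.2 h_floor).trans (Nat.floor_le hy)

lemma one_le_of_mem_primesInClass {p : ℕ} (hp : p ∈ primesInClass a y) : (1 : ℝ) ≤ p := by
  exact_mod_cast (mem_primesInClass.1 hp).2.1.one_le

lemma smoothedTheta_nonneg : 0 ≤ smoothedTheta a y :=
  Finset.sum_nonneg fun _ hp ↦ mul_nonneg (Real.log_nonneg (one_le_of_mem_primesInClass hp))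
    (sub_nonneg.2 (mem_primesInClass.1 hp).1)

lemma smoothedTheta_le_sq_mul_log (hy : 0 ≤ y) (hyM : y ≤ M) (hM : 1 ≤ M) :
    smoothedTheta a y ≤ y ^ 2 * Real.log M := by
  have h_log : 0 ≤ Real.log M := Real.log_nonneg hM
  calc smoothedTheta a y ≤ ∑ _p ∈ primesInClass a y, Real.log M * y := by
        refine Finset.sum_le_sum fun p hp ↦ ?_
        have hp_one := one_le_of_mem_primesInClass hp
        have hpy := (mem_primesInClass.1 hp).1
        exact mul_le_mul (Real.log_le_log (by linarith) (by linarith)) (by linarith)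
          (by linarith) h_log
    _ = (primesInClass a y).card * (Real.log M * y) := by rw [Finset.sum_const, nsmul_eq_mul]
    _ ≤ y * (Real.log M * y) := by gcongr; exact card_primesInClass_le hy
    _ = _ := by ring

lemma card_filter_primesInClass_le (hy : 0 ≤ y) (hz : 0 ≤ z) :
    (((primesInClass a y).filter fun p : ℕ ↦ (p : ℝ) ≤ z).card : ℝ) ≤ √z * √y := by
  have h_le_y : (((primesInClass a y).filter fun p : ℕ ↦ (p : ℝ) ≤ z).card : ℝ) ≤ y :=
    (Nat.cast_le.2 (Finset.card_filter_le _ _)).trans (card_primesInClass_le hy)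
  have h_le_z : (((primesInClass a y).filter fun p : ℕ ↦ (p : ℝ) ≤ z).card : ℝ) ≤ z := by
    refine (Nat.cast_le.2 (Finset.card_le_card fun _ hp ↦ ?_)).trans
      (card_primesInClass_le (a := a) hz)
    rw [Finset.mem_filter, mem_primesInClass] at hp
    exact mem_primesInClass.2 ⟨hp.2, hp.1.2⟩
  rw [← Real.sqrt_mul hz]
  refine Real.le_sqrt_of_sq_le ?_
  rw [sq]
  exact mul_le_mul h_le_z h_le_y (Nat.cast_nonneg _) hz

lemma smoothedCount_le (hy : 0 ≤ y) (hz : 1 < z) :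
    smoothedCount a y ≤ √z * (y * √y) + smoothedTheta a y / Real.log z := by
  have h_log := Real.log_pos hz
  calc smoothedCount a y
      ≤ ∑ p ∈ primesInClass a y,
          ((if (p : ℝ) ≤ z then y else 0) + Real.log p * (y - p) / Real.log z) := by
        refine Finset.sum_le_sum fun p hp ↦ ?_
        have hpy : 0 ≤ y - p := sub_nonneg.2 (mem_primesInClass.1 hp).1
        split_ifs with hpz
        · have := Real.log_nonneg (one_le_of_mem_primesInClass hp)
          have : 0 ≤ Real.log p * (y - p) / Real.log z := by positivity
          linarith [p.cast_nonneg (α := ℝ)]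
        · rw [zero_add, le_div_iff₀ h_log, mul_comm]
          gcongr
          linarith
    _ = ((primesInClass a y).filter fun p : ℕ ↦ (p : ℝ) ≤ z).card * y +
          smoothedTheta a y / Real.log z := by
        rw [Finset.sum_add_distrib, ← Finset.sum_filter, Finset.sum_const, nsmul_eq_mul,
          smoothedTheta, Finset.sum_div]
    _ ≤ √z * √y * y + smoothedTheta a y / Real.log z := by
        gcongr
        exact card_filter_primesInClass_le hy (by linarith)
    _ = _ := by ring

lemma smoothedTheta_div_log_le (hyM : y ≤ M) (hM : 1 < M) :
    smoothedTheta a y / Real.log M ≤ smoothedCount a y := by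
  rw [div_le_iff₀ (Real.log_pos hM), smoothedCount, Finset.sum_mul]
  refine Finset.sum_le_sum fun p hp ↦ ?_
  have hp_one := one_le_of_mem_primesInClass hp
  have hpy := (mem_primesInClass.1 hp).1
  rw [mul_comm]
  exact mul_le_mul_of_nonneg_left (Real.log_le_log (by linarith) (by linarith)) (by linarith)

lemma tsum_residueClass_mul_max (a : ZMod q) {x : ℝ} (hx : 0 < x) :
    ∑' n : ℕ, residueClass a n * max (1 - n / x) 0 =
      ∑ n ∈ Finset.Ioc 0 ⌊x⌋₊, residueClass a n * (1 - n / x) := by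
  rw [tsum_eq_sum (s := Finset.Ioc 0 ⌊x⌋₊)]
  · refine Finset.sum_congr rfl fun n hn ↦ ?_
    rw [Finset.mem_Ioc, Nat.le_floor_iff hx.le] at hn
    rw [max_eq_left (by linarith [div_le_one_of_le₀ hn.2 hx.le])]
  · intro n hn
    rw [Finset.mem_Ioc, Nat.le_floor_iff hx.le, not_and_or, Nat.pos_iff_ne_zero, not_not] at hn
    rcases hn with rfl | hn
    · rw [ArithmeticFunction.vonMangoldt.residueClass_apply_zero, zero_mul]
    · have : 1 ≤ n / x := by rw [le_div_iff₀ hx]; linarith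
      rw [max_eq_right (by linarith), mul_zero]

lemma smoothedTheta_div_eq (a : ZMod q) {x : ℝ} (hx : 0 < x) :
    smoothedTheta a x / x =
      ∑ n ∈ Finset.Ioc 0 ⌊x⌋₊ with n.Prime, residueClass a n * (1 - n / x) := by
  rw [smoothedTheta, primesInClass, ← Finset.filter_filter, Finset.sum_filter, Finset.sum_div]
  refine Finset.sum_congr rfl fun n hn ↦ ?_
  by_cases hna : (n : ZMod q) = a
  · rw [residueClass, Set.indicator_of_mem (by exact hna), if_pos hna,
      ArithmeticFunction.vonMangoldt_apply_prime (Finset.mem_filter.1 hn).2]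
    field_simp
  · rw [residueClass, Set.indicator_of_notMem (by exact hna), if_neg hna, zero_mul, zero_div]

-- Only proper prime powers are lost, and they contribute at most `ψ(x) - θ(x)`.
lemma abs_tsum_residueClass_mul_max_sub_le (a : ZMod q) {x : ℝ} (hx : 1 ≤ x) :
    |∑' n : ℕ, residueClass a n * max (1 - n / x) 0 - smoothedTheta a x / x| ≤
      2 * √x * Real.log x := by
  have hx0 : 0 < x := by linarith
  rw [tsum_residueClass_mul_max a hx0, smoothedTheta_div_eq a hx0,
    ← Finset.sum_filter_add_sum_filter_not (Finset.Ioc 0 ⌊x⌋₊) Nat.Prime, add_sub_cancel_left]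
  have h_weight {n : ℕ} (hn : n ∈ (Finset.Ioc 0 ⌊x⌋₊).filter (¬ ·.Prime)) :
      0 ≤ (1 : ℝ) - n / x := by
    rw [Finset.mem_filter, Finset.mem_Ioc, Nat.le_floor_iff hx0.le] at hn
    linarith [div_le_one_of_le₀ hn.1.2 hx0.le]
  rw [abs_of_nonneg (Finset.sum_nonneg fun n hn ↦ mul_nonneg
    (ArithmeticFunction.vonMangoldt.residueClass_nonneg a n) (h_weight hn))]
  calc ∑ n ∈ Finset.Ioc 0 ⌊x⌋₊ with ¬ n.Prime, residueClass a n * (1 - n / x)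
      ≤ ∑ n ∈ Finset.Ioc 0 ⌊x⌋₊ with ¬ n.Prime, ArithmeticFunction.vonMangoldt n := by
        refine Finset.sum_le_sum fun n _ ↦ ?_
        have : 0 ≤ (n : ℝ) / x := by positivity
        calc _ ≤ residueClass a n * 1 := by
              gcongr
              · exact ArithmeticFunction.vonMangoldt.residueClass_nonneg a n
              · linarith
          _ ≤ _ := by
              rw [mul_one]
              exact ArithmeticFunction.vonMangoldt.residueClass_le a n
    _ = Chebyshev.psi x - Chebyshev.theta x := (Chebyshev.psi_sub_theta_eq_sum_not_prime x).symm
    _ ≤ _ := Chebyshev.psi_sub_theta_le hx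

lemma sqrt_mul_log_isBigO : (fun x : ℝ ↦ √x * Real.log x) =O[atTop] fun x ↦ x / Real.log x := by
  have h_log : (fun x : ℝ ↦ Real.log x ^ (2 : ℝ)) =O[atTop] fun x ↦ x ^ (1 / 2 : ℝ) :=
    (isLittleO_log_rpow_rpow_atTop 2 (by norm_num)).isBigO
  refine (((isBigO_refl Real.sqrt atTop).mul h_log).mul
    (isBigO_refl (fun x ↦ (Real.log x)⁻¹) atTop)).congr' ?_ ?_
  · filter_upwards [eventually_gt_atTop 1] with x hx
    have := Real.log_pos hx
    rw [Real.rpow_two]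
    field_simp
  · filter_upwards [eventually_ge_atTop 0] with x hx
    rw [← Real.sqrt_eq_rpow, Real.mul_self_sqrt hx, div_eq_mul_inv]

lemma eventually_sqrt_mul_log_sq_le_one :
    ∀ᶠ x : ℝ in atTop, ∀ u, 0 ≤ u → x * u ≤ √x → √u * Real.log x ^ 2 ≤ 1 := by
  filter_upwards [(Real.isLittleO_pow_log_id_atTop (n := 8)).bound one_pos, eventually_gt_atTop 0]
    with x h_log hx u hu hxu
  have h_log : Real.log x ^ 8 ≤ x := by
    simpa only [norm_pow, id_eq, one_mul, Real.norm_of_nonneg hx.le, Even.pow_abs ⟨4, rfl⟩,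
      Real.norm_eq_abs] using h_log
  refine (pow_le_one_iff_of_nonneg (by positivity) four_ne_zero).1 ?_
  have h_sq : (x * u) ^ 2 ≤ x := by
    calc _ ≤ √x ^ 2 := by gcongr
      _ = x := Real.sq_sqrt hx.le
  have h_le : u ^ 2 * x ≤ 1 := le_of_mul_le_mul_right (by linarith) hx
  calc (√u * Real.log x ^ 2) ^ 4 = (√u ^ 2) ^ 2 * Real.log x ^ 8 := by ring
    _ = u ^ 2 * Real.log x ^ 8 := by rw [Real.sq_sqrt hu]
    _ ≤ u ^ 2 * x := by gcongr
    _ ≤ 1 := h_le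

lemma sq_le_mul_sqrt {u : ℝ} (hu : 0 ≤ u) (hu_one : u ≤ 1) : u ^ 2 ≤ u * √u := by
  rw [sq]
  exact mul_le_mul_of_nonneg_left (Real.le_sqrt_of_sq_le (by nlinarith)) hu

lemma abs_smoothedTheta_sub_le_of_le_sqrt {x u : ℝ} (hx_log : 1 ≤ Real.log x) (hx : 1 ≤ x)
    (hu : 0 ≤ u) (hu_one : u ≤ 1) (h_small : √u * Real.log x ^ 2 ≤ 1) :
    |smoothedTheta a (x * u) - (q.totient : ℝ)⁻¹ * ((x * u) ^ 2 / 2)| ≤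
      2 * (x ^ 2 / Real.log x) * (u * √u) := by
  have h_upper := smoothedTheta_le_sq_mul_log (a := a) (by positivity : 0 ≤ x * u)
    (mul_le_of_le_one_right (by linarith) hu_one) hx
  have h_main : (q.totient : ℝ)⁻¹ * ((x * u) ^ 2 / 2) ≤ (x * u) ^ 2 * Real.log x := by
    have h_totient : (q.totient : ℝ)⁻¹ ≤ 1 := Nat.cast_inv_le_one _
    calc _ ≤ 1 * (x * u) ^ 2 := by gcongr; linarith [sq_nonneg (x * u)]
      _ ≤ Real.log x * (x * u) ^ 2 := by gcongr
      _ = _ := mul_comm _ _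
  have h_main_nonneg : 0 ≤ (q.totient : ℝ)⁻¹ * ((x * u) ^ 2 / 2) := by positivity
  calc _ ≤ (x * u) ^ 2 * Real.log x + (x * u) ^ 2 * Real.log x := by
        rw [abs_le]
        constructor <;> linarith [smoothedTheta_nonneg (a := a) (y := x * u)]
    _ = 2 * (x ^ 2 / Real.log x) * (u * √u) * (√u * Real.log x ^ 2) := by
        have h_sqrt := Real.mul_self_sqrt hu
        field_simp
        linear_combination (-2 * u : ℝ) * h_sqrt
    _ ≤ 2 * (x ^ 2 / Real.log x) * (u * √u) := mul_le_of_le_one_right (by positivity) h_small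

variable [NeZero q]

theorem isBigO_smoothedTheta_sub (ha : IsUnit a) :
    (fun x : ℝ ↦ smoothedTheta a x - (q.totient : ℝ)⁻¹ * (x ^ 2 / 2))
      =O[atTop] fun x ↦ x ^ 2 / Real.log x := by
  have h_powers : (fun x : ℝ ↦ ∑' n : ℕ, residueClass a n * max (1 - n / x) 0 -
      smoothedTheta a x / x) =O[atTop] fun x ↦ x / Real.log x := by
    refine .trans (.of_bound 2 ?_) sqrt_mul_log_isBigO
    filter_upwards [eventually_ge_atTop 1] with x hx
    rw [Real.norm_of_nonneg (mul_nonneg (Real.sqrt_nonneg x) (Real.log_nonneg hx)), ← mul_assoc]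
    exact abs_tsum_residueClass_mul_max_sub_le a hx
  refine (((isBigO_refl (fun x : ℝ ↦ x) atTop).mul
    ((isBigO_tsum_residueClass_mul_max_sub ha).sub h_powers)).congr' ?_ ?_)
  · filter_upwards [eventually_gt_atTop 0] with x hx
    field_simp
    ring
  · exact .of_forall fun x ↦ by ring

theorem exists_abs_smoothedTheta_mul_sub_le (ha : IsUnit a) :
    ∃ C : ℝ, 0 < C ∧ ∀ᶠ x : ℝ in atTop, ∀ u : ℝ, 0 ≤ u → u ≤ 1 →
      |smoothedTheta a (x * u) - (q.totient : ℝ)⁻¹ * ((x * u) ^ 2 / 2)| ≤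
        C * (x ^ 2 / Real.log x) * (u * √u) := by
  obtain ⟨C, hC, h_bound⟩ := (isBigO_smoothedTheta_sub ha).exists_pos
  obtain ⟨x₀, h_bound⟩ := eventually_atTop.1 h_bound.bound
  refine ⟨2 * C + 2, by positivity, ?_⟩
  filter_upwards [eventually_sqrt_mul_log_sq_le_one, eventually_gt_atTop 1,
    Real.tendsto_log_atTop.eventually_ge_atTop 1, Real.tendsto_sqrt_atTop.eventually_ge_atTop x₀,
    Real.tendsto_sqrt_atTop.eventually_gt_atTop 1] with x h_small hx hx_log hx₀ hx_sqrt u hu hu_one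
  rcases le_total (x * u) (√x) with hxu | hxu
  · refine (abs_smoothedTheta_sub_le_of_le_sqrt hx_log hx.le hu hu_one
      (h_small u hu hxu)).trans ?_
    rw [mul_assoc, mul_assoc]
    gcongr
    linarith
  · have h_log : Real.log x / 2 ≤ Real.log (x * u) := by
      rw [← Real.log_sqrt (by linarith)]
      exact Real.log_le_log (by linarith) hxu
    have h_pos : 0 < Real.log x / 2 := by linarith
    have h_xu := h_bound (x * u) (hx₀.trans hxu)
    rw [Real.norm_eq_abs, Real.norm_of_nonneg
      (div_nonneg (sq_nonneg _) (h_pos.le.trans h_log))] at h_xu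
    calc _ ≤ C * ((x * u) ^ 2 / Real.log (x * u)) := h_xu
      _ ≤ C * ((x * u) ^ 2 / (Real.log x / 2)) := by gcongr
      _ = 2 * C * (x ^ 2 / Real.log x) * u ^ 2 := by field_simp
      _ ≤ (2 * C + 2) * (x ^ 2 / Real.log x) * (u * √u) := by
        gcongr
        · linarith
        · exact sq_le_mul_sqrt hu hu_one

lemma eventually_le_log_mul_card_primesInClass (ha : IsUnit a) :
    ∀ᶠ y : ℝ in atTop, y ≤ 4 * q.totient * Real.log y * (primesInClass a y).card := by
  obtain ⟨C, h_bound⟩ := (isBigO_smoothedTheta_sub ha).bound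
  have h_totient : (0 : ℝ) < q.totient := by
    exact_mod_cast Nat.totient_pos.2 (NeZero.pos q)
  filter_upwards [h_bound, eventually_gt_atTop 1,
    Real.tendsto_log_atTop.eventually_ge_atTop (4 * C * q.totient)] with y h hy hy_log
  have h_log := Real.log_pos hy
  rw [Real.norm_eq_abs, Real.norm_of_nonneg (by positivity)] at h
  have h_error : C * (y ^ 2 / Real.log y) ≤ (q.totient : ℝ)⁻¹ * (y ^ 2 / 4) := by
    field_simp
    linarith
  have h_theta : smoothedTheta a y ≤ (primesInClass a y).card * (Real.log y * y) := by
    rw [← nsmul_eq_mul, smoothedTheta]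
    refine Finset.sum_le_card_nsmul _ _ _ fun p hp ↦ ?_
    have hp_one := one_le_of_mem_primesInClass hp
    have hpy := (mem_primesInClass.1 hp).1
    exact mul_le_mul (Real.log_le_log (by linarith) hpy) (by linarith) (by linarith) h_log.le
  have h_sq : (q.totient : ℝ)⁻¹ * (y ^ 2 / 4) ≤
      (primesInClass a y).card * (Real.log y * y) := by
    linarith [(abs_le.1 h).1]
  rw [inv_mul_le_iff₀ h_totient] at h_sq
  exact le_of_mul_le_mul_right (by linarith) (one_pos.trans hy)

end PrimesInClass

/-! ### Representations by `x² + xy + y²` -/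

section EisensteinForm

/-- The ring `ℤ[ω]` with `ω² = ω - 1`, that is the Eisenstein integers presented by a primitive
*sixth* root of unity, so that the norm of `x + y ω` is exactly `x² + x y + y²`. -/
abbrev EisensteinInt : Type := QuadraticAlgebra ℤ (-1) 1

namespace EisensteinInt

/-- The Eisenstein integers of norm `n`, i.e. the representations of `n` by `x² + x y + y²`. -/
def normFiber (n : ℕ) : Set EisensteinInt := {z | z.norm = n}

/-- The number of representations of `n` by `x² + x y + y²`. -/
noncomputable def repCount (n : ℕ) : ℕ := (normFiber n).ncard

lemma norm_eq (z : EisensteinInt) : z.norm = z.re ^ 2 + z.re * z.im + z.im ^ 2 := by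
  rw [QuadraticAlgebra.norm_def]
  ring

lemma finite_normFiber (n : ℕ) : (normFiber n).Finite := by
  have h_box := (Set.finite_Icc (-(2 * n : ℤ)) (2 * n)).prod (Set.finite_Icc (-(2 * n : ℤ)) (2 * n))
  refine .of_finite_image (f := fun z ↦ (z.re, z.im)) (h_box.subset ?_) fun z _ w _ h ↦
    QuadraticAlgebra.ext (Prod.mk.inj h).1 (Prod.mk.inj h).2
  rintro _ ⟨z, hz : z.norm = n, rfl⟩
  rw [norm_eq] at hz
  have hn : (n : ℤ) ≤ n ^ 2 := by exact_mod_cast Nat.le_self_pow two_ne_zero n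
  have h_re : z.re ^ 2 ≤ (2 * n : ℤ) ^ 2 := by nlinarith [sq_nonneg (z.re + 2 * z.im)]
  have h_im : z.im ^ 2 ≤ (2 * n : ℤ) ^ 2 := by nlinarith [sq_nonneg (2 * z.re + z.im)]
  have h_nonneg : (0 : ℤ) ≤ 2 * n := by positivity
  exact ⟨abs_le.1 (abs_le_of_sq_le_sq h_re h_nonneg), abs_le.1 (abs_le_of_sq_le_sq h_im h_nonneg)⟩

lemma mem_nonZeroDivisors_of_norm_ne_zero {z : EisensteinInt} (hz : z.norm ≠ 0) :
    z ∈ nonZeroDivisors EisensteinInt :=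
  QuadraticAlgebra.norm_mem_nonZeroDivisors_iff.1 (mem_nonZeroDivisors_of_ne_zero hz)

lemma natCast_dvd_iff {m : ℕ} {z : EisensteinInt} :
    (m : EisensteinInt) ∣ z ↔ (m : ℤ) ∣ z.re ∧ (m : ℤ) ∣ z.im := by
  rw [← QuadraticAlgebra.algebraMap_dvd_iff, map_natCast]

lemma mul_star_eq_natCast {π : EisensteinInt} {m : ℕ} (hπ : π.norm = m) :
    π * star π = m := by
  rw [← QuadraticAlgebra.algebraMap_norm_eq_mul_star, hπ, map_natCast]

lemma ncard_normFiber_dvd {π : EisensteinInt} {m : ℕ} (hm : m ≠ 0) (hπ : π.norm = m) (n : ℕ) :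
    {w ∈ normFiber (m * n) | π ∣ w}.ncard = repCount n := by
  have hm' : (m : ℤ) ≠ 0 := by exact_mod_cast hm
  have h_image : {w ∈ normFiber (m * n) | π ∣ w} = (π * ·) '' normFiber n := by
    ext w
    constructor
    · rintro ⟨hw : _ = _, z, rfl⟩
      rw [map_mul, hπ, Nat.cast_mul] at hw
      exact ⟨z, mul_left_cancel₀ hm' hw, rfl⟩
    · rintro ⟨z, hz : z.norm = n, rfl⟩
      refine ⟨?_, dvd_mul_right π z⟩
      change QuadraticAlgebra.norm _ = _
      rw [map_mul, hπ, hz, Nat.cast_mul]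
  rw [h_image, Set.ncard_image_of_injective _ fun x y h ↦ ?_, repCount]
  exact (mul_cancel_left_mem_nonZeroDivisors
    (mem_nonZeroDivisors_of_norm_ne_zero (by rw [hπ]; exact hm'))).1 h

variable {p : ℕ} {π : EisensteinInt}

lemma dvd_of_dvd_im_star_mul (hp : p.Prime) (hπ : π.norm = p) {w : EisensteinInt}
    (h_im : (p : ℤ) ∣ (star π * w).im) : π ∣ w := by
  have hp' : Prime (p : ℤ) := Nat.prime_iff_prime_int.1 hp
  have h_re : (p : ℤ) ∣ (star π * w).re := by
    have h_norm : (star π * w).norm = p * w.norm := by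
      rw [map_mul, QuadraticAlgebra.norm_star, hπ]
    rw [norm_eq] at h_norm
    refine hp'.dvd_of_dvd_pow (n := 2) ?_
    rw [show (star π * w).re ^ 2 =
      p * w.norm - ((star π * w).re + (star π * w).im) * (star π * w).im by rw [← h_norm]; ring]
    exact dvd_sub (dvd_mul_right _ _) (h_im.mul_left _)
  obtain ⟨z, hz⟩ := natCast_dvd_iff.2 ⟨h_re, h_im⟩
  rw [← mul_star_eq_natCast hπ, mul_comm π, mul_assoc] at hz
  refine ⟨z, (mul_cancel_left_mem_nonZeroDivisors (mem_nonZeroDivisors_of_norm_ne_zero ?_)).1 hz⟩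
  rw [QuadraticAlgebra.norm_star, hπ]
  exact hp'.ne_zero

lemma dvd_or_star_dvd (hp : p.Prime) (hπ : π.norm = p) {w : EisensteinInt}
    (hw : (p : ℤ) ∣ w.norm) : π ∣ w ∨ star π ∣ w := by
  have h_identity : (star π * w).im * (π * w).im = π.norm * w.im ^ 2 - π.im ^ 2 * w.norm := by
    simp only [norm_eq, QuadraticAlgebra.im_mul, QuadraticAlgebra.re_star,
      QuadraticAlgebra.im_star]
    ring
  have h_dvd : (p : ℤ) ∣ (star π * w).im * (π * w).im := by
    rw [h_identity, hπ]
    exact dvd_sub (dvd_mul_right _ _) (hw.mul_left _)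
  refine ((Nat.prime_iff_prime_int.1 hp).dvd_or_dvd h_dvd).imp
    (dvd_of_dvd_im_star_mul hp hπ) fun h ↦ ?_
  exact dvd_of_dvd_im_star_mul hp (by rw [QuadraticAlgebra.norm_star, hπ]) (by rwa [star_star])

lemma repCount_three_mul (n : ℕ) : repCount (3 * n) = repCount n := by
  have h_norm : QuadraticAlgebra.norm (⟨1, 1⟩ : EisensteinInt) = (3 : ℕ) := by simp [norm_eq]
  have h_star : star (⟨1, 1⟩ : EisensteinInt) = ⟨1, 1⟩ * ⟨1, -1⟩ := by ext <;> simp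
  have h_all : {w ∈ normFiber (3 * n) | ⟨1, 1⟩ ∣ w} = normFiber (3 * n) := by
    refine Set.sep_eq_self_iff_mem_true.2 fun w (hw : w.norm = _) ↦ ?_
    have h_dvd := dvd_or_star_dvd (w := w) Nat.prime_three h_norm
      (by rw [hw]; exact_mod_cast dvd_mul_right 3 n)
    exact h_dvd.elim id fun h ↦ (Dvd.intro _ h_star.symm).trans h
  rw [repCount, ← h_all, ncard_normFiber_dvd three_ne_zero h_norm]

lemma mod_three_eq_one_of_sq_add_self_add_one [Fact p.Prime] (hp3 : p ≠ 3) {t : ZMod p}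
    (ht : t ^ 2 + t + 1 = 0) : p % 3 = 1 := by
  have hp : p.Prime := Fact.out
  have h_cube : t ^ 3 = 1 := by linear_combination (t - 1) * ht
  have ht_one : t ≠ 1 := by
    rintro rfl
    have h3 : ((3 : ℕ) : ZMod p) = 0 := by push_cast; linear_combination ht
    rw [ZMod.natCast_eq_zero_iff] at h3
    exact hp3 ((Nat.prime_dvd_prime_iff_eq hp Nat.prime_three).1 h3)
  have ht_zero : t ≠ 0 := by rintro rfl; norm_num at h_cube
  have h_order := ZMod.orderOf_dvd_card_sub_one ht_zero
  rw [orderOf_eq_prime (p := 3) h_cube ht_one] at h_order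
  have := hp.two_le
  omega

lemma natCast_dvd_of_dvd_norm (hp : p.Prime) (hp2 : p % 3 = 2) {w : EisensteinInt}
    (hw : (p : ℤ) ∣ w.norm) : (p : EisensteinInt) ∣ w := by
  have : Fact p.Prime := ⟨hp⟩
  have h_mod : (w.re : ZMod p) ^ 2 + w.re * w.im + (w.im : ZMod p) ^ 2 = 0 := by
    rw [norm_eq, ← ZMod.intCast_zmod_eq_zero_iff_dvd] at hw
    exact_mod_cast hw
  have h_im : (w.im : ZMod p) = 0 := by
    by_contra h_ne
    have h_root : ((w.re : ZMod p) / w.im) ^ 2 + (w.re : ZMod p) / w.im + 1 = 0 := by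
      field_simp
      linear_combination h_mod
    have := mod_three_eq_one_of_sq_add_self_add_one (by rintro rfl; norm_num at hp2) h_root
    omega
  have h_re : (w.re : ZMod p) = 0 := by
    simpa only [h_im, mul_zero, add_zero, ne_eq, OfNat.ofNat_ne_zero, not_false_eq_true,
      zero_pow, pow_eq_zero_iff] using h_mod
  exact natCast_dvd_iff.2 ⟨(ZMod.intCast_zmod_eq_zero_iff_dvd _ _).1 h_re,
    (ZMod.intCast_zmod_eq_zero_iff_dvd _ _).1 h_im⟩

lemma ncard_normFiber_natCast_dvd (hp : p ≠ 0) (n : ℕ) :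
    {w ∈ normFiber (p * (p * n)) | (p : EisensteinInt) ∣ w}.ncard = repCount n := by
  have h := ncard_normFiber_dvd (π := (p : EisensteinInt)) (pow_ne_zero 2 hp) (by simp) n
  rwa [sq, mul_assoc] at h

lemma normFiber_natCast_dvd_eq_empty (hp : p ≠ 0) {n : ℕ} (hn : ¬ p ∣ n) :
    {w ∈ normFiber (p * n) | (p : EisensteinInt) ∣ w} = ∅ := by
  refine Set.eq_empty_iff_forall_notMem.2 ?_
  rintro w ⟨hw : w.norm = _, h_dvd⟩
  have h_sq := map_dvd QuadraticAlgebra.norm h_dvd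
  rw [hw, QuadraticAlgebra.norm_natCast, sq] at h_sq
  exact hn (Nat.dvd_of_mul_dvd_mul_left (Nat.pos_of_ne_zero hp) (by exact_mod_cast h_sq))

lemma normFiber_natCast_dvd_eq_self (hp : p.Prime) (hp2 : p % 3 = 2) (n : ℕ) :
    {w ∈ normFiber (p * n) | (p : EisensteinInt) ∣ w} = normFiber (p * n) := by
  refine Set.sep_eq_self_iff_mem_true.2 fun w (hw : w.norm = _) ↦ ?_
  exact natCast_dvd_of_dvd_norm hp hp2 (by rw [hw]; exact_mod_cast dvd_mul_right p n)

lemma repCount_inert_sq_mul (hp : p.Prime) (hp2 : p % 3 = 2) (n : ℕ) :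
    repCount (p * (p * n)) = repCount n := by
  rw [repCount, ← normFiber_natCast_dvd_eq_self hp hp2, ncard_normFiber_natCast_dvd hp.ne_zero]

lemma repCount_inert_mul (hp : p.Prime) (hp2 : p % 3 = 2) {n : ℕ} (hn : ¬ p ∣ n) :
    repCount (p * n) = 0 := by
  rw [repCount, ← normFiber_natCast_dvd_eq_self hp hp2,
    normFiber_natCast_dvd_eq_empty hp.ne_zero hn, Set.ncard_empty]

lemma exists_sq_add_self_add_one_eq_zero [Fact p.Prime] (hp1 : p % 3 = 1) :
    ∃ c : ZMod p, c ^ 2 + c + 1 = 0 := by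
  have hp : p.Prime := Fact.out
  have h_card : 3 ∣ Fintype.card (ZMod p)ˣ := by
    rw [ZMod.card_units]
    have := hp.two_le
    omega
  obtain ⟨u, hu⟩ := exists_prime_orderOf_dvd_card 3 h_card
  have h_cube : (u : ZMod p) ^ 3 = 1 := by
    rw [← Units.val_pow_eq_pow_val, ← hu, pow_orderOf_eq_one, Units.val_one]
  have h_ne : (u : ZMod p) ≠ 1 := fun h ↦ by
    rw [Units.val_eq_one.1 h, orderOf_one] at hu
    norm_num at hu
  have h_mul : ((u : ZMod p) - 1) * ((u : ZMod p) ^ 2 + u + 1) = 0 := by linear_combination h_cube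
  exact ⟨u, (mul_eq_zero.1 h_mul).resolve_left (sub_ne_zero.2 h_ne)⟩

-- Thue's lemma: two of the more than `p` values `x - c y` with `0 ≤ x, y ≤ √p` agree modulo `p`.
lemma exists_intCast_eq_mul_of_sq_lt (hp : p.Prime) (c : ZMod p) :
    ∃ x y : ℤ, (x ≠ 0 ∨ y ≠ 0) ∧ x ^ 2 < p ∧ y ^ 2 < p ∧ (x : ZMod p) = c * y := by
  have : NeZero p := ⟨hp.ne_zero⟩
  have h_sqrt : p.sqrt ^ 2 < p := by
    refine (Nat.sqrt_le' p).lt_of_ne fun h ↦ ?_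
    exact hp.prime.irreducible.not_isSquare ⟨p.sqrt, by rw [← sq, h]⟩
  obtain ⟨s, -, t, -, h_ne, h_eq⟩ := Finset.exists_ne_map_eq_of_card_lt_of_maps_to
    (s := (Finset.univ : Finset (Fin (p.sqrt + 1) × Fin (p.sqrt + 1))))
    (t := (Finset.univ : Finset (ZMod p))) (f := fun z ↦ ((z.1 : ℕ) : ZMod p) - c * (z.2 : ℕ))
    (by simpa using Nat.lt_succ_sqrt p) fun _ _ ↦ Finset.mem_coe.2 (Finset.mem_univ _)
  have h_small (i j : Fin (p.sqrt + 1)) : ((i : ℕ) - (j : ℕ) : ℤ) ^ 2 < p := by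
    have hi := i.2
    have hj := j.2
    calc ((i : ℕ) - (j : ℕ) : ℤ) ^ 2 ≤ (p.sqrt : ℤ) ^ 2 := sq_le_sq' (by omega) (by omega)
      _ < p := by exact_mod_cast h_sqrt
  refine ⟨(s.1 : ℕ) - (t.1 : ℕ), (s.2 : ℕ) - (t.2 : ℕ), ?_, h_small _ _, h_small _ _, ?_⟩
  · contrapose! h_ne
    exact Prod.ext (Fin.ext (by omega)) (Fin.ext (by omega))
  · push_cast
    linear_combination h_eq

lemma norm_pos {z : EisensteinInt} (hz : z.re ≠ 0 ∨ z.im ≠ 0) : 0 < z.norm := by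
  rw [norm_eq]
  rcases hz with h | h
  · nlinarith [sq_nonneg (z.re + 2 * z.im), sq_pos_of_ne_zero h]
  · nlinarith [sq_nonneg (2 * z.re + z.im), sq_pos_of_ne_zero h]

lemma norm_ne_two_mul (hp : p % 2 = 1) (z : EisensteinInt) : z.norm ≠ p * 2 := fun h ↦ by
  have h_two : ((2 : ℕ) : EisensteinInt) ∣ z :=
    natCast_dvd_of_dvd_norm Nat.prime_two rfl (by rw [h]; exact dvd_mul_left _ _)
  have h_four := map_dvd QuadraticAlgebra.norm h_two
  rw [QuadraticAlgebra.norm_natCast, h] at h_four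
  omega

lemma exists_norm_eq (hp : p.Prime) (hp1 : p % 3 = 1) : ∃ π : EisensteinInt, π.norm = p := by
  have : Fact p.Prime := ⟨hp⟩
  obtain ⟨c, hc⟩ := exists_sq_add_self_add_one_eq_zero hp1
  obtain ⟨x, y, h_ne, hx, hy, hxy⟩ := exists_intCast_eq_mul_of_sq_lt hp c
  set z : EisensteinInt := ⟨x, y⟩
  have h_pos : 0 < z.norm := norm_pos h_ne
  have h_dvd : (p : ℤ) ∣ z.norm := by
    rw [norm_eq, ← ZMod.intCast_zmod_eq_zero_iff_dvd]
    push_cast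
    rw [hxy]
    linear_combination (y : ZMod p) ^ 2 * hc
  have h_lt : z.norm < p * 3 := by
    rw [norm_eq]
    nlinarith [sq_nonneg (x - y)]
  obtain ⟨m, hm⟩ := h_dvd
  rw [hm] at h_pos h_lt
  have hm_pos : 0 < m := pos_of_mul_pos_right h_pos (Nat.cast_nonneg p)
  have hm_lt : m < 3 := lt_of_mul_lt_mul_left h_lt (Nat.cast_nonneg p)
  have hp_odd : p % 2 = 1 := hp.eq_two_or_odd.resolve_left (by rintro rfl; norm_num at hp1)
  have hm_ne : m ≠ 2 := by
    rintro rfl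
    exact norm_ne_two_mul hp_odd z hm
  exact ⟨z, by rw [hm, show m = 1 by omega, mul_one]⟩

lemma not_dvd_im_of_norm_eq (hp : p.Prime) (hπ : π.norm = p) : ¬ (p : ℤ) ∣ π.im := fun h_im ↦ by
  have hp' : Prime (p : ℤ) := Nat.prime_iff_prime_int.1 hp
  have h_re : (p : ℤ) ∣ π.re := by
    rw [norm_eq] at hπ
    refine hp'.dvd_of_dvd_pow (n := 2) ?_
    rw [show π.re ^ 2 = p - (π.re + π.im) * π.im by rw [← hπ]; ring]
    exact dvd_sub_self_left.2 (h_im.mul_left _)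
  have h_sq := map_dvd QuadraticAlgebra.norm (natCast_dvd_iff.2 ⟨h_re, h_im⟩)
  rw [hπ, QuadraticAlgebra.norm_natCast] at h_sq
  have h_le : p ^ 2 ≤ p ^ 1 := by
    rw [pow_one]
    exact Nat.le_of_dvd hp.pos (by exact_mod_cast h_sq)
  exact absurd h_le (Nat.pow_lt_pow_right hp.one_lt one_lt_two).not_ge

-- `p` divides `w (π - star π)`, and `π - star π` is `π.im` times an element of norm `3`.
lemma natCast_dvd_of_dvd_of_star_dvd (hp : p.Prime) (hp3 : p ≠ 3) (hπ : π.norm = p)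
    {w : EisensteinInt} (h_dvd : π ∣ w) (h_star_dvd : star π ∣ w) : (p : EisensteinInt) ∣ w := by
  have hp' : Prime (p : ℤ) := Nat.prime_iff_prime_int.1 hp
  have h_diff : (p : EisensteinInt) ∣ w * (π - star π) := by
    rw [← mul_star_eq_natCast hπ, mul_sub]
    exact dvd_sub (mul_comm π (star π) ▸ mul_dvd_mul_right h_star_dvd π)
      (mul_dvd_mul_right h_dvd _)
  have h_three : ¬ (p : ℤ) ∣ 3 := fun h ↦
    hp3 ((Nat.prime_dvd_prime_iff_eq hp Nat.prime_three).1 (by exact_mod_cast h))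
  have h_cancel {k : ℤ} (h : (p : ℤ) ∣ 3 * π.im * k) : (p : ℤ) ∣ k :=
    (hp'.dvd_or_dvd h).resolve_left fun h ↦
      (hp'.dvd_or_dvd h).elim h_three (not_dvd_im_of_norm_eq hp hπ)
  have h_scale : w * (π - star π) * ⟨1, -2⟩ = ⟨3 * π.im * w.re, 3 * π.im * w.im⟩ := by
    ext <;> simp <;> ring
  have h_mul := h_diff.mul_right ⟨1, -2⟩
  rw [h_scale, natCast_dvd_iff] at h_mul
  exact natCast_dvd_iff.2 ⟨h_cancel h_mul.1, h_cancel h_mul.2⟩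

lemma repCount_split_mul_add (hp : p.Prime) (hp1 : p % 3 = 1) (n : ℕ) :
    repCount (p * n) + {w ∈ normFiber (p * n) | (p : EisensteinInt) ∣ w}.ncard =
      2 * repCount n := by
  obtain ⟨π, hπ⟩ := exists_norm_eq hp hp1
  have hp3 : p ≠ 3 := by rintro rfl; norm_num at hp1
  have h_union : normFiber (p * n) =
      {w ∈ normFiber (p * n) | π ∣ w} ∪ {w ∈ normFiber (p * n) | star π ∣ w} := by
    rw [← Set.sep_or, eq_comm, Set.sep_eq_self_iff_mem_true]
    exact fun w (hw : w.norm = _) ↦ dvd_or_star_dvd hp hπ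
      (by rw [hw]; exact_mod_cast dvd_mul_right p n)
  have h_inter : {w ∈ normFiber (p * n) | (p : EisensteinInt) ∣ w} =
      {w ∈ normFiber (p * n) | π ∣ w} ∩ {w ∈ normFiber (p * n) | star π ∣ w} := by
    ext w
    rw [← Set.sep_and]
    refine and_congr_right fun _ ↦ ⟨fun h ↦ ?_, fun h ↦
      natCast_dvd_of_dvd_of_star_dvd hp hp3 hπ h.1 h.2⟩
    rw [← mul_star_eq_natCast hπ] at h
    exact ⟨(dvd_mul_right _ _).trans h, (dvd_mul_left _ _).trans h⟩
  have h_fin (α : EisensteinInt) : {w ∈ normFiber (p * n) | α ∣ w}.Finite :=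
    (finite_normFiber _).sep _
  have h := Set.ncard_union_add_ncard_inter _ _ (h_fin π) (h_fin (star π))
  have hπ_star : (star π).norm = p := by rw [QuadraticAlgebra.norm_star, hπ]
  rwa [← h_union, ← h_inter, ncard_normFiber_dvd hp.ne_zero hπ,
    ncard_normFiber_dvd hp.ne_zero hπ_star, ← two_mul, ← repCount] at h

lemma repCount_one : repCount 1 = 6 := by
  have h_units : normFiber 1 =
      ({⟨1, 0⟩, ⟨-1, 0⟩, ⟨0, 1⟩, ⟨0, -1⟩, ⟨1, -1⟩, ⟨-1, 1⟩} : Finset EisensteinInt) := by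
    ext ⟨x, y⟩
    simp only [normFiber, Set.mem_ofPred_eq, norm_eq, Nat.cast_one, Finset.coe_insert,
      Finset.coe_singleton, Set.mem_insert_iff, Set.mem_singleton_iff, QuadraticAlgebra.mk.injEq]
    constructor
    · intro h
      obtain ⟨hx, hx'⟩ : -1 ≤ x ∧ x ≤ 1 := by constructor <;> nlinarith [sq_nonneg (x + 2 * y)]
      obtain ⟨hy, hy'⟩ : -1 ≤ y ∧ y ≤ 1 := by constructor <;> nlinarith [sq_nonneg (2 * x + y)]
      interval_cases x <;> interval_cases y <;> simp_all
    · rintro (⟨rfl, rfl⟩ | ⟨rfl, rfl⟩ | ⟨rfl, rfl⟩ | ⟨rfl, rfl⟩ | ⟨rfl, rfl⟩ | ⟨rfl, rfl⟩) <;>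
        norm_num
  rw [repCount, h_units, Set.ncard_coe_finset]
  rfl

lemma repCount_three_pow_mul (m a : ℕ) : repCount (3 ^ a * m) = repCount m := by
  induction a with
  | zero => rw [pow_zero, one_mul]
  | succ a ih => rw [pow_succ', mul_assoc, repCount_three_mul, ih]

variable {m : ℕ}

lemma repCount_split_pow_mul (hp : p.Prime) (hp1 : p % 3 = 1) (hm : ¬ p ∣ m) (a : ℕ) :
    repCount (p ^ a * m) = (a + 1) * repCount m := by
  induction a using Nat.twoStepInduction with
  | zero => rw [pow_zero, one_mul, zero_add, one_mul]
  | one =>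
    have h := repCount_split_mul_add hp hp1 m
    rw [normFiber_natCast_dvd_eq_empty hp.ne_zero hm, Set.ncard_empty, add_zero] at h
    rwa [pow_one]
  | more a ih₀ ih₁ =>
    have h := repCount_split_mul_add hp hp1 (p ^ (a + 1) * m)
    rw [ih₁, pow_succ', mul_assoc, ncard_normFiber_natCast_dvd hp.ne_zero, ih₀] at h
    rw [pow_succ', pow_succ', mul_assoc, mul_assoc]
    linarith

lemma repCount_inert_pow_mul (hp : p.Prime) (hp2 : p % 3 = 2) (hm : ¬ p ∣ m) (a : ℕ) :
    repCount (p ^ a * m) = repCount m ∨ repCount (p ^ a * m) = 0 := by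
  induction a using Nat.twoStepInduction with
  | zero => exact .inl (by rw [pow_zero, one_mul])
  | one => exact .inr (by rw [pow_one, repCount_inert_mul hp hp2 hm])
  | more a ih₀ _ => rwa [pow_succ', pow_succ', mul_assoc, mul_assoc, repCount_inert_sq_mul hp hp2]

end EisensteinInt

/-- The arithmetic function `n ↦ ∏ (v_p(n) + 1)` over the primes `p ≡ 1 (mod 3)`; it agrees with
`fForm n` unless `fForm n = 0`. -/
noncomputable def splitDivisorCount (n : ℕ) : ℕ :=
  n.factorization.prod fun p a ↦ if p % 3 = 1 then a + 1 else 1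

lemma splitDivisorCount_prime_pow_mul {p m : ℕ} (hp : p.Prime) (hm : ¬ p ∣ m) (a : ℕ) :
    splitDivisorCount (p ^ a * m) = (if p % 3 = 1 then a + 1 else 1) * splitDivisorCount m := by
  have h_coprime : (p ^ a).Coprime m := ((Nat.Prime.coprime_iff_not_dvd hp).2 hm).pow_left a
  have h_disjoint : Disjoint (p ^ a).factorization.support m.factorization.support := by
    rw [Nat.support_factorization, Nat.support_factorization]
    exact h_coprime.disjoint_primeFactors
  rw [splitDivisorCount, Nat.factorization_mul_of_coprime h_coprime,
    Finsupp.prod_add_index_of_disjoint h_disjoint, hp.factorization_pow,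
    Finsupp.prod_single_index (by simp), splitDivisorCount]

lemma repCount_prime_pow_mul {p m : ℕ} (hp : p.Prime) (hm : ¬ p ∣ m) (a : ℕ) :
    EisensteinInt.repCount (p ^ a * m) = (if p % 3 = 1 then a + 1 else 1) *
        EisensteinInt.repCount m ∨
      EisensteinInt.repCount (p ^ a * m) = 0 ∧ p % 3 ≠ 1 := by
  have h_mod : p % 3 = 0 ∨ p % 3 = 1 ∨ p % 3 = 2 := by omega
  rcases h_mod with h_zero | h_one | h_two
  · obtain rfl : 3 = p :=
      (Nat.prime_dvd_prime_iff_eq Nat.prime_three hp).1 (Nat.dvd_of_mod_eq_zero h_zero)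
    exact .inl (by rw [EisensteinInt.repCount_three_pow_mul, if_neg (by norm_num), one_mul])
  · exact .inl (by rw [EisensteinInt.repCount_split_pow_mul hp h_one hm, if_pos h_one])
  · rw [if_neg (by omega), one_mul]
    exact (EisensteinInt.repCount_inert_pow_mul hp h_two hm a).imp id fun h ↦ ⟨h, by omega⟩

lemma repCount_eq_or (n : ℕ) (hn : n ≠ 0) :
    EisensteinInt.repCount n = 6 * splitDivisorCount n ∨
      EisensteinInt.repCount n = 0 ∧ ∃ p, p.Prime ∧ p ∣ n ∧ p % 3 ≠ 1 := by
  induction n using Nat.recOnPrimePow with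
  | zero => exact absurd rfl hn
  | one => exact .inl (by simp [EisensteinInt.repCount_one, splitDivisorCount])
  | prime_pow_mul m p a hp hm ha ih =>
    have hp_dvd : p ∣ p ^ a * m := (dvd_pow_self p ha.ne').mul_right m
    rcases repCount_prime_pow_mul hp hm a with h | ⟨h, hp3⟩
    · rw [h, splitDivisorCount_prime_pow_mul hp hm]
      rcases ih (right_ne_zero_of_mul hn) with h_eq | ⟨h_zero, q, hq, hqm, hq3⟩
      · exact .inl (by rw [h_eq, mul_left_comm])
      · exact .inr ⟨by rw [h_zero, mul_zero], q, hq, hqm.mul_left _, hq3⟩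
    · exact .inr ⟨h, p, hp, hp_dvd, hp3⟩

lemma fForm_eq_repCount_div {n : ℕ} (hn : n ≠ 0) : fForm n = EisensteinInt.repCount n / 6 := by
  rw [fForm, if_neg hn, EisensteinInt.repCount, ← Nat.card_coe_set_eq]
  congr 1
  refine Nat.card_congr ((QuadraticAlgebra.equivProd (-1) 1).symm.subtypeEquiv fun z ↦ ?_)
  rw [EisensteinInt.normFiber, Set.mem_ofPred_eq, EisensteinInt.norm_eq]
  rfl

lemma fForm_eq_splitDivisorCount_or_eq_zero {n : ℕ} (hn : n ≠ 0) :
    fForm n = splitDivisorCount n ∨ fForm n = 0 := by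
  rw [fForm_eq_repCount_div hn]
  rcases repCount_eq_or n hn with h | ⟨h, -⟩ <;> omega

lemma fForm_eq_splitDivisorCount {n : ℕ} (hn : n ≠ 0) (h : ∀ p, p.Prime → p ∣ n → p % 3 = 1) :
    fForm n = splitDivisorCount n := by
  rcases repCount_eq_or n hn with h_eq | ⟨-, p, hp, h_dvd, hp3⟩
  · rw [fForm_eq_repCount_div hn, h_eq, Nat.mul_div_cancel_left _ (by norm_num)]
  · exact absurd (h p hp h_dvd) hp3

end EisensteinForm

/-! ### The increments `log (1 + 1 / (l + 1))` -/

section LogRatio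

/-- The increment `log (l + 2) - log (l + 1)`: raising an exponent from `l` to `l + 1` multiplies a
divisor count by `(l + 2) / (l + 1)`. -/
noncomputable def logRatio (l : ℕ) : ℝ := Real.log (1 + 1 / ((l : ℝ) + 1))

/-- The constant `∑ log (1 + 1 / l) ^ 2`, so that `cBEFS ^ 2 = 8 * logRatioSqSum`. -/
noncomputable def logRatioSqSum : ℝ := ∑' l : ℕ, logRatio l ^ 2

lemma logRatio_pos (l : ℕ) : 0 < logRatio l :=
  Real.log_pos (lt_add_of_pos_right 1 (by positivity))

lemma logRatio_le (l : ℕ) : logRatio l ≤ 1 / ((l : ℝ) + 1) := by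
  have h := Real.log_le_sub_one_of_pos (x := 1 + 1 / ((l : ℝ) + 1)) (by positivity)
  rwa [add_sub_cancel_left] at h

lemma logRatio_le_one (l : ℕ) : logRatio l ≤ 1 :=
  (logRatio_le l).trans (div_le_one_of_le₀ (by linarith [l.cast_nonneg (α := ℝ)]) (by positivity))

lemma logRatio_antitone : Antitone logRatio := fun k l hkl ↦ by
  have hkl' : (k : ℝ) ≤ l := by exact_mod_cast hkl
  exact Real.log_le_log (by positivity) (by gcongr)

lemma sum_range_logRatio (b : ℕ) : ∑ l ∈ Finset.range b, logRatio l = Real.log (b + 1) := by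
  induction b with
  | zero => simp
  | succ b ih =>
    rw [Finset.sum_range_succ, ih, logRatio, ← Real.log_mul (by positivity) (by positivity)]
    congr 1
    push_cast
    field_simp

lemma logRatio_mul_sqrt_nonneg (l : ℕ) : 0 ≤ logRatio l * √(logRatio l) :=
  mul_nonneg (logRatio_pos l).le (Real.sqrt_nonneg _)

lemma summable_logRatio_mul_sqrt : Summable fun l ↦ logRatio l * √(logRatio l) := by
  refine .of_nonneg_of_le logRatio_mul_sqrt_nonneg (fun l ↦ ?_)
    (summable_nat_add_one_rpow (p := 3 / 2) (by norm_num))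
  have h_pos : (0 : ℝ) < l + 1 := by positivity
  calc logRatio l * √(logRatio l) ≤ 1 / ((l : ℝ) + 1) * √(1 / ((l : ℝ) + 1)) := by
        gcongr <;> exact logRatio_le l
    _ = ((l : ℝ) + 1) ^ (-(3 / 2) : ℝ) := by
        rw [Real.sqrt_eq_rpow, one_div, Real.inv_rpow h_pos.le, ← Real.rpow_neg_one,
          ← Real.rpow_neg h_pos.le, ← Real.rpow_add h_pos]
        norm_num

lemma exists_sum_range_logRatio_mul_sqrt_le :
    ∃ K, 0 < K ∧ ∀ N, ∑ l ∈ Finset.range N, logRatio l * √(logRatio l) ≤ K :=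
  ⟨∑' l, logRatio l * √(logRatio l),
    summable_logRatio_mul_sqrt.tsum_pos logRatio_mul_sqrt_nonneg 0
      (mul_pos (logRatio_pos 0) (Real.sqrt_pos.2 (logRatio_pos 0))),
    fun _ ↦ summable_logRatio_mul_sqrt.sum_le_tsum _ fun l _ ↦ logRatio_mul_sqrt_nonneg l⟩

lemma summable_logRatio_sq : Summable fun l ↦ logRatio l ^ 2 :=
  .of_nonneg_of_le (fun _ ↦ sq_nonneg _)
    (fun l ↦ sq_le_mul_sqrt (logRatio_pos l).le (logRatio_le_one l)) summable_logRatio_mul_sqrt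

lemma logRatioSqSum_pos : 0 < logRatioSqSum :=
  summable_logRatio_sq.tsum_pos (fun _ ↦ sq_nonneg _) 0 (pow_pos (logRatio_pos 0) 2)

lemma sum_range_logRatio_sq_le (N : ℕ) :
    ∑ l ∈ Finset.range N, logRatio l ^ 2 ≤ logRatioSqSum :=
  summable_logRatio_sq.sum_le_tsum _ fun _ _ ↦ sq_nonneg _

lemma logRatio_sq_add_le (M : ℕ) :
    logRatio (M + 1) ^ 2 + 1 / ((M : ℝ) + 1 + 1) ≤ 1 / ((M : ℝ) + 1) := by
  have h_le := logRatio_le (M + 1)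
  push_cast at h_le
  calc logRatio (M + 1) ^ 2 + 1 / ((M : ℝ) + 1 + 1)
      ≤ (1 / ((M : ℝ) + 1 + 1)) ^ 2 + 1 / ((M : ℝ) + 1 + 1) := by
        gcongr
        exact (logRatio_pos _).le
    _ ≤ 1 / ((M : ℝ) + 1) := by
        rw [← sub_nonneg]
        have h_eq : 1 / ((M : ℝ) + 1) - ((1 / ((M : ℝ) + 1 + 1)) ^ 2 + 1 / ((M : ℝ) + 1 + 1)) =
            1 / (((M : ℝ) + 1) * ((M : ℝ) + 1 + 1) ^ 2) := by
          field_simp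
          ring
        rw [h_eq]
        positivity

lemma logRatioSqSum_sub_inv_le {N : ℕ} (hN : N ≠ 0) :
    logRatioSqSum - 1 / N ≤ ∑ l ∈ Finset.range N, logRatio l ^ 2 := by
  obtain ⟨M, rfl⟩ := Nat.exists_eq_succ_of_ne_zero hN
  have h_antitone : Antitone fun M : ℕ ↦
      ∑ l ∈ Finset.range (M + 1), logRatio l ^ 2 + 1 / ((M : ℝ) + 1) := by
    refine antitone_nat_of_succ_le fun M ↦ ?_
    rw [Finset.sum_range_succ _ (M + 1), add_assoc]
    push_cast
    gcongr
    exact logRatio_sq_add_le M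
  have h_lim := (((tendsto_add_atTop_iff_nat 1).2 summable_logRatio_sq.hasSum.tendsto_sum_nat).add
    (tendsto_one_div_add_atTop_nhds_zero_nat (𝕜 := ℝ)))
  rw [add_zero] at h_lim
  have h := h_antitone.le_of_tendsto h_lim M
  push_cast
  exact sub_le_iff_le_add.2 h

end LogRatio

/-! ### The dual objective -/

section KnapsackDual

variable {q : ℕ} (a : ZMod q)

/-- The Lagrangian dual objective, at price `r`, of the knapsack problem whose items are the pairs
`(p, l)` with value `logRatio l` and cost `p`, where `p ≤ R` is a prime in the class `a` and
`l < N`. -/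
noncomputable def dualObjective (r R : ℝ) (N : ℕ) : ℝ :=
  ∑ p ∈ primesInClass a R, ∑ l ∈ Finset.range N, max (logRatio l - r * p) 0

variable {a} {x R u : ℝ}

lemma dualObjective_nonneg (r : ℝ) (N : ℕ) : 0 ≤ dualObjective a r R N :=
  Finset.sum_nonneg fun _ _ ↦ Finset.sum_nonneg fun _ _ ↦ le_max_right _ _

lemma dualObjective_antitone (N : ℕ) : Antitone fun r ↦ dualObjective a r R N := fun r s hrs ↦ by
  dsimp only [dualObjective]
  gcongr

lemma sum_max_sub_le_smoothedCount_div (hx : 0 < x) :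
    ∑ p ∈ primesInClass a R, max (u - 1 / x * p) 0 ≤ smoothedCount a (x * u) / x := by
  have h_term (p : ℕ) :
      max (u - 1 / x * p) 0 = if (p : ℝ) ≤ x * u then (x * u - p) / x else 0 := by
    rw [show u - 1 / x * p = (x * u - p) / x by field_simp]
    split_ifs with hp
    · exact max_eq_left (div_nonneg (sub_nonneg.2 hp) hx.le)
    · exact max_eq_right (div_nonpos_of_nonpos_of_nonneg (by linarith) hx.le)
  rw [Finset.sum_congr rfl fun p _ ↦ h_term p, ← Finset.sum_filter, smoothedCount, Finset.sum_div]
  refine Finset.sum_le_sum_of_subset_of_nonneg (fun p hp ↦ ?_) fun p hp _ ↦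
    div_nonneg (sub_nonneg.2 (mem_primesInClass.1 hp).1) hx.le
  rw [Finset.mem_filter, mem_primesInClass] at hp
  exact mem_primesInClass.2 ⟨hp.2, hp.1.2⟩

lemma smoothedCount_div_le_sum_max_sub (hx : 0 < x) (hR : x * u ≤ R) :
    smoothedCount a (x * u) / x ≤ ∑ p ∈ primesInClass a R, max (u - 1 / x * p) 0 := by
  rw [smoothedCount, Finset.sum_div]
  calc ∑ p ∈ primesInClass a (x * u), (x * u - p) / x
      ≤ ∑ p ∈ primesInClass a (x * u), max (u - 1 / x * p) 0 :=
        Finset.sum_le_sum fun p _ ↦ le_max_of_le_left (by field_simp; rfl)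
    _ ≤ _ := by
        refine Finset.sum_le_sum_of_subset_of_nonneg (fun p hp ↦ ?_) fun _ _ _ ↦ le_max_right _ _
        rw [mem_primesInClass] at hp ⊢
        exact ⟨hp.1.trans hR, hp.2⟩

lemma smoothedCount_mul_div_le {z E : ℝ} (hx : 0 < x) (hz : 1 < z) (hu : 0 ≤ u)
    (h_theta : smoothedTheta a (x * u) ≤ x ^ 2 * E) :
    smoothedCount a (x * u) / x ≤ √z * √x * (u * √u) + x / Real.log z * E := by
  have h_log := Real.log_pos hz
  rw [div_le_iff₀ hx]
  calc smoothedCount a (x * u)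
      ≤ √z * (x * u * √(x * u)) + smoothedTheta a (x * u) / Real.log z :=
        smoothedCount_le (by positivity) hz
    _ ≤ √z * (x * u * (√x * √u)) + x ^ 2 * E / Real.log z := by
        rw [Real.sqrt_mul hx.le]
        gcongr
    _ = _ := by ring

lemma le_smoothedCount_mul_div {E : ℝ} (hx : 1 < x) (hu : u ≤ 1)
    (h_theta : x ^ 2 * E ≤ smoothedTheta a (x * u)) :
    x / Real.log x * E ≤ smoothedCount a (x * u) / x := by
  have hx0 : 0 < x := by linarith
  have h_log := Real.log_pos hx
  rw [le_div_iff₀ hx0]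
  calc x / Real.log x * E * x = x ^ 2 * E / Real.log x := by ring
    _ ≤ smoothedTheta a (x * u) / Real.log x := by gcongr
    _ ≤ _ := smoothedTheta_div_log_le (mul_le_of_le_one_right hx0.le hu) hx

variable [NeZero q]

lemma exists_smoothedTheta_mul_logRatio_mem_Icc (ha : IsUnit a) :
    ∃ C, 0 < C ∧ ∀ᶠ x in atTop, ∀ l, smoothedTheta a (x * logRatio l) ∈ Set.Icc
      (x ^ 2 * (logRatio l ^ 2 / (2 * q.totient) -
        C / Real.log x * (logRatio l * √(logRatio l))))
      (x ^ 2 * (logRatio l ^ 2 / (2 * q.totient) +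
        C / Real.log x * (logRatio l * √(logRatio l)))) := by
  obtain ⟨C, hC, h_abs⟩ := exists_abs_smoothedTheta_mul_sub_le ha
  refine ⟨C, hC, h_abs.mono fun x hx l ↦ ?_⟩
  have h := hx (logRatio l) (logRatio_pos l).le (logRatio_le_one l)
  rw [abs_sub_le_iff] at h
  constructor
  · linear_combination h.2
  · linear_combination h.1

lemma exists_dualObjective_le (ha : IsUnit a) :
    ∃ C, 0 < C ∧ ∀ᶠ x in atTop, ∀ z, 1 < z → ∀ R N, dualObjective a (1 / x) R N ≤
      C * √z * √x + x / Real.log z * (logRatioSqSum / (2 * q.totient) + C / Real.log x) := by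
  obtain ⟨C, hC, h_theta⟩ := exists_smoothedTheta_mul_logRatio_mem_Icc ha
  obtain ⟨K, hK, h_sum⟩ := exists_sum_range_logRatio_mul_sqrt_le
  refine ⟨(C + 1) * K, by positivity, ?_⟩
  filter_upwards [h_theta, eventually_gt_atTop 1] with x hx hx_one z hz R N
  have hx0 : 0 < x := by linarith
  have h_log_x := Real.log_pos hx_one
  have h_log_z := Real.log_pos hz
  calc dualObjective a (1 / x) R N
      ≤ ∑ l ∈ Finset.range N, (√z * √x * (logRatio l * √(logRatio l)) +
          x / Real.log z * (logRatio l ^ 2 / (2 * q.totient) +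
            C / Real.log x * (logRatio l * √(logRatio l)))) := by
        rw [dualObjective, Finset.sum_comm]
        exact Finset.sum_le_sum fun l _ ↦ (sum_max_sub_le_smoothedCount_div hx0).trans
          (smoothedCount_mul_div_le hx0 hz (logRatio_pos l).le (hx l).2)
    _ = √z * √x * ∑ l ∈ Finset.range N, logRatio l * √(logRatio l) +
          x / Real.log z * ((∑ l ∈ Finset.range N, logRatio l ^ 2) / (2 * q.totient) +
            C / Real.log x * ∑ l ∈ Finset.range N, logRatio l * √(logRatio l)) := by
        rw [Finset.sum_add_distrib, ← Finset.mul_sum, ← Finset.mul_sum, Finset.sum_add_distrib,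
          ← Finset.mul_sum, ← Finset.sum_div]
    _ ≤ √z * √x * K + x / Real.log z * (logRatioSqSum / (2 * q.totient) + C / Real.log x * K) := by
        gcongr
        exacts [h_sum N, sum_range_logRatio_sq_le N, h_sum N]
    _ ≤ _ := by
        rw [mul_assoc ((C + 1) * K), mul_comm ((C + 1) * K), div_mul_eq_mul_div C]
        gcongr <;> nlinarith

lemma exists_le_dualObjective (ha : IsUnit a) :
    ∃ C, 0 < C ∧ ∀ᶠ x in atTop, ∀ N : ℕ, N ≠ 0 → ∀ R, x ≤ R →
      x / Real.log x * ((logRatioSqSum - 1 / N) / (2 * q.totient) - C / Real.log x) ≤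
        dualObjective a (1 / x) R N := by
  obtain ⟨C, hC, h_theta⟩ := exists_smoothedTheta_mul_logRatio_mem_Icc ha
  obtain ⟨K, hK, h_sum⟩ := exists_sum_range_logRatio_mul_sqrt_le
  refine ⟨C * K, by positivity, ?_⟩
  filter_upwards [h_theta, eventually_gt_atTop 1] with x hx hx_one N hN R hR
  have hx0 : 0 < x := by linarith
  have h_log := Real.log_pos hx_one
  calc x / Real.log x * ((logRatioSqSum - 1 / N) / (2 * q.totient) - C * K / Real.log x)
      ≤ x / Real.log x * ((∑ l ∈ Finset.range N, logRatio l ^ 2) / (2 * q.totient) -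
          C / Real.log x * ∑ l ∈ Finset.range N, logRatio l * √(logRatio l)) := by
        rw [← div_mul_eq_mul_div]
        gcongr
        exacts [logRatioSqSum_sub_inv_le hN, h_sum N]
    _ = ∑ l ∈ Finset.range N, x / Real.log x * (logRatio l ^ 2 / (2 * q.totient) -
          C / Real.log x * (logRatio l * √(logRatio l))) := by
        rw [← Finset.mul_sum, Finset.sum_sub_distrib, ← Finset.mul_sum, ← Finset.sum_div]
    _ ≤ dualObjective a (1 / x) R N := by
        rw [dualObjective, Finset.sum_comm]
        exact Finset.sum_le_sum fun l _ ↦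
          (le_smoothedCount_mul_div hx_one (logRatio_le_one l) (hx l).1).trans
            (smoothedCount_div_le_sum_max_sub hx0
              ((mul_le_of_le_one_right hx0.le (logRatio_le_one l)).trans hR))

end KnapsackDual

/-! ### Upper bound for the iterated divisor count -/

section UpperBound

lemma natCast_zmod_three_eq_one_iff {p : ℕ} : (p : ZMod 3) = 1 ↔ p % 3 = 1 := by
  rw [← Nat.cast_one, ZMod.natCast_eq_natCast_iff']

/-- The prime factors of `n` congruent to `1` modulo `3`. -/
def splitPrimeFactors (n : ℕ) : Finset ℕ := {p ∈ n.primeFactors | p % 3 = 1}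

variable {n p : ℕ}

lemma prime_of_mem_splitPrimeFactors (hp : p ∈ splitPrimeFactors n) : p.Prime :=
  Nat.prime_of_mem_primeFactors (Finset.mem_filter.1 hp).1

lemma mod_three_of_mem_splitPrimeFactors (hp : p ∈ splitPrimeFactors n) : p % 3 = 1 :=
  (Finset.mem_filter.1 hp).2

lemma splitDivisorCount_eq_prod_of_subset {s : Finset ℕ} (hs : n.primeFactors ⊆ s) :
    splitDivisorCount n = ∏ p ∈ s with p % 3 = 1, (n.factorization p + 1) := by
  rw [splitDivisorCount, Finsupp.prod_of_support_subset _ hs _ (by simp), Finset.prod_filter]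

lemma splitDivisorCount_eq_prod (n : ℕ) :
    splitDivisorCount n = ∏ p ∈ splitPrimeFactors n, (n.factorization p + 1) :=
  splitDivisorCount_eq_prod_of_subset (Finset.Subset.refl _)

lemma splitDivisorCount_pos (n : ℕ) : 0 < splitDivisorCount n := by
  rw [splitDivisorCount_eq_prod]
  exact Finset.prod_pos fun _ _ ↦ Nat.succ_pos _

lemma splitDivisorCount_mul_le {a b : ℕ} (ha : a ≠ 0) (hb : b ≠ 0) :
    splitDivisorCount (a * b) ≤ splitDivisorCount a * splitDivisorCount b := by
  have h_factors := Nat.primeFactors_mul ha hb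
  rw [splitDivisorCount_eq_prod_of_subset (Finset.Subset.refl (a * b).primeFactors),
    splitDivisorCount_eq_prod_of_subset (h_factors ▸ Finset.subset_union_left),
    splitDivisorCount_eq_prod_of_subset (h_factors ▸ Finset.subset_union_right),
    ← Finset.prod_mul_distrib]
  refine Finset.prod_le_prod' fun p _ ↦ ?_
  rw [Nat.factorization_mul ha hb, Finsupp.add_apply]
  nlinarith

lemma splitDivisorCount_le_self (hn : n ≠ 0) : splitDivisorCount n ≤ n := by
  calc splitDivisorCount n ≤ n.factorization.prod (· ^ ·) := by
        rw [splitDivisorCount, Finsupp.prod, Finsupp.prod]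
        refine Finset.prod_le_prod' fun p hp ↦ ?_
        have h_lt := Nat.lt_pow_self (n := n.factorization p)
          (Nat.prime_of_mem_primeFactors (Nat.support_factorization n ▸ hp)).one_lt
        split_ifs <;> omega
    _ = n := Nat.prod_factorization_pow_eq_self hn

lemma log_splitDivisorCount_mul_le {a b : ℕ} (ha : a ≠ 0) (hb : b ≠ 0) :
    Real.log (splitDivisorCount (a * b)) ≤ Real.log a + Real.log (splitDivisorCount b) := by
  rw [← Real.log_mul (by exact_mod_cast ha) (by exact_mod_cast (splitDivisorCount_pos _).ne')]
  refine Real.log_le_log (by exact_mod_cast splitDivisorCount_pos _) ?_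
  exact_mod_cast (splitDivisorCount_mul_le ha hb).trans
    (Nat.mul_le_mul_right _ (splitDivisorCount_le_self ha))

lemma one_le_log_of_mod_three_eq_one (hp : p.Prime) (hp1 : p % 3 = 1) : 1 ≤ Real.log p := by
  have hp3 : (3 : ℝ) ≤ p := by
    have := hp.two_le
    exact_mod_cast (by omega : 3 ≤ p)
  rw [Real.le_log_iff_exp_le (by linarith)]
  linarith [Real.exp_one_lt_d9]

lemma factorization_mul_log_le (hn : n ≠ 0) (p : ℕ) :
    n.factorization p * Real.log p ≤ Real.log n := by
  rw [← Real.log_pow]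
  rcases (n.factorization p).eq_zero_or_pos with h_zero | h_pos
  · rw [h_zero, pow_zero, Real.log_one]
    exact Real.log_natCast_nonneg n
  · have hp : 0 < p := (Nat.prime_of_mem_primeFactors (Nat.support_factorization n ▸
      Finsupp.mem_support_iff.2 h_pos.ne')).pos
    exact Real.log_le_log (by positivity)
      (by exact_mod_cast Nat.le_of_dvd (Nat.pos_of_ne_zero hn) (Nat.ordProj_dvd n p))

lemma factorization_le_log (hn : n ≠ 0) (hp : p ∈ splitPrimeFactors n) :
    (n.factorization p : ℝ) ≤ Real.log n :=
  (le_mul_of_one_le_right (Nat.cast_nonneg _) (one_le_log_of_mod_three_eq_one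
    (prime_of_mem_splitPrimeFactors hp) (mod_three_of_mem_splitPrimeFactors hp))).trans
      (factorization_mul_log_le hn p)

lemma sum_factorization_mul_log_le {s : Finset ℕ} (hs : s ⊆ n.primeFactors) :
    ∑ p ∈ s, n.factorization p * Real.log p ≤ Real.log n := by
  rw [Real.log_nat_eq_sum_factorization n, Finsupp.sum, Nat.support_factorization]
  exact Finset.sum_le_sum_of_subset_of_nonneg hs fun p _ _ ↦
    mul_nonneg (Nat.cast_nonneg _) (Real.log_natCast_nonneg p)

lemma factorization_sum_mul_sub_one_le (hn : n ≠ 0) :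
    (n.factorization.sum fun q k ↦ (k : ℝ) * (q - 1)) ≤ n - 1 := by
  induction n using Nat.recOnMul with
  | zero => exact absurd rfl hn
  | one => simp
  | prime p hp => simp [hp.factorization]
  | mul a b iha ihb =>
    obtain ⟨ha, hb⟩ := mul_ne_zero_iff.1 hn
    have ha_one : (1 : ℝ) ≤ a := by exact_mod_cast Nat.pos_of_ne_zero ha
    have hb_one : (1 : ℝ) ≤ b := by exact_mod_cast Nat.pos_of_ne_zero hb
    rw [Nat.factorization_mul ha hb, Finsupp.sum_add_index' (by simp)
      fun q j k ↦ by push_cast; ring]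
    push_cast
    nlinarith [iha ha, ihb hb]

lemma prod_factorization_sum_mul_sub_one_le (s : Finset ℕ) (b : ℕ → ℕ) :
    ((∏ p ∈ s, (b p + 1)).factorization.sum fun q k ↦ (k : ℝ) * (q - 1)) ≤ ∑ p ∈ s, (b p : ℝ) := by
  rw [Nat.factorization_prod fun p _ ↦ (b p).succ_ne_zero,
    ← Finsupp.sum_finsetSum_index (by simp) fun q j k ↦ by push_cast; ring]
  refine Finset.sum_le_sum fun p _ ↦ ?_
  exact (factorization_sum_mul_sub_one_le (b p).succ_ne_zero).trans_eq (by push_cast; ring)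

lemma sum_log_add_one_le {s : Finset ℕ} {b : ℕ → ℕ} {y L : ℝ} (hy : 0 ≤ y) (hL : 0 ≤ L)
    (hs : ∀ p ∈ s, p ≠ 0 ∧ (p : ℝ) ≤ y) (hb : ∀ p ∈ s, (b p : ℝ) ≤ L) :
    ∑ p ∈ s, Real.log (b p + 1) ≤ y * Real.log (L + 1) := by
  have h_subset : s ⊆ Finset.Ioc 0 ⌊y⌋₊ := fun p hp ↦
    Finset.mem_Ioc.2 ⟨Nat.pos_of_ne_zero (hs p hp).1, (Nat.le_floor_iff' (hs p hp).1).2 (hs p hp).2⟩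
  have h_card : (s.card : ℝ) ≤ y := by
    refine le_trans ?_ (Nat.floor_le hy)
    exact_mod_cast (Finset.card_le_card h_subset).trans_eq (by simp)
  have h_log : 0 ≤ Real.log (L + 1) := Real.log_nonneg (by linarith)
  calc ∑ p ∈ s, Real.log (b p + 1) ≤ ∑ _p ∈ s, Real.log (L + 1) := by
        gcongr with p hp
        exact hb p hp
    _ = s.card * Real.log (L + 1) := by rw [Finset.sum_const, nsmul_eq_mul]
    _ ≤ _ := by gcongr

lemma log_add_one_le_mul_add_sum_max {b N : ℕ} (hb : b ≤ N) (c : ℝ) :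
    Real.log (b + 1) ≤ b * c + ∑ l ∈ Finset.range N, max (logRatio l - c) 0 := by
  rw [← sum_range_logRatio]
  calc ∑ l ∈ Finset.range b, logRatio l ≤ ∑ l ∈ Finset.range b, (c + max (logRatio l - c) 0) :=
        Finset.sum_le_sum fun l _ ↦ by linarith [le_max_left (logRatio l - c) 0]
    _ = b * c + ∑ l ∈ Finset.range b, max (logRatio l - c) 0 := by
        rw [Finset.sum_add_distrib, Finset.sum_const, Finset.card_range, nsmul_eq_mul]
    _ ≤ _ := by gcongr

lemma sum_filter_factorization_mul_le {m : ℕ} {S : ℝ} (hS : 1 < S) :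
    ∑ q ∈ splitPrimeFactors m with ¬ ((q : ℕ) : ℝ) ≤ S, (m.factorization q : ℝ) * q ≤
      S / (S - 1) * m.factorization.sum fun q k ↦ (k : ℝ) * (q - 1) := by
  have hS' : 0 < S - 1 := sub_pos.2 hS
  calc ∑ q ∈ splitPrimeFactors m with ¬ ((q : ℕ) : ℝ) ≤ S, (m.factorization q : ℝ) * q
      ≤ ∑ q ∈ splitPrimeFactors m with ¬ ((q : ℕ) : ℝ) ≤ S,
          S / (S - 1) * (m.factorization q * (q - 1)) := by
        refine Finset.sum_le_sum fun q hq ↦ ?_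
        have hq' : S < q := not_le.1 (Finset.mem_filter.1 hq).2
        have h_ratio : (q : ℝ) ≤ S / (S - 1) * (q - 1) := by
          rw [div_mul_eq_mul_div, le_div_iff₀ hS']
          linarith
        rw [mul_left_comm]
        gcongr
    _ ≤ _ := by
        rw [← Finset.mul_sum, Finsupp.sum, Nat.support_factorization]
        refine mul_le_mul_of_nonneg_left (Finset.sum_le_sum_of_subset_of_nonneg
          ((Finset.filter_subset _ _).trans (Finset.filter_subset _ _)) fun q hq _ ↦ ?_)
          (by positivity)
        have hq_one : (1 : ℝ) ≤ q := by exact_mod_cast (Nat.prime_of_mem_primeFactors hq).one_le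
        exact mul_nonneg (Nat.cast_nonneg _) (by linarith)

lemma sum_filter_log_add_one_le {m : ℕ} {S x : ℝ} (hm : m ≠ 0) (hS : 1 < S) (hx : 0 < x) :
    ∑ q ∈ splitPrimeFactors m with ¬ ((q : ℕ) : ℝ) ≤ S, Real.log (m.factorization q + 1) ≤
      S / (S - 1) * (m.factorization.sum fun q k ↦ (k : ℝ) * (q - 1)) / x +
        dualObjective (1 : ZMod 3) (1 / x) m m := by
  calc ∑ q ∈ splitPrimeFactors m with ¬ ((q : ℕ) : ℝ) ≤ S, Real.log (m.factorization q + 1)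
      ≤ ∑ q ∈ splitPrimeFactors m with ¬ ((q : ℕ) : ℝ) ≤ S, (m.factorization q * (1 / x * q) +
          ∑ l ∈ Finset.range m, max (logRatio l - 1 / x * q) 0) :=
        Finset.sum_le_sum fun q _ ↦
          log_add_one_le_mul_add_sum_max (Nat.factorization_lt q hm).le _
    _ = (∑ q ∈ splitPrimeFactors m with ¬ ((q : ℕ) : ℝ) ≤ S, (m.factorization q : ℝ) * q) / x +
          ∑ q ∈ splitPrimeFactors m with ¬ ((q : ℕ) : ℝ) ≤ S,
            ∑ l ∈ Finset.range m, max (logRatio l - 1 / x * q) 0 := by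
        rw [Finset.sum_add_distrib, Finset.sum_div]
        congr 1
        exact Finset.sum_congr rfl fun q _ ↦ by ring
    _ ≤ _ := by
        refine add_le_add
          (div_le_div_of_nonneg_right (sum_filter_factorization_mul_le hS) hx.le) ?_
        refine Finset.sum_le_sum_of_subset_of_nonneg (fun q hq ↦ ?_) fun _ _ _ ↦
          Finset.sum_nonneg fun _ _ ↦ le_max_right _ _
        have hq' := (Finset.mem_filter.1 hq).1
        exact mem_primesInClass.2
          ⟨by exact_mod_cast Nat.le_of_mem_primeFactors (Finset.mem_filter.1 hq').1,
            prime_of_mem_splitPrimeFactors hq',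
            natCast_zmod_three_eq_one_iff.2 (mod_three_of_mem_splitPrimeFactors hq')⟩

lemma log_splitDivisorCount_le {m : ℕ} {L S x : ℝ} (hm : m ≠ 0) (hL : Real.log m ≤ L)
    (hS : 1 < S) (hx : 0 < x) :
    Real.log (splitDivisorCount m) ≤ S * Real.log (L + 1) +
      S / (S - 1) * (m.factorization.sum fun q k ↦ (k : ℝ) * (q - 1)) / x +
        dualObjective (1 : ZMod 3) (1 / x) m m := by
  have h_small : ∑ q ∈ splitPrimeFactors m with ((q : ℕ) : ℝ) ≤ S,
      Real.log (m.factorization q + 1) ≤ S * Real.log (L + 1) := by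
    refine sum_log_add_one_le (by linarith) ((Real.log_natCast_nonneg m).trans hL)
      (fun q hq ↦ ?_) fun q hq ↦ ?_ <;> rw [Finset.mem_filter] at hq
    · exact ⟨(prime_of_mem_splitPrimeFactors hq.1).ne_zero, hq.2⟩
    · exact (factorization_le_log hm hq.1).trans hL
  rw [splitDivisorCount_eq_prod]
  push_cast
  rw [Real.log_prod fun q _ ↦ by positivity,
    ← Finset.sum_filter_add_sum_filter_not (splitPrimeFactors m) fun q : ℕ ↦ (q : ℝ) ≤ S, add_assoc]
  exact add_le_add h_small (sum_filter_log_add_one_le hm hS hx)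

lemma sum_filter_factorization_le {L P : ℝ} (hL : Real.log n ≤ L) (hP : 1 < P) :
    ∑ p ∈ splitPrimeFactors n with ¬ ((p : ℕ) : ℝ) ≤ P, (n.factorization p : ℝ) ≤
      L / Real.log P := by
  rw [le_div_iff₀ (Real.log_pos hP), Finset.sum_mul]
  calc ∑ p ∈ splitPrimeFactors n with ¬ ((p : ℕ) : ℝ) ≤ P, n.factorization p * Real.log P
      ≤ ∑ p ∈ splitPrimeFactors n with ¬ ((p : ℕ) : ℝ) ≤ P, n.factorization p * Real.log p := by
        refine Finset.sum_le_sum fun p hp ↦ ?_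
        have hPp := not_le.1 (Finset.mem_filter.1 hp).2
        gcongr
    _ ≤ Real.log n :=
        sum_factorization_mul_log_le ((Finset.filter_subset _ _).trans (Finset.filter_subset _ _))
    _ ≤ L := hL

-- The primes `p ≤ P` of `n` contribute little; the others have total multiplicity at most
-- `L / log P`, and this bounds the cost of the prime factors of the remaining divisor count.
lemma log_splitDivisorCount_splitDivisorCount_le {L P S x G : ℝ} (hn : n ≠ 0)
    (hL : Real.log n ≤ L) (hP : 1 < P) (hS : 1 < S) (hx : 0 < x)
    (hG : ∀ R N, dualObjective (1 : ZMod 3) (1 / x) R N ≤ G) :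
    Real.log (splitDivisorCount (splitDivisorCount n)) ≤ P * Real.log (L + 1) +
      S * Real.log (L + 1) + S / (S - 1) * (L / Real.log P) / x + G := by
  have hL0 : 0 ≤ L := (Real.log_natCast_nonneg n).trans hL
  set m₁ := ∏ p ∈ splitPrimeFactors n with ((p : ℕ) : ℝ) ≤ P, (n.factorization p + 1)
  set m₂ := ∏ p ∈ splitPrimeFactors n with ¬ ((p : ℕ) : ℝ) ≤ P, (n.factorization p + 1)
  have hm₁ : m₁ ≠ 0 := Finset.prod_ne_zero_iff.2 fun _ _ ↦ Nat.succ_ne_zero _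
  have hm₂ : m₂ ≠ 0 := Finset.prod_ne_zero_iff.2 fun _ _ ↦ Nat.succ_ne_zero _
  have h_mul : splitDivisorCount n = m₁ * m₂ := by
    rw [splitDivisorCount_eq_prod, Finset.prod_filter_mul_prod_filter_not]
  have h_split := h_mul ▸ log_splitDivisorCount_mul_le hm₁ hm₂
  have h_small : Real.log m₁ ≤ P * Real.log (L + 1) := by
    simp only [m₁, Nat.cast_prod, Nat.cast_add, Nat.cast_one]
    rw [Real.log_prod fun p _ ↦ by positivity]
    refine sum_log_add_one_le (by linarith) hL0 (fun p hp ↦ ?_) fun p hp ↦ ?_ <;>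
      rw [Finset.mem_filter] at hp
    · exact ⟨(prime_of_mem_splitPrimeFactors hp.1).ne_zero, hp.2⟩
    · exact (factorization_le_log hn hp.1).trans hL
  have h_log_m₂ : Real.log m₂ ≤ L := by
    refine (Real.log_le_log (by exact_mod_cast Nat.pos_of_ne_zero hm₂) ?_).trans hL
    exact_mod_cast (Nat.le_of_dvd (splitDivisorCount_pos n) (h_mul ▸ dvd_mul_left _ _)).trans
      (splitDivisorCount_le_self hn)
  have h_cost := (prod_factorization_sum_mul_sub_one_le _ _).trans
    (sum_filter_factorization_le hL hP)
  have h_ratio : 0 ≤ S / (S - 1) := div_nonneg (by linarith) (by linarith)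
  have h_large := log_splitDivisorCount_le hm₂ h_log_m₂ hS hx
  have h_cost' := div_le_div_of_nonneg_right (mul_le_mul_of_nonneg_left h_cost h_ratio) hx.le
  linarith [hG m₂ m₂]

end UpperBound

/-! ### Greedy construction -/

section Greedy

variable {ι : Type*}

lemma sum_max_sub_mul_eq_sum [DecidableEq ι] {s t : Finset ι} {v c : ι → ℝ} {r : ℝ} (hts : t ⊆ s)
    (hc : ∀ e ∈ s, 0 < c e) (h_in : ∀ e ∈ t, r ≤ v e / c e)
    (h_out : ∀ e ∈ s \ t, v e / c e ≤ r) :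
    ∑ e ∈ s, max (v e - r * c e) 0 = ∑ e ∈ t, v e - r * ∑ e ∈ t, c e := by
  have h_zero : ∑ e ∈ s \ t, max (v e - r * c e) 0 = 0 :=
    Finset.sum_eq_zero fun e he ↦ max_eq_right
      (sub_nonpos.2 ((div_le_iff₀ (hc e (Finset.sdiff_subset he))).1 (h_out e he)))
  rw [← Finset.sum_sdiff hts, h_zero, zero_add, Finset.mul_sum, ← Finset.sum_sub_distrib]
  exact Finset.sum_congr rfl fun e he ↦ max_eq_left
    (sub_nonneg.2 ((le_div_iff₀ (hc e (hts he))).1 (h_in e he)))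

-- The multiplier `r` is the value-to-cost ratio of the first item that no longer fits.
lemma exists_subset_sum_le_and_dual_le_sum {s : Finset ι} {v c : ι → ℝ} {B : ℝ}
    (hv : ∀ e ∈ s, 0 < v e) (hv_one : ∀ e ∈ s, v e ≤ 1) (hc : ∀ e ∈ s, 0 < c e) (hB : 0 ≤ B) :
    ∃ t ⊆ s, ∑ e ∈ t, c e ≤ B ∧ ∃ r, 0 ≤ r ∧
      r * B + ∑ e ∈ s, max (v e - r * c e) 0 - 1 ≤ ∑ e ∈ t, v e := by
  classical
  let greedy : Finset (Finset ι) := {t ∈ s.powerset |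
    (∀ a ∈ t, ∀ b ∈ s \ t, v b / c b ≤ v a / c a) ∧ ∑ e ∈ t, c e ≤ B}
  have mem_greedy {t : Finset ι} : t ∈ greedy ↔ t ⊆ s ∧
      (∀ a ∈ t, ∀ b ∈ s \ t, v b / c b ≤ v a / c a) ∧ ∑ e ∈ t, c e ≤ B := by
    rw [Finset.mem_filter, Finset.mem_powerset]
  obtain ⟨t, ht, h_max⟩ := Finset.exists_max_image greedy Finset.card
    ⟨∅, mem_greedy.2 (by simpa using hB)⟩
  obtain ⟨hts, ht_ratio, ht_cost⟩ := mem_greedy.1 ht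
  refine ⟨t, hts, ht_cost, ?_⟩
  rcases (s \ t).eq_empty_or_nonempty with h_empty | h_nonempty
  · obtain rfl := hts.antisymm (Finset.sdiff_eq_empty_iff_subset.1 h_empty)
    refine ⟨0, le_rfl, ?_⟩
    rw [Finset.sum_congr rfl fun e he ↦ max_eq_left (by linarith [hv e he])]
    simp
  obtain ⟨e, he, he_max⟩ := Finset.exists_max_image (s \ t) (fun b ↦ v b / c b) h_nonempty
  obtain ⟨hes, het⟩ := Finset.mem_sdiff.1 he
  have h_insert : insert e t ⊆ s := Finset.insert_subset hes hts
  have h_sdiff : s \ insert e t ⊆ s \ t :=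
    Finset.sdiff_subset_sdiff Finset.Subset.rfl (Finset.subset_insert e t)
  have h_over : B < ∑ a ∈ insert e t, c a := by
    by_contra! h_fits
    have := h_max _ (mem_greedy.2 ⟨h_insert, fun a ha b hb ↦ ?_, h_fits⟩)
    · rw [Finset.card_insert_of_notMem het] at this
      omega
    · rcases Finset.mem_insert.1 ha with rfl | ha
      · exact he_max b (h_sdiff hb)
      · exact ht_ratio a ha b (h_sdiff hb)
  have hr : 0 < v e / c e := div_pos (hv e hes) (hc e hes)
  refine ⟨v e / c e, hr.le, ?_⟩
  rw [sum_max_sub_mul_eq_sum h_insert hc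
    (fun a ha ↦ (Finset.mem_insert.1 ha).elim (fun h ↦ h ▸ le_rfl) fun ha ↦ ht_ratio a ha e he)
    fun b hb ↦ he_max b (h_sdiff hb), Finset.sum_insert het (f := v)]
  linarith [mul_lt_mul_of_pos_left h_over hr, hv_one e hes]

lemma splitDivisorCount_prod_pow {s : Finset ι} {P k : ι → ℕ}
    (hP : ∀ e ∈ s, (P e).Prime ∧ P e % 3 = 1) (h_inj : Set.InjOn P s) :
    splitDivisorCount (∏ e ∈ s, P e ^ k e) = ∏ e ∈ s, (k e + 1) := by
  classical
  induction s using Finset.induction_on with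
  | empty => simp [splitDivisorCount]
  | insert a s ha ih =>
    obtain ⟨ha_prime, ha_mod⟩ := hP a (Finset.mem_insert_self _ _)
    have hP' : ∀ e ∈ s, (P e).Prime ∧ P e % 3 = 1 := fun e he ↦ hP e (Finset.mem_insert_of_mem he)
    have h_not_dvd : ¬ P a ∣ ∏ e ∈ s, P e ^ k e := fun h_dvd ↦ by
      obtain ⟨e, he, h_dvd⟩ := (ha_prime.prime.dvd_finsetProd_iff _).1 h_dvd
      have h_eq := (Nat.prime_dvd_prime_iff_eq ha_prime (hP' e he).1).1
        (ha_prime.dvd_of_dvd_pow h_dvd)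
      exact ha (h_inj (by simp) (by simp [he]) h_eq ▸ he)
    rw [Finset.prod_insert ha, Finset.prod_insert ha,
      splitDivisorCount_prime_pow_mul ha_prime h_not_dvd, if_pos ha_mod,
      ih hP' (h_inj.mono (by simp))]

lemma mod_three_of_prime_dvd_prod_pow {s : Finset ι} {P k : ι → ℕ}
    (hP : ∀ e ∈ s, (P e).Prime ∧ P e % 3 = 1) {p : ℕ} (hp : p.Prime)
    (h_dvd : p ∣ ∏ e ∈ s, P e ^ k e) : p % 3 = 1 := by
  obtain ⟨e, he, h_dvd⟩ := (hp.prime.dvd_finsetProd_iff _).1 h_dvd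
  rw [(Nat.prime_dvd_prime_iff_eq hp (hP e he).1).1 (hp.dvd_of_dvd_pow h_dvd)]
  exact (hP e he).2

lemma log_prod_pow_le {s : Finset ι} {P k : ι → ℕ} {Y : ℝ}
    (hP : ∀ e ∈ s, P e ≠ 0 ∧ (P e : ℝ) ≤ Y) :
    Real.log (∏ e ∈ s, P e ^ k e : ℕ) ≤ (∑ e ∈ s, (k e : ℝ)) * Real.log Y := by
  push_cast
  rw [Real.log_prod fun e he ↦ pow_ne_zero _ (by exact_mod_cast (hP e he).1), Finset.sum_mul]
  refine Finset.sum_le_sum fun e he ↦ ?_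
  have hP_pos : (0 : ℝ) < P e := by exact_mod_cast Nat.pos_of_ne_zero (hP e he).1
  rw [Real.log_pow]
  gcongr
  exact (hP e he).2

lemma sum_logRatio_le_log_card_add_one (s : Finset ℕ) :
    ∑ l ∈ s, logRatio l ≤ Real.log (s.card + 1) := by
  rw [← sum_range_logRatio]
  induction s using Finset.induction_on_max with
  | empty => simp
  | insert a s ha ih =>
    have has : a ∉ s := fun h ↦ lt_irrefl _ (ha a h)
    have h_card : s.card ≤ a := by
      simpa using Finset.card_le_card fun x hx ↦ Finset.mem_range.2 (ha x hx)
    rw [Finset.sum_insert has, Finset.card_insert_of_notMem has, Finset.sum_range_succ]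
    linarith [logRatio_antitone h_card]

lemma sum_logRatio_le_log_splitDivisorCount_prod {s : Finset (ℕ × ℕ)}
    (hs : ∀ e ∈ s, e.1.Prime ∧ e.1 % 3 = 1) :
    ∑ e ∈ s, logRatio e.2 ≤ Real.log (splitDivisorCount (∏ e ∈ s, e.1)) := by
  have h_count : splitDivisorCount (∏ e ∈ s, e.1) =
      ∏ q ∈ s.image Prod.fst, ({e ∈ s | e.1 = q}.card + 1) := by
    rw [Finset.prod_comp (fun q ↦ q) Prod.fst]
    refine splitDivisorCount_prod_pow (fun q hq ↦ ?_) Function.injective_id.injOn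
    obtain ⟨e, he, rfl⟩ := Finset.mem_image.1 hq
    exact hs e he
  rw [h_count]
  push_cast
  rw [Real.log_prod fun q _ ↦ by positivity,
    ← Finset.sum_fiberwise_of_maps_to fun e he ↦ Finset.mem_image_of_mem Prod.fst he]
  refine Finset.sum_le_sum fun q _ ↦ ?_
  have h_inj : Set.InjOn Prod.snd (SetLike.coe ({e ∈ s | e.1 = q} : Finset (ℕ × ℕ))) :=
    fun e he e' he' h ↦
      Prod.ext ((Finset.mem_filter.1 he).2.trans (Finset.mem_filter.1 he').2.symm) h
  have h_le := sum_logRatio_le_log_card_add_one (({e ∈ s | e.1 = q} : Finset _).image Prod.snd)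
  rwa [Finset.card_image_of_injOn h_inj, Finset.sum_image h_inj] at h_le

lemma prime_and_mod_three_of_mem_primesInClass {p : ℕ} {y : ℝ}
    (hp : p ∈ primesInClass (1 : ZMod 3) y) : p.Prime ∧ p % 3 = 1 :=
  ⟨(mem_primesInClass.1 hp).2.1, natCast_zmod_three_eq_one_iff.1 (mem_primesInClass.1 hp).2.2⟩

-- With items `e = (q, l)` and distinct primes `P e`, the witness is `n = ∏ P e ^ (q - 1)`, whose
-- divisor count is the product of the chosen `q`.
lemma exists_dualObjective_le_log_splitDivisorCount {R Y B L : ℝ} {N : ℕ} (hB : 0 ≤ B)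
    (hY : 1 ≤ Y) (h_card : (primesInClass (1 : ZMod 3) R).card * N ≤
      (primesInClass (1 : ZMod 3) Y).card) (hBL : B * Real.log Y ≤ L) :
    ∃ n : ℕ, n ≠ 0 ∧ Real.log n ≤ L ∧ (∀ p, p.Prime → p ∣ n → p % 3 = 1) ∧
      (∀ p, p.Prime → p ∣ splitDivisorCount n → p % 3 = 1) ∧ ∃ r, 0 ≤ r ∧
        r * B + dualObjective (1 : ZMod 3) r R N - 1 ≤
          Real.log (splitDivisorCount (splitDivisorCount n)) := by
  have h_item : ∀ e ∈ primesInClass (1 : ZMod 3) R ×ˢ Finset.range N, e.1.Prime ∧ e.1 % 3 = 1 :=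
    fun e he ↦ prime_and_mod_three_of_mem_primesInClass (Finset.mem_product.1 he).1
  obtain ⟨s, hs, h_cost, r, hr, h_value⟩ := exists_subset_sum_le_and_dual_le_sum
    (s := primesInClass (1 : ZMod 3) R ×ˢ Finset.range N) (v := fun e ↦ logRatio e.2)
    (c := fun e ↦ (e.1 : ℝ)) (fun e _ ↦ logRatio_pos e.2) (fun e _ ↦ logRatio_le_one e.2)
    (fun e he ↦ by exact_mod_cast (h_item e he).1.pos) hB
  have h_card_le : s.card ≤ (primesInClass (1 : ZMod 3) Y).card :=
    (Finset.card_le_card hs).trans (by rwa [Finset.card_product, Finset.card_range])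
  obtain ⟨P, hP_mem, hP_inj⟩ := s.finite_toSet.exists_injOn_of_encard_le
    (t := SetLike.coe (primesInClass (1 : ZMod 3) Y))
    (by simpa only [Set.encard_coe_eq_coe_finsetCard, Nat.cast_le])
  have hP : ∀ e ∈ s, (P e).Prime ∧ P e % 3 = 1 := fun e he ↦
    prime_and_mod_three_of_mem_primesInClass (hP_mem he)
  have h_count : splitDivisorCount (∏ e ∈ s, P e ^ (e.1 - 1)) = ∏ e ∈ s, e.1 := by
    rw [splitDivisorCount_prod_pow hP hP_inj]
    exact Finset.prod_congr rfl fun e he ↦ Nat.sub_add_cancel (h_item e (hs he)).1.one_le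
  refine ⟨∏ e ∈ s, P e ^ (e.1 - 1),
    Finset.prod_ne_zero_iff.2 fun e he ↦ pow_ne_zero _ (hP e he).1.ne_zero, ?_,
    fun p hp ↦ mod_three_of_prime_dvd_prod_pow hP hp, ?_, r, hr, ?_⟩
  · refine (log_prod_pow_le fun e he ↦
      ⟨(hP e he).1.ne_zero, (mem_primesInClass.1 (hP_mem he)).1⟩).trans (le_trans ?_ hBL)
    have h_sum : ∑ e ∈ s, ((e.1 - 1 : ℕ) : ℝ) ≤ ∑ e ∈ s, (e.1 : ℝ) :=
      Finset.sum_le_sum fun e _ ↦ by exact_mod_cast Nat.sub_le _ _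
    exact mul_le_mul_of_nonneg_right (h_sum.trans h_cost) (Real.log_nonneg hY)
  · intro p hp h_dvd
    rw [h_count] at h_dvd
    exact mod_three_of_prime_dvd_prod_pow (k := fun _ ↦ 1) (fun e he ↦ h_item e (hs he)) hp
      (by simpa using h_dvd)
  · rw [Finset.sum_product] at h_value
    rw [h_count]
    exact h_value.trans (sum_logRatio_le_log_splitDivisorCount_prod fun e he ↦ h_item e (hs he))

end Greedy

/-! ### Asymptotics of the upper bound -/

/-- The scales `X = √L`, `t = log L` and `w = log (log L)` attached to a large `L`, with the
explicit comparisons between them that make the error terms below absorbable. -/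
structure LogScales (X t w : ℝ) : Prop where
  log_X : Real.log X = t / 2
  log_t : Real.log t = w
  one_le_w : 1 ≤ w
  mul_w_le_t : 100 * w ≤ t
  t_pow_le_X : t ^ 6 ≤ X

lemma eventually_logScales :
    ∀ᶠ L : ℝ in atTop, LogScales √L (Real.log L) (Real.log (Real.log L)) := by
  have h_pow : ∀ᶠ t : ℝ in atTop, t ^ 6 ≤ Real.exp (t / 2) := by
    have h_half : Tendsto (fun t : ℝ ↦ t / 2) atTop atTop := tendsto_id.atTop_div_const two_pos
    filter_upwards [h_half.eventually
      ((Real.tendsto_exp_div_pow_atTop 6).eventually_ge_atTop (2 ^ 6)), eventually_gt_atTop 0]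
      with t ht ht0
    rw [le_div_iff₀ (by positivity)] at ht
    exact (by ring : t ^ 6 = 2 ^ 6 * (t / 2) ^ 6).trans_le ht
  have h_log : ∀ᶠ t : ℝ in atTop, 100 * Real.log t ≤ t := by
    filter_upwards [Real.isLittleO_log_id_atTop.bound (by norm_num : (0 : ℝ) < 1 / 100),
      eventually_ge_atTop 1] with t ht ht1
    rw [Real.norm_of_nonneg (Real.log_nonneg ht1), id, Real.norm_of_nonneg (by linarith)] at ht
    linarith
  have h_lim := Real.tendsto_log_atTop
  filter_upwards [h_lim.eventually h_pow, h_lim.eventually h_log,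
    h_lim.eventually (h_lim.eventually_ge_atTop 1), eventually_gt_atTop 0] with L h₁ h₂ h₃ hL
  have h_exp : Real.exp (Real.log L / 2) = √L := by
    rw [← Real.log_sqrt hL.le, Real.exp_log (Real.sqrt_pos.2 hL)]
  exact ⟨Real.log_sqrt hL.le, rfl, h₃, h₂, h_exp ▸ h₁⟩

lemma one_div_le_two_div_mul {t y e : ℝ} (ht : 0 < t) (he : 0 ≤ e) (he' : e ≤ 1 / 2)
    (hy : t / 2 * (1 - e) ≤ y) : 1 / y ≤ 2 / t * (1 + 2 * e) := by
  have hy_pos : 0 < y := (mul_pos (half_pos ht) (by linarith)).trans_le hy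
  rw [div_mul_eq_mul_div, div_le_div_iff₀ hy_pos ht]
  have h_quad : 0 ≤ t * (e * (1 - 2 * e)) := by
    have : 0 ≤ 1 - 2 * e := by linarith
    positivity
  linarith [mul_le_mul_of_nonneg_right hy (by linarith : 0 ≤ 1 + 2 * e)]

namespace LogScales

variable {X t w : ℝ} (h : LogScales X t w)

include h

lemma hundred_le_t : 100 ≤ t := by linarith [h.one_le_w, h.mul_w_le_t]

lemma t_pos : 0 < t := by linarith [h.hundred_le_t]

lemma w_pos : 0 < w := one_pos.trans_le h.one_le_w

lemma X_pos : 0 < X := (pow_pos h.t_pos 6).trans_le h.t_pow_le_X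

lemma t_pow_le_X_of_le {k : ℕ} (hk : k ≤ 6) : t ^ k ≤ X :=
  (pow_le_pow_right₀ (by linarith [h.hundred_le_t]) hk).trans h.t_pow_le_X

lemma w_div_t_pos : 0 < w / t := div_pos h.w_pos h.t_pos

lemma w_div_t_le : w / t ≤ 1 / 100 := by
  rw [div_le_iff₀ h.t_pos]
  linarith [h.mul_w_le_t]

lemma log_mul_X {ρ : ℝ} (hρ : ρ ≠ 0) : Real.log (ρ * X) = t / 2 + Real.log ρ := by
  rw [Real.log_mul hρ h.X_pos.ne', h.log_X, add_comm]

lemma log_t_pow (k : ℕ) : Real.log (t ^ k) = k * w := by rw [Real.log_pow, h.log_t]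

lemma log_X_sq_add_one_le : Real.log (X ^ 2 + 1) ≤ 2 * t := by
  have hX : 2 ≤ X := by linarith [h.hundred_le_t, h.t_pow_le_X_of_le (k := 1) (by norm_num)]
  calc Real.log (X ^ 2 + 1) ≤ Real.log (X ^ 4) :=
        Real.log_le_log (by positivity) (by nlinarith [sq_nonneg (X ^ 2 - 2)])
    _ = 2 * t := by
        rw [Real.log_pow, h.log_X]
        push_cast
        ring

lemma div_pow_mul_log_le : X / t ^ 3 * Real.log (X ^ 2 + 1) ≤ X / t * (2 * (w / t)) := by
  have hX := h.X_pos
  have ht := h.t_pos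
  calc X / t ^ 3 * Real.log (X ^ 2 + 1) ≤ X / t ^ 3 * (2 * t) := by
        gcongr
        exact h.log_X_sq_add_one_le
    _ = X / t * (2 * (1 / t)) := by field_simp
    _ ≤ _ := by
        gcongr
        exact h.one_le_w

lemma t_mul_log_le : t * Real.log (X ^ 2 + 1) ≤ X / t * (w / t) := by
  have hX := h.X_pos
  have ht := h.t_pos
  have ht_sq : 2 ≤ t ^ 2 := by nlinarith [h.hundred_le_t]
  calc t * Real.log (X ^ 2 + 1) ≤ t * (2 * t) := by
        gcongr
        exact h.log_X_sq_add_one_le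
    _ = t ^ 2 * 2 := by ring
    _ ≤ t ^ 2 * t ^ 2 := by gcongr
    _ = t ^ 6 / t * (1 / t) := by field_simp
    _ ≤ _ := by
        gcongr
        exacts [h.t_pow_le_X, h.one_le_w]

lemma one_lt_div_t_pow : 1 < X / t ^ 3 := by
  rw [one_lt_div (pow_pos h.t_pos 3)]
  exact (pow_lt_pow_right₀ (by linarith [h.hundred_le_t]) (by norm_num)).trans_le h.t_pow_le_X

lemma t_div_sub_one_le : t / (t - 1) ≤ 1 + 2 * (w / t) := by
  have ht := h.hundred_le_t
  have h_w : w / t * t = w := div_mul_cancel₀ _ h.t_pos.ne'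
  rw [div_le_iff₀ (by linarith)]
  linarith [h.one_le_w, h.w_div_t_le]

lemma one_div_log_div_t_pow_le : 1 / Real.log (X / t ^ 3) ≤ 2 / t * (1 + 12 * (w / t)) := by
  have h_w : w / t * t = w := div_mul_cancel₀ _ h.t_pos.ne'
  have := one_div_le_two_div_mul (y := Real.log (X / t ^ 3)) (e := 6 * (w / t)) h.t_pos
    (by linarith [h.w_div_t_pos]) (by linarith [h.w_div_t_le])
    (by rw [Real.log_div h.X_pos.ne' (pow_pos h.t_pos 3).ne', h.log_X, h.log_t_pow]
        push_cast
        linarith)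
  linarith

lemma cost_le {ρ : ℝ} (hρ : 0 < ρ) :
    t / (t - 1) * (X ^ 2 / Real.log (X / t ^ 3)) / (ρ * X) ≤
      X / t * (2 / ρ * (1 + 38 * (w / t))) := by
  have hX := h.X_pos
  have ht := h.t_pos
  have hw := h.w_div_t_pos
  have h_log := (one_div_pos.2 (Real.log_pos h.one_lt_div_t_pow)).le
  calc t / (t - 1) * (X ^ 2 / Real.log (X / t ^ 3)) / (ρ * X)
      = X / ρ * (t / (t - 1) * (1 / Real.log (X / t ^ 3))) := by field_simp
    _ ≤ X / ρ * ((1 + 2 * (w / t)) * (2 / t * (1 + 12 * (w / t)))) := by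
        gcongr
        exacts [h.t_div_sub_one_le, h.one_div_log_div_t_pow_le]
    _ = X / t * (2 / ρ * ((1 + 2 * (w / t)) * (1 + 12 * (w / t)))) := by ring
    _ ≤ _ := by
        gcongr
        nlinarith [h.w_div_t_le]

lemma one_div_log_mul_X_div_t_pow_le {ρ : ℝ} (hρ : 0 < ρ) (hρw : |Real.log ρ| ≤ w) :
    1 / Real.log (ρ * X / t ^ 4) ≤ 2 / t * (1 + 20 * (w / t)) := by
  have h_w : w / t * t = w := div_mul_cancel₀ _ h.t_pos.ne'
  have := one_div_le_two_div_mul (y := Real.log (ρ * X / t ^ 4)) (e := 10 * (w / t)) h.t_pos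
    (by linarith [h.w_div_t_pos]) (by linarith [h.w_div_t_le])
    (by rw [Real.log_div (mul_pos hρ h.X_pos).ne' (pow_pos h.t_pos 4).ne', h.log_mul_X hρ.ne',
          h.log_t_pow]
        push_cast
        linarith [neg_le_of_abs_le hρw])
  linarith

lemma one_lt_mul_X_div_t_pow {ρ : ℝ} (hρ : 0 < ρ) (hρw : |Real.log ρ| ≤ w) :
    1 < ρ * X / t ^ 4 := by
  have hX := h.X_pos
  have ht := h.t_pos
  rw [← Real.log_pos_iff (by positivity), Real.log_div (by positivity) (by positivity),
    h.log_mul_X hρ.ne', h.log_t_pow]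
  push_cast
  linarith [neg_le_of_abs_le hρw, h.mul_w_le_t, h.one_le_w]

lemma sqrt_mul_sqrt_le {ρ : ℝ} (hρ : 0 < ρ) :
    √(ρ * X / t ^ 4) * √(ρ * X) ≤ X / t * (ρ * (w / t)) := by
  have hX := h.X_pos
  have ht := h.t_pos
  calc √(ρ * X / t ^ 4) * √(ρ * X) = ρ * X / t ^ 2 := by
        rw [Real.sqrt_div (by positivity), show t ^ 4 = (t ^ 2) ^ 2 by ring,
          Real.sqrt_sq (by positivity), div_mul_eq_mul_div, Real.mul_self_sqrt (by positivity)]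
    _ = X / t * (ρ * (1 / t)) := by field_simp
    _ ≤ _ := by
        gcongr
        exact h.one_le_w

lemma div_log_mul_X_le {ρ C : ℝ} (hρ : 0 < ρ) (hρw : |Real.log ρ| ≤ w) (hC : 0 < C) :
    C / Real.log (ρ * X) ≤ 4 * C * (w / t) := by
  have ht := h.t_pos
  have h_log : t / 4 ≤ Real.log (ρ * X) := by
    rw [h.log_mul_X hρ.ne']
    linarith [neg_le_of_abs_le hρw, h.mul_w_le_t, h.one_le_w]
  calc C / Real.log (ρ * X) ≤ C / (t / 4) := by gcongr
    _ = 4 * C * (1 / t) := by field_simp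
    _ ≤ _ := by
        gcongr
        exact h.one_le_w

lemma main_term_le {ρ C σ : ℝ} (hρ : 0 < ρ) (hρw : |Real.log ρ| ≤ w) (hC : 0 < C) (hσ : 0 ≤ σ) :
    ρ * X / Real.log (ρ * X / t ^ 4) * (σ / 4 + C / Real.log (ρ * X)) ≤
      X / t * (ρ * σ / 2 + (10 * ρ * σ + 10 * ρ * C) * (w / t)) := by
  have hX := h.X_pos
  have ht := h.t_pos
  have hw := h.w_div_t_pos
  calc ρ * X / Real.log (ρ * X / t ^ 4) * (σ / 4 + C / Real.log (ρ * X))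
      = ρ * X * (1 / Real.log (ρ * X / t ^ 4)) * (σ / 4 + C / Real.log (ρ * X)) := by ring
    _ ≤ ρ * X * (1 / Real.log (ρ * X / t ^ 4)) * (σ / 4 + 4 * C * (w / t)) := by
        have := Real.log_pos (h.one_lt_mul_X_div_t_pow hρ hρw)
        gcongr
        exact h.div_log_mul_X_le hρ hρw hC
    _ ≤ ρ * X * (2 / t * (1 + 20 * (w / t))) * (σ / 4 + 4 * C * (w / t)) := by
        gcongr
        exact h.one_div_log_mul_X_div_t_pow_le hρ hρw
    _ = X / t * (ρ * σ / 2 + (10 * ρ * σ + 8 * ρ * C * (1 + 20 * (w / t))) * (w / t)) := by ring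
    _ ≤ _ := by
        gcongr X / t * (_ + (_ + ?_) * (w / t))
        nlinarith [h.w_div_t_le, mul_pos hρ hC]

end LogScales

section Upper

variable {ρ : ℝ}

lemma eventually_abs_le_log_log (c : ℝ) : ∀ᶠ L : ℝ in atTop, |c| ≤ Real.log (Real.log L) :=
  (Real.tendsto_log_atTop.comp Real.tendsto_log_atTop).eventually_ge_atTop _

lemma exists_dualObjective_sqrt_le (hρ : 0 < ρ) :
    ∃ C, 0 < C ∧ ∀ᶠ L : ℝ in atTop, ∀ R N, dualObjective (1 : ZMod 3) (1 / (ρ * √L)) R N ≤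
      √L / Real.log L * (ρ * logRatioSqSum / 2 + C * (Real.log (Real.log L) / Real.log L)) := by
  obtain ⟨C, hC, h_dual⟩ := exists_dualObjective_le (isUnit_one (M := ZMod 3))
  have hσ := logRatioSqSum_pos
  refine ⟨C * ρ + (10 * ρ * logRatioSqSum + 10 * ρ * C), by positivity, ?_⟩
  filter_upwards [eventually_logScales, eventually_abs_le_log_log (Real.log ρ),
    (Real.tendsto_sqrt_atTop.const_mul_atTop hρ).eventually h_dual] with L h hρw h_dual R N
  have h_bound := h_dual _ (h.one_lt_mul_X_div_t_pow hρ hρw) R N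
  rw [show (2 : ℝ) * Nat.totient 3 = 4 by norm_num [Nat.totient_prime Nat.prime_three]] at h_bound
  have h_sqrt := mul_le_mul_of_nonneg_left (h.sqrt_mul_sqrt_le hρ) hC.le
  linarith [h.main_term_le hρ hρw hC hσ.le]

lemma exists_log_splitDivisorCount_splitDivisorCount_le (hρ : 0 < ρ) :
    ∃ C, 0 < C ∧ ∀ᶠ L : ℝ in atTop, ∀ n : ℕ, n ≠ 0 → Real.log n ≤ L →
      Real.log (splitDivisorCount (splitDivisorCount n)) ≤ √L / Real.log L *
        (2 / ρ + ρ * logRatioSqSum / 2 + C * (Real.log (Real.log L) / Real.log L)) := by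
  obtain ⟨C, hC, h_dual⟩ := exists_dualObjective_sqrt_le hρ
  refine ⟨3 + 2 / ρ * 38 + C, by positivity, ?_⟩
  filter_upwards [eventually_logScales, h_dual, eventually_ge_atTop 0] with L h h_dual hL n hn hnL
  have h_core := log_splitDivisorCount_splitDivisorCount_le hn hnL h.one_lt_div_t_pow
    (S := Real.log L) (by linarith [h.hundred_le_t]) (mul_pos hρ h.X_pos) h_dual
  have h_cost := h.cost_le hρ
  have h_small := h.div_pow_mul_log_le
  have h_tiny := h.t_mul_log_le
  rw [Real.sq_sqrt hL] at h_cost h_small h_tiny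
  linarith

-- The multiplier `ρ = 2 / √σ` minimises `2 / ρ + ρ σ / 2`.
lemma exists_log_splitDivisorCount_splitDivisorCount_le_sqrt :
    ∃ C, 0 < C ∧ ∀ᶠ L : ℝ in atTop, ∀ n : ℕ, n ≠ 0 → Real.log n ≤ L →
      Real.log (splitDivisorCount (splitDivisorCount n)) ≤ √L / Real.log L *
        (2 * √logRatioSqSum + C * (Real.log (Real.log L) / Real.log L)) := by
  have hs : 0 < √logRatioSqSum := Real.sqrt_pos.2 logRatioSqSum_pos
  have h_opt : 2 / (2 / √logRatioSqSum) + 2 / √logRatioSqSum * logRatioSqSum / 2 =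
      2 * √logRatioSqSum := by
    nth_rewrite 3 [← Real.sq_sqrt logRatioSqSum_pos.le]
    field_simp
    ring
  exact h_opt ▸ exists_log_splitDivisorCount_splitDivisorCount_le (by positivity)

end Upper

/-! ### Asymptotics of the lower bound -/

lemma mul_mul_one_sub_le_div_add_mul {X a s δ : ℝ} (ha : 0 < a) (hδ : 0 ≤ δ) (hδ_one : δ ≤ 1) :
    X * s * (1 - δ) ≤ X ^ 2 / a + a * (s ^ 2 / 4 * (1 - δ)) := by
  have h_amgm : X * s ≤ X ^ 2 / a + a * s ^ 2 / 4 := by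
    have h_sq : X ^ 2 / a + a * s ^ 2 / 4 - X * s = (X - a * s / 2) ^ 2 / a := by
      field_simp
      ring
    linarith [show 0 ≤ (X - a * s / 2) ^ 2 / a by positivity]
  have h_mul := mul_le_mul_of_nonneg_right h_amgm (sub_nonneg.2 hδ_one)
  linarith [mul_nonneg (show 0 ≤ X ^ 2 / a by positivity) hδ]

namespace LogScales

variable {X t w : ℝ} (h : LogScales X t w)

include h

lemma log_X_mul_t_pow (k : ℕ) : Real.log (X * t ^ k) = t / 2 + k * w := by
  rw [Real.log_mul h.X_pos.ne' (pow_pos h.t_pos k).ne', h.log_X, h.log_t_pow]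

lemma half_t_add_pos : 0 < t / 2 + 4 * w := by linarith [h.t_pos, h.w_pos]

lemma half_t_add_le : t / 2 + 4 * w ≤ t := by linarith [h.mul_w_le_t, h.w_pos]

lemma card_primesInClass_mul_ceil_le (h_card : X * t ^ 4 ≤
      8 * Real.log (X * t ^ 4) * (primesInClass (1 : ZMod 3) (X * t ^ 4)).card) :
    (primesInClass (1 : ZMod 3) (X * t)).card * ⌈t⌉₊ ≤
      (primesInClass (1 : ZMod 3) (X * t ^ 4)).card := by
  have hX := h.X_pos
  have ht := h.t_pos
  have h_upper : (primesInClass (1 : ZMod 3) (X * t)).card * ⌈t⌉₊ ≤ X * t * (2 * t) := by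
    gcongr
    · exact card_primesInClass_le (by positivity)
    · linarith [Nat.ceil_lt_add_one ht.le, h.hundred_le_t]
  have h_lower : t * (X * t ^ 3) ≤ t * (8 * (primesInClass (1 : ZMod 3) (X * t ^ 4)).card) := by
    rw [h.log_X_mul_t_pow, Nat.cast_ofNat] at h_card
    have := mul_le_mul_of_nonneg_right h.half_t_add_le
      (Nat.cast_nonneg (primesInClass (1 : ZMod 3) (X * t ^ 4)).card)
    linarith
  have h_gap : X * t ^ 2 * 16 ≤ X * t ^ 2 * t := by
    gcongr
    linarith [h.hundred_le_t]
  have : ((primesInClass (1 : ZMod 3) (X * t)).card : ℝ) * ⌈t⌉₊ ≤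
      (primesInClass (1 : ZMod 3) (X * t ^ 4)).card := by
    linarith [le_of_mul_le_mul_left h_lower ht]
  exact_mod_cast this

lemma log_mem_Icc {a : ℝ} (ha : X / t ≤ a) (ha' : a ≤ X * t) :
    t / 4 ≤ Real.log a ∧ Real.log a ≤ t / 2 + 4 * w := by
  have h_pos : 0 < X / t := div_pos h.X_pos h.t_pos
  have h_left := Real.log_le_log h_pos ha
  have h_right := Real.log_le_log (h_pos.trans_le ha) ha'
  rw [Real.log_div h.X_pos.ne' h.t_pos.ne', h.log_X, h.log_t] at h_left
  rw [Real.log_mul h.X_pos.ne' h.t_pos.ne', h.log_X, h.log_t] at h_right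
  constructor <;> linarith [h.mul_w_le_t, h.w_pos]

lemma mul_one_sub_div_le {a C σ D : ℝ} (hC : 0 < C) (hσ : 0 < σ) (hD : D = (1 + 16 * C) / σ)
    (hDt : D ≤ t) (ha : X / t ≤ a) (ha' : a ≤ X * t) :
    a / (t / 2 + 4 * w) * (σ / 4 * (1 - D / t)) ≤
      a / Real.log a * ((σ - 1 / ⌈t⌉₊) / 4 - C / Real.log a) := by
  have ht := h.t_pos
  have ha_pos : 0 < a := (div_pos h.X_pos h.t_pos).trans_le ha
  obtain ⟨h_log, h_log'⟩ := h.log_mem_Icc ha ha'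
  have h_log_pos : 0 < Real.log a := by linarith
  have h_one_sub : 0 ≤ 1 - D / t := sub_nonneg.2 ((div_le_one ht).2 hDt)
  have h_C : C / Real.log a ≤ 4 * C / t := by
    calc C / Real.log a ≤ C / (t / 4) := by gcongr
      _ = 4 * C / t := by ring
  have h_N : (1 : ℝ) / ⌈t⌉₊ ≤ 1 / t := one_div_le_one_div_of_le ht (Nat.le_ceil t)
  have h_D : σ / 4 * (1 - D / t) = σ / 4 - (1 / t / 4 + 4 * C / t) := by
    rw [hD]
    field_simp
    ring
  calc a / (t / 2 + 4 * w) * (σ / 4 * (1 - D / t))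
      ≤ a / Real.log a * (σ / 4 * (1 - D / t)) := by gcongr
    _ ≤ _ := by
        gcongr
        linarith

lemma two_mul_div_add_one_le {s D : ℝ} (hs : 0 < s) (hD : 2 * D ≤ t) (hst : 16 / s ^ 2 ≤ t)
    (hst' : 32 / s ≤ t) :
    2 * s * (X / t) + 1 ≤ X * t / (t / 2 + 4 * w) * (s ^ 2 / 4 * (1 - D / t)) := by
  have hX := h.X_pos
  have ht := h.t_pos
  have h_half : 1 / 2 ≤ 1 - D / t := by
    linarith [(div_le_iff₀ ht).2 (by linarith : D ≤ 1 / 2 * t)]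
  have h_X : X ≤ X * t / (t / 2 + 4 * w) := by
    rw [le_div_iff₀ h.half_t_add_pos]
    exact mul_le_mul_of_nonneg_left h.half_t_add_le hX.le
  have h_main : 2 * s * (X / t) ≤ X * (s ^ 2 / 16) := by
    have : 2 * s ≤ t * (s ^ 2 / 16) := by nlinarith [(div_le_iff₀ hs).1 hst']
    calc 2 * s * (X / t) ≤ t * (s ^ 2 / 16) * (X / t) := by gcongr
      _ = X * (s ^ 2 / 16) := by field_simp
  have h_one : 1 ≤ X * (s ^ 2 / 16) := by
    have h_le := hst.trans ((pow_one t).symm.trans_le (h.t_pow_le_X_of_le (by norm_num)))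
    linarith [(div_le_iff₀ (by positivity)).1 h_le]
  calc 2 * s * (X / t) + 1 ≤ X * (s ^ 2 / 4 * (1 / 2)) := by linarith
    _ ≤ _ := by
        have := hX.le.trans h_X
        gcongr

lemma two_mul_div_add_one_le_mul {s r : ℝ} (hs : 4 * s ≤ t) (hr : t / X ≤ r) :
    2 * s * (X / t) + 1 ≤ r * (X ^ 2 / (t / 2 + 4 * w)) := by
  have hX := h.X_pos
  have ht := h.t_pos
  have hX_two : 2 ≤ X := by linarith [h.hundred_le_t, h.t_pow_le_X_of_le (k := 1) (by norm_num)]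
  calc 2 * s * (X / t) + 1 = 4 * s * (X / t) / 2 + 1 := by ring
    _ ≤ t * (X / t) / 2 + 1 := by gcongr
    _ = X / 2 + 1 := by field_simp
    _ ≤ X := by linarith
    _ = t / X * (X ^ 2 / t) := by field_simp
    _ ≤ _ := by
        have := h.half_t_add_pos
        have := h.half_t_add_le
        have : 0 ≤ r := (div_pos ht hX).le.trans hr
        gcongr

lemma main_term_le_div_sub_one {s D : ℝ} (hs : 0 < s) (hD : 0 < D) (hDt : D ≤ t) :
    X / t * (2 * s - (2 * s * (D + 8) + 1) * (w / t)) ≤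
      X * s * (1 - D / t) / (t / 2 + 4 * w) - 1 := by
  have hX := h.X_pos
  have ht := h.t_pos
  have hw := h.w_pos
  have h_one : 1 ≤ X / t * (w / t) := by
    rw [div_mul_div_comm, le_div_iff₀ (by positivity)]
    nlinarith [h.t_pow_le_X_of_le (k := 2) (by norm_num), h.one_le_w]
  have h_ratio : 2 * s * (X / t) * (1 - 8 * (w / t)) ≤ X * s / (t / 2 + 4 * w) := by
    rw [le_div_iff₀ h.half_t_add_pos]
    have h_eq : 2 * s * (X / t) * (1 - 8 * (w / t)) * (t / 2 + 4 * w) =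
        X * s * (1 - 64 * (w / t) ^ 2) := by
      field_simp
      ring
    nlinarith [show 0 ≤ X * s * (w / t) ^ 2 by positivity]
  have h_one_sub : 0 ≤ 1 - D / t := sub_nonneg.2 ((div_le_one ht).2 hDt)
  have h_prod : 1 - 8 * (w / t) - D * (w / t) ≤ (1 - 8 * (w / t)) * (1 - D / t) := by
    have h_D : D / t ≤ D * (w / t) := by
      rw [← mul_div_assoc]
      gcongr
      exact le_mul_of_one_le_right hD.le h.one_le_w
    nlinarith [show 0 ≤ w / t * (D / t) by positivity]
  have h_le : 2 * s * (X / t) * (1 - 8 * (w / t) - D * (w / t)) ≤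
      X * s / (t / 2 + 4 * w) * (1 - D / t) :=
    calc _ ≤ 2 * s * (X / t) * ((1 - 8 * (w / t)) * (1 - D / t)) := by gcongr
      _ = 2 * s * (X / t) * (1 - 8 * (w / t)) * (1 - D / t) := by ring
      _ ≤ _ := by gcongr
  rw [div_mul_eq_mul_div] at h_le
  linarith

-- Minimise over the multiplier `r`: only the range `1 / (X t) < r < t / X` is critical, and there
-- the bound is the AM-GM inequality.
lemma main_term_le_mul_add {g : ℝ → ℝ} {s D r : ℝ} (hg : Antitone g) (hg_nonneg : ∀ r, 0 ≤ g r)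
    (h_dual : ∀ a, X / t ≤ a → a ≤ X * t →
      a / (t / 2 + 4 * w) * (s ^ 2 / 4 * (1 - D / t)) ≤ g (1 / a))
    (hs : 0 < s) (hD : 0 < D) (hDt : 2 * D ≤ t) (hst : 16 / s ^ 2 ≤ t) (hst' : 32 / s ≤ t)
    (hst'' : 4 * s ≤ t) (hr : 0 ≤ r) :
    X / t * (2 * s - (2 * s * (D + 8) + 1) * (w / t)) ≤
      r * (X ^ 2 / (t / 2 + 4 * w)) + g r - 1 := by
  have hX := h.X_pos
  have ht := h.t_pos
  have hℓ := h.half_t_add_pos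
  have h_cost : 0 ≤ r * (X ^ 2 / (t / 2 + 4 * w)) := by positivity
  have h_weaken : X / t * (2 * s - (2 * s * (D + 8) + 1) * (w / t)) ≤ 2 * s * (X / t) := by
    have hw := h.w_pos
    linarith [show 0 ≤ X / t * ((2 * s * (D + 8) + 1) * (w / t)) by positivity]
  rcases le_or_gt r (1 / (X * t)) with h_small | h_small
  · have h_le : X / t ≤ X * t :=
      (div_le_self hX.le (by linarith [h.hundred_le_t])).trans
        (le_mul_of_one_le_right hX.le (by linarith [h.hundred_le_t]))
    linarith [hg h_small, h_dual (X * t) h_le le_rfl, h.two_mul_div_add_one_le hs hDt hst hst']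
  rcases le_or_gt (t / X) r with h_large | h_large
  · linarith [h.two_mul_div_add_one_le_mul hst'' h_large, hg_nonneg r]
  have hr_pos : 0 < r := (by positivity : (0 : ℝ) < 1 / (X * t)).trans h_small
  have h_dual_r := h_dual (1 / r) (by
    rw [le_one_div (by positivity) hr_pos, one_div_div]
    exact h_large.le) ((one_div_le hr_pos (by positivity)).2 h_small.le)
  have h_amgm := div_le_div_of_nonneg_right (mul_mul_one_sub_le_div_add_mul (X := X) (s := s)
    (one_div_pos.2 hr_pos) (by positivity : 0 ≤ D / t) ((div_le_one ht).2 (by linarith))) hℓ.le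
  have h_split : (X ^ 2 / (1 / r) + 1 / r * (s ^ 2 / 4 * (1 - D / t))) / (t / 2 + 4 * w) =
      r * (X ^ 2 / (t / 2 + 4 * w)) + 1 / r / (t / 2 + 4 * w) * (s ^ 2 / 4 * (1 - D / t)) := by
    field_simp
  rw [one_div_one_div] at h_dual_r
  linarith [h.main_term_le_div_sub_one hs hD (by linarith)]

end LogScales

section Lower

lemma exists_mul_le_dualObjective_of_mem_Icc :
    ∃ D, 0 < D ∧ ∀ᶠ L : ℝ in atTop, ∀ a, √L / Real.log L ≤ a → a ≤ √L * Real.log L →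
      a / (Real.log L / 2 + 4 * Real.log (Real.log L)) *
          (√logRatioSqSum ^ 2 / 4 * (1 - D / Real.log L)) ≤
        dualObjective (1 : ZMod 3) (1 / a) (√L * Real.log L) ⌈Real.log L⌉₊ := by
  obtain ⟨C, hC, h_dual⟩ := exists_le_dualObjective (isUnit_one (M := ZMod 3))
  obtain ⟨a₀, h_dual⟩ := eventually_atTop.1 h_dual
  have hσ := logRatioSqSum_pos
  refine ⟨(1 + 16 * C) / logRatioSqSum, by positivity, ?_⟩
  filter_upwards [eventually_logScales, Real.tendsto_log_atTop.eventually_ge_atTop a₀,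
    Real.tendsto_log_atTop.eventually_ge_atTop ((1 + 16 * C) / logRatioSqSum)]
    with L h ha₀ hD a ha ha'
  have h_log_le : Real.log L ≤ √L / Real.log L := by
    rw [le_div_iff₀ h.t_pos, ← sq]
    exact h.t_pow_le_X_of_le (by norm_num)
  have h_bound := h_dual a (by linarith) _ (Nat.ceil_pos.2 h.t_pos).ne' _ ha'
  rw [show (2 : ℝ) * Nat.totient 3 = 4 by norm_num [Nat.totient_prime Nat.prime_three]] at h_bound
  rw [Real.sq_sqrt hσ.le]
  exact (h.mul_one_sub_div_le hC hσ rfl hD ha ha').trans h_bound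

lemma exists_main_term_le_mul_add_dualObjective :
    ∃ C, 0 < C ∧ ∀ᶠ L : ℝ in atTop, ∀ r, 0 ≤ r → √L / Real.log L *
        (2 * √logRatioSqSum - C * (Real.log (Real.log L) / Real.log L)) ≤
      r * (L / (Real.log L / 2 + 4 * Real.log (Real.log L))) +
        dualObjective (1 : ZMod 3) r (√L * Real.log L) ⌈Real.log L⌉₊ - 1 := by
  obtain ⟨D, hD, h_dual⟩ := exists_mul_le_dualObjective_of_mem_Icc
  have hs : 0 < √logRatioSqSum := Real.sqrt_pos.2 logRatioSqSum_pos
  refine ⟨2 * √logRatioSqSum * (D + 8) + 1, by positivity, ?_⟩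
  have h_large (c : ℝ) := Real.tendsto_log_atTop.eventually_ge_atTop c
  filter_upwards [eventually_logScales, h_dual, eventually_ge_atTop 0, h_large (2 * D),
    h_large (16 / √logRatioSqSum ^ 2), h_large (32 / √logRatioSqSum),
    h_large (4 * √logRatioSqSum)] with L h h_dual hL h₁ h₂ h₃ h₄ r hr
  have := h.main_term_le_mul_add (dualObjective_antitone _) (fun r ↦ dualObjective_nonneg r _)
    h_dual hs hD h₁ h₂ h₃ h₄ hr
  rwa [Real.sq_sqrt hL] at this

lemma eventually_card_primesInClass_mul_ceil_le :
    ∀ᶠ L : ℝ in atTop, (primesInClass (1 : ZMod 3) (√L * Real.log L)).card * ⌈Real.log L⌉₊ ≤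
      (primesInClass (1 : ZMod 3) (√L * Real.log L ^ 4)).card := by
  obtain ⟨y₀, h_card⟩ :=
    eventually_atTop.1 (eventually_le_log_mul_card_primesInClass (isUnit_one (M := ZMod 3)))
  filter_upwards [eventually_logScales, Real.tendsto_sqrt_atTop.eventually_ge_atTop y₀]
    with L h hy₀
  have h_le : √L ≤ √L * Real.log L ^ 4 :=
    le_mul_of_one_le_right h.X_pos.le (one_le_pow₀ (by linarith [h.hundred_le_t]))
  have h_card := h_card _ (hy₀.trans h_le)
  rw [show (4 : ℝ) * Nat.totient 3 = 8 by norm_num [Nat.totient_prime Nat.prime_three]] at h_card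
  exact h.card_primesInClass_mul_ceil_le h_card

lemma exists_sqrt_le_log_splitDivisorCount_splitDivisorCount :
    ∃ C, 0 < C ∧ ∀ᶠ L : ℝ in atTop, ∃ n : ℕ, n ≠ 0 ∧ Real.log n ≤ L ∧
      (∀ p, p.Prime → p ∣ n → p % 3 = 1) ∧ (∀ p, p.Prime → p ∣ splitDivisorCount n → p % 3 = 1) ∧
        √L / Real.log L * (2 * √logRatioSqSum - C * (Real.log (Real.log L) / Real.log L)) ≤
          Real.log (splitDivisorCount (splitDivisorCount n)) := by
  obtain ⟨C, hC, h_main⟩ := exists_main_term_le_mul_add_dualObjective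
  refine ⟨C, hC, ?_⟩
  filter_upwards [eventually_logScales, h_main, eventually_card_primesInClass_mul_ceil_le,
    eventually_ge_atTop 0] with L h h_main h_card hL
  have hℓ := h.half_t_add_pos
  have hY : 1 ≤ √L * Real.log L ^ 4 := by
    have hX := h.t_pow_le_X_of_le (k := 0) (by norm_num)
    exact one_le_mul_of_one_le_of_one_le hX (one_le_pow₀ (by linarith [h.hundred_le_t]))
  have h_budget : L / (Real.log L / 2 + 4 * Real.log (Real.log L)) *
      Real.log (√L * Real.log L ^ 4) ≤ L := by
    rw [h.log_X_mul_t_pow, Nat.cast_ofNat, div_mul_cancel₀ _ hℓ.ne']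
  obtain ⟨n, hn, hnL, h_split, h_split', r, hr, h_value⟩ :=
    exists_dualObjective_le_log_splitDivisorCount (by positivity) hY h_card h_budget
  exact ⟨n, hn, hnL, h_split, h_split', (h_main r hr).trans h_value⟩

end Lower

/-! ### The maximal order -/

lemma iSup_mem_le_of_forall_le {ι : Type*} {s : Finset ι} {g : ι → ℝ} {A : ℝ} (hA : 0 ≤ A)
    (hg : ∀ n ∈ s, g n ≤ A) : ⨆ n ∈ s, g n ≤ A :=
  Real.iSup_le (fun n ↦ Real.iSup_le (hg n) hA) hA

lemma le_iSup_mem {ι : Type*} (s : Finset ι) (g : ι → ℝ) {m : ι} (hm : m ∈ s) :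
    g m ≤ ⨆ n ∈ s, g n := by
  have hbound (n : ι) : ⨆ (_ : n ∈ s), g n ≤ ∑ i ∈ s, |g i| :=
    Real.iSup_le (fun hn ↦ (le_abs_self _).trans
      (Finset.single_le_sum (f := fun i ↦ |g i|) (fun _ _ ↦ abs_nonneg _) hn)) (by positivity)
  exact le_ciSup_of_le ⟨_, Set.forall_mem_range.2 hbound⟩ m
    (ciSup_pos (f := fun _ ↦ g m) hm).ge

lemma log_fForm_fForm_le {n : ℕ} (hn : n ≠ 0) {A : ℝ} (hA : 0 ≤ A)
    (h : Real.log (splitDivisorCount (splitDivisorCount n)) ≤ A) :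
    Real.log (fForm (fForm n)) ≤ A := by
  rcases fForm_eq_splitDivisorCount_or_eq_zero hn with hn' | hn' <;> rw [hn']
  · rcases fForm_eq_splitDivisorCount_or_eq_zero (splitDivisorCount_pos n).ne' with hm | hm <;>
      rw [hm]
    · exact h
    · simpa using hA
  · simpa [fForm] using hA

lemma cBEFS_div_sqrt_two : cBEFS / √2 = 2 * √logRatioSqSum := by
  have hc : cBEFS = √(8 * logRatioSqSum) := rfl
  rw [hc, ← Real.sqrt_div' _ (by norm_num), show 8 * logRatioSqSum / 2 = 2 ^ 2 * logRatioSqSum by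
    ring, Real.sqrt_mul (by norm_num), Real.sqrt_sq (by norm_num)]

lemma exists_iSup_log_fForm_fForm_le :
    ∃ C : ℝ, 0 < C ∧ ∀ᶠ x : ℕ in atTop,
      ⨆ n ∈ Finset.Icc 1 x, Real.log (fForm (fForm n)) ≤
        √(Real.log x) / Real.log (Real.log x) * (2 * √logRatioSqSum +
          C * (Real.log (Real.log (Real.log x)) / Real.log (Real.log x))) := by
  obtain ⟨C, hC, hupper⟩ := exists_log_splitDivisorCount_splitDivisorCount_le_sqrt
  refine ⟨C, hC, ?_⟩
  have hlim := Real.tendsto_log_atTop.comp (tendsto_natCast_atTop_atTop (R := ℝ))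
  filter_upwards [hlim.eventually hupper, hlim.eventually eventually_logScales] with x hx hscales
  have hX := hscales.X_pos
  have ht := hscales.t_pos
  have hw := hscales.w_pos
  have hA : 0 ≤ √(Real.log x) / Real.log (Real.log x) * (2 * √logRatioSqSum +
      C * (Real.log (Real.log (Real.log x)) / Real.log (Real.log x))) := by
    simp only [Function.comp_apply] at hX ht hw
    positivity
  refine iSup_mem_le_of_forall_le hA fun n hn ↦ ?_
  obtain ⟨hn1, hnx⟩ := Finset.mem_Icc.1 hn
  have hn0 : n ≠ 0 := Nat.one_le_iff_ne_zero.1 hn1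
  exact log_fForm_fForm_le hn0 hA
    (hx n hn0 (Real.log_le_log (by exact_mod_cast hn1) (by exact_mod_cast hnx)))

lemma exists_le_iSup_log_fForm_fForm :
    ∃ C : ℝ, 0 < C ∧ ∀ᶠ x : ℕ in atTop,
      √(Real.log x) / Real.log (Real.log x) * (2 * √logRatioSqSum -
          C * (Real.log (Real.log (Real.log x)) / Real.log (Real.log x))) ≤
        ⨆ n ∈ Finset.Icc 1 x, Real.log (fForm (fForm n)) := by
  obtain ⟨C, hC, hlower⟩ := exists_sqrt_le_log_splitDivisorCount_splitDivisorCount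
  refine ⟨C, hC, ?_⟩
  have hlim := Real.tendsto_log_atTop.comp (tendsto_natCast_atTop_atTop (R := ℝ))
  filter_upwards [hlim.eventually hlower, eventually_gt_atTop 0]
    with x ⟨n, hn, hnx, hsplit, hsplit', hle⟩ hx
  have hmem : n ∈ Finset.Icc 1 x := by
    refine Finset.mem_Icc.2 ⟨Nat.one_le_iff_ne_zero.2 hn, ?_⟩
    exact_mod_cast (Real.log_le_log_iff (by positivity) (by positivity)).1 hnx
  refine hle.trans ?_
  rw [← fForm_eq_splitDivisorCount (splitDivisorCount_pos n).ne' hsplit',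
    ← fForm_eq_splitDivisorCount hn hsplit]
  exact le_iSup_mem _ (fun n ↦ Real.log (fForm (fForm n))) hmem

/-- `max_{n ≤ x} log f(f(n)) = (√(log x)/log₂ x)·(c/√2 + O(log₃ x/log₂ x))` as `x → ∞`,
for `f(n) = (1/6)·#{(x,y) ∈ ℤ² : x² + xy + y² = n}` (and `f(0) = 1`). -/
theorem maxOrder_iterated_form_eisenstein :
    ∃ C : ℝ, 0 < C ∧ ∀ᶠ x : ℕ in atTop,
      |(⨆ n ∈ Finset.Icc 1 x, Real.log (fForm (fForm n))) -
          Real.sqrt (Real.log x) / Real.log (Real.log x) * (cBEFS / Real.sqrt 2)| ≤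
        C * (Real.sqrt (Real.log x) / Real.log (Real.log x)) *
          (Real.log (Real.log (Real.log x)) / Real.log (Real.log x)) := by
  obtain ⟨C₁, hC₁, hupper⟩ := exists_iSup_log_fForm_fForm_le
  obtain ⟨C₂, hC₂, hlower⟩ := exists_le_iSup_log_fForm_fForm
  refine ⟨C₁ + C₂, add_pos hC₁ hC₂, ?_⟩
  have hlim := Real.tendsto_log_atTop.comp (tendsto_natCast_atTop_atTop (R := ℝ))
  filter_upwards [hupper, hlower, hlim.eventually eventually_logScales] with x hle hge hscales
  rw [cBEFS_div_sqrt_two, abs_le]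
  have hmain : 0 < √(Real.log x) / Real.log (Real.log x) := div_pos hscales.X_pos hscales.t_pos
  have herror : 0 < Real.log (Real.log (Real.log x)) / Real.log (Real.log x) :=
    hscales.w_div_t_pos
  have h₁ := mul_pos hC₁ (mul_pos hmain herror)
  have h₂ := mul_pos hC₂ (mul_pos hmain herror)
  constructor <;> linarith
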